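/- arXiv:1901.04034 — 3 statements merged into one kernel-verified Lean document; each statement's English description precedes it below -/
import Mathlib

section
/- Let T be a tree of order d and let n be an integer with 2 ≤ n < (d−1)/2. Then c_{n,1}(T) = Σ_R (L(T) − L₀(R))·ρ_R(T) + Σ_{R'} L(T_{R'})·ρ_{R'}(T), where the first sum ranges over all isomorphism classes R of rooted trees of order n, the second sum ranges over all isomorphism classes R' of rooted trees of order n+1, L(T) denotes the number of leaves of a tree, L₀(R) denotes the number of leaves of a rooted tree R other than its root, and T_{R'} denotes the unrooted tree underlying R'. -/
open SimpleGraph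

/-- The multiset of orders of the connected components of a graph on a finite vertex set. -/
noncomputable def compSizes {V : Type} [Fintype V] (H : SimpleGraph V) : Multiset ℕ :=
  haveI : DecidableEq H.ConnectedComponent := Classical.decEq _
  (Finset.univ.image H.connectedComponentMk).val.map fun c => c.supp.ncard

/-- `cCoeff G lam` is the number of subsets `F` of the edge set of `G` such that the
multiset of orders of the connected components of the spanning subgraph `(V, F)`
is exactly `lam`.  For a tree `T` this is the coefficient `c_lam(T)`. -/
noncomputable def cCoeff {V : Type} [Fintype V] (G : SimpleGraph V) (lam : Multiset ℕ) : ℕ :=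
  Set.ncard {F : Set (Sym2 V) | F ⊆ G.edgeSet ∧ compSizes (SimpleGraph.fromEdgeSet F) = lam}

/-- `IsRootedSubtree T e v R r` says: `e` is an edge of `T`, `v` is an endpoint of `e`,
and the connected component of `v` after deleting `e`, rooted at `v`, is isomorphic to
the rooted tree `(R, r)` via a graph isomorphism sending root to root. -/
def IsRootedSubtree {V W : Type} (T : SimpleGraph V) (e : Sym2 V) (v : V)
    (R : SimpleGraph W) (r : W) : Prop :=
  e ∈ T.edgeSet ∧ v ∈ e ∧
  ∃ φ : R ≃g (T.deleteEdges {e}).induce ((T.deleteEdges {e}).connectedComponentMk v).supp,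
    (φ r : V) = v

/-- `rho T R r` is the number of rooted subtrees of `T` isomorphic to the rooted tree
`(R, r)`, counted over all pairs (edge `e`, endpoint `v` of `e`). -/
noncomputable def rho {V W : Type} [Fintype V] (T : SimpleGraph V)
    (R : SimpleGraph W) (r : W) : ℕ :=
  Set.ncard {p : Sym2 V × V | IsRootedSubtree T p.1 p.2 R r}

/-- The number of leaves (vertices of degree one) of a graph. -/
noncomputable def leafCount {V : Type} [Fintype V] (G : SimpleGraph V) : ℕ :=
  Set.ncard {v : V | (G.neighborSet v).ncard = 1}

/-- The rooted tree `R_{n,2}` (for `n ≥ 3`): the path `0 - 1 - ⋯ - (n-2)` rooted at the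
leaf `0`, together with an extra leaf `n-1` attached to the second outward-most vertex
`n-3` from the root.  (`R_{n,1}` is `SimpleGraph.pathGraph n` rooted at the leaf `0`.) -/
def Rtwo (n : ℕ) : SimpleGraph (Fin n) :=
  SimpleGraph.fromRel fun i j =>
    (j.val = i.val + 1 ∧ j.val ≤ n - 2) ∨ (i.val = n - 3 ∧ j.val = n - 1)

/-- A rooted tree on the vertex set `Fin n`: a tree together with a choice of root. -/
def RTree (n : ℕ) : Type := {p : SimpleGraph (Fin n) × Fin n // p.1.IsTree}

/-- Rooted isomorphism: a graph isomorphism sending root to root. -/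
def rootedSetoid (n : ℕ) : Setoid (RTree n) where
  r p q := ∃ φ : p.1.1 ≃g q.1.1, φ p.1.2 = q.1.2
  iseqv := by
    refine ⟨fun p => ⟨(Iso.refl : p.1.1 ≃g p.1.1), rfl⟩, ?_, ?_⟩
    · rintro p q ⟨φ, h⟩
      exact ⟨φ.symm, by rw [← h, RelIso.symm_apply_apply]⟩
    · rintro p q r ⟨φ, h⟩ ⟨ψ, h'⟩
      exact ⟨φ.trans ψ, by rw [RelIso.trans_apply, h, h']⟩

/-- Isomorphism classes of rooted trees of order `n`. -/
def RTreeClass (n : ℕ) : Type := Quotient (rootedSetoid n)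

noncomputable instance (n : ℕ) : Fintype (RTreeClass n) := by
  classical
  have h1 : Finite (RTree n) := Subtype.finite
  have h2 : Finite (Quotient (rootedSetoid n)) := Quotient.finite _
  exact @Fintype.ofFinite _ h2

/-- `rhoClass T q` : the number of rooted subtrees of `T` belonging to the rooted-tree
isomorphism class `q` (computed via a representative). -/
noncomputable def rhoClass {V : Type} [Fintype V] (T : SimpleGraph V) {n : ℕ}
    (q : RTreeClass n) : ℕ :=
  rho T q.out.1.1 q.out.1.2

/-- The number of leaves of a rooted tree other than its root. -/
noncomputable def nonRootLeafCount {n : ℕ} (p : RTree n) : ℕ :=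
  Set.ncard {w : Fin n | w ≠ p.1.2 ∧ (p.1.1.neighborSet w).ncard = 1}


section helpers

variable {V : Type}

theorem h_reach_map {G H : SimpleGraph V} (g : V → V)
    (h : ∀ x y, H.Adj x y → G.Reachable (g x) (g y)) {x y : V} (hr : H.Reachable x y) :
    G.Reachable (g x) (g y) := by
  obtain ⟨p⟩ := hr
  induction p with
  | nil => exact Reachable.refl _
  | cons hadj _ ih => exact (h _ _ hadj).trans ih

theorem h_exists_cross {T : SimpleGraph V} (hT : T.Connected) (S : Set V) {x y : V}
    (hx : x ∈ S) (hy : y ∉ S) : ∃ p q, T.Adj p q ∧ p ∈ S ∧ q ∉ S := by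
  by_contra hcon
  push Not at hcon
  obtain ⟨w⟩ := hT.preconnected x y
  induction w with
  | nil => exact hy hx
  | cons hadj _ ih => exact ih (hcon _ _ hadj hx) hy

/-- Reachability after isolating a pendant vertex. -/
theorem h_pend {G H : SimpleGraph V} {w u : V} (hu : H.neighborSet w = {u})
    (hG : ∀ x y, G.Adj x y ↔ H.Adj x y ∧ x ≠ w ∧ y ≠ w) (x y : V) :
    G.Reachable x y ↔ x = y ∨ (x ≠ w ∧ y ≠ w ∧ H.Reachable x y) := by
  classical
  have hadj : ∀ z, H.Adj w z ↔ z = u := fun z => by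
    rw [← mem_neighborSet, hu]; rfl
  have huw : u ≠ w := fun h => (H.loopless.irrefl w) ((hadj w).2 h.symm)
  constructor
  · intro hr
    have hr2 : H.Reachable x y := hr.mono (fun a b hab => ((hG a b).1 hab).1)
    by_cases hxy : x = y
    · exact Or.inl hxy
    · right
      obtain ⟨p⟩ := hr
      refine ⟨?_, ?_, hr2⟩
      · cases p with
        | nil => exact absurd rfl hxy
        | cons h _ => exact ((hG _ _).1 h).2.1
      · have q := p.reverse
        cases q with
        | nil => exact absurd rfl hxy
        | cons h _ => exact ((hG _ _).1 h).2.1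
  · rintro (rfl | ⟨hx, hy, hr⟩)
    · exact Reachable.refl _
    · have := h_reach_map (G := G) (H := H) (fun z => if z = w then u else z) ?_ hr
      · simpa [hx, hy] using this
      · intro a b hab
        by_cases ha : a = w
        · subst ha
          have := (hadj b).1 hab
          subst this
          simp [huw]
        · by_cases hb : b = w
          · subst hb
            have := (hadj a).1 hab.symm
            subst this
            simp [huw]
          · simp only [ha, hb, if_false]
            exact ((hG a b).2 ⟨hab, ha, hb⟩).reachable

/-- The component of `v` after deleting `e`. -/
def hC (T : SimpleGraph V) (e : Sym2 V) (v : V) : Set V :=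
  ((T.deleteEdges {e}).connectedComponentMk v).supp

theorem h_mem_hC {T : SimpleGraph V} {e : Sym2 V} {v x : V} :
    x ∈ hC T e v ↔ (T.deleteEdges {e}).Reachable x v := by
  simp [hC, ConnectedComponent.mem_supp_iff, ConnectedComponent.eq]

theorem h_self_mem {T : SimpleGraph V} {e : Sym2 V} {v : V} : v ∈ hC T e v :=
  h_mem_hC.2 (Reachable.refl _)

theorem h_hC_eq {T : SimpleGraph V} {e : Sym2 V} {v x : V} (h : x ∈ hC T e v) :
    hC T e x = hC T e v := by
  have h := h_mem_hC.1 h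
  ext z
  rw [h_mem_hC, h_mem_hC]
  exact ⟨fun k => k.trans h, fun k => k.trans h.symm⟩

theorem h_sides {T : SimpleGraph V} (hT : T.IsTree) {a b : V} (hab : T.Adj a b) :
    hC T s(a, b) b = (hC T s(a, b) a)ᶜ := by
  ext x
  rw [Set.mem_compl_iff, h_mem_hC, h_mem_hC]
  have hnr : ¬ (T.deleteEdges {s(a, b)}).Reachable a b := by
    have := (isAcyclic_iff_forall_isBridge.1 hT.isAcyclic) ((mem_edgeSet T).2 hab)
    exact isBridge_iff.1 this
  constructor
  · intro h1 h2
    exact hnr (h2.symm.trans h1)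
  · intro h1
    by_contra h2
    obtain ⟨p, q, hpq, hp, hq⟩ := h_exists_cross hT.connected
      {z | (T.deleteEdges {s(a, b)}).Reachable z a ∨ (T.deleteEdges {s(a, b)}).Reachable z b}
      (x := a) (y := x) (Or.inl (Reachable.refl _)) (by rintro (h | h); exacts [h1 h, h2 h])
    by_cases he : s(p, q) = s(a, b)
    · rw [Sym2.eq_iff] at he
      rcases he with ⟨rfl, rfl⟩ | ⟨rfl, rfl⟩
      · exact hq (Or.inr (Reachable.refl _))
      · exact hq (Or.inl (Reachable.refl _))
    · have hadj : (T.deleteEdges {s(a, b)}).Adj p q := by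
        rw [deleteEdges_adj]; exact ⟨hpq, he⟩
      rcases hp with hp | hp
      · exact hq (Or.inl (hadj.symm.reachable.trans hp))
      · exact hq (Or.inr (hadj.symm.reachable.trans hp))

/-- every edge has exactly one endpoint in the part of `w`, exactly one outside. -/
theorem h_ends {T : SimpleGraph V} (hT : T.IsTree) {e : Sym2 V} (he : e ∈ T.edgeSet) (w : V) :
    ∃ a b, e = s(a, b) ∧ T.Adj a b ∧ a ∈ hC T e w ∧ hC T e a = hC T e w ∧
      b ∉ hC T e w ∧ hC T e b = (hC T e w)ᶜ := by
  induction e with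
  | h a b =>
    rw [mem_edgeSet] at he
    have hs := h_sides hT he
    by_cases hw : w ∈ hC T s(a, b) a
    · have h1 := h_hC_eq hw
      refine ⟨a, b, rfl, he, by rw [h1]; exact h_self_mem, h1.symm, ?_, by rw [h1, hs]⟩
      rw [h1, ← Set.mem_compl_iff, ← hs]; exact h_self_mem
    · have hw' : w ∈ hC T s(a, b) b := by rw [hs]; exact hw
      have h1 := h_hC_eq hw'
      refine ⟨b, a, Sym2.eq_swap, he.symm, by rw [h1]; exact h_self_mem, h1.symm, ?_,
        by rw [h1, hs, compl_compl]⟩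
      rw [h1, hs]; exact fun h => h h_self_mem

theorem h_ncard_compl [Fintype V] (S : Set V) : Sᶜ.ncard + S.ncard = Fintype.card V := by
  have := Set.ncard_add_ncard_compl S
  rw [Nat.card_eq_fintype_card] at this
  omega

/-- The edge set obtained by removing `e` and all edges at `w`. -/
def hF (T : SimpleGraph V) (e : Sym2 V) (w : V) : Set (Sym2 V) :=
  T.edgeSet \ ({e} ∪ {f | w ∈ f})

theorem h_hF_adj {T : SimpleGraph V} {e : Sym2 V} {w x y : V} :
    (fromEdgeSet (hF T e w)).Adj x y ↔ (T.deleteEdges {e}).Adj x y ∧ x ≠ w ∧ y ≠ w := by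
  simp only [fromEdgeSet_adj, hF, deleteEdges_adj, Set.mem_sdiff, mem_edgeSet, Set.mem_union,
    Set.mem_singleton_iff, Set.mem_ofPred_eq, Sym2.mem_iff]
  constructor
  · rintro ⟨⟨h1, h2⟩, h3⟩
    push Not at h2
    exact ⟨⟨h1, h2.1⟩, h2.2.1.symm, h2.2.2.symm⟩
  · rintro ⟨⟨h1, h2⟩, h3, h4⟩
    refine ⟨⟨h1, ?_⟩, h1.ne⟩
    push Not
    exact ⟨h2, h3.symm, h4.symm⟩

theorem h_compSizes3 [Fintype V] (H : SimpleGraph V) (x y z : V)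
    (hxy : ¬ H.Reachable x y) (hxz : ¬ H.Reachable x z) (hyz : ¬ H.Reachable y z)
    (hall : ∀ t, H.Reachable t x ∨ H.Reachable t y ∨ H.Reachable t z) :
    compSizes H = {(H.connectedComponentMk x).supp.ncard, (H.connectedComponentMk y).supp.ncard,
      (H.connectedComponentMk z).supp.ncard} := by
  classical
  unfold compSizes
  have h1 : (Finset.univ.image H.connectedComponentMk) =
      {H.connectedComponentMk x, H.connectedComponentMk y, H.connectedComponentMk z} := by
    ext c
    induction c using ConnectedComponent.ind with
    | h t =>
      simp only [Finset.mem_image, Finset.mem_univ, true_and, Finset.mem_insert,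
        Finset.mem_singleton, ConnectedComponent.eq]
      exact ⟨fun _ => hall t, fun _ => ⟨t, Reachable.refl _⟩⟩
  have h2 : ({H.connectedComponentMk x, H.connectedComponentMk y, H.connectedComponentMk z} :
      Finset H.ConnectedComponent).val =
      {H.connectedComponentMk x, H.connectedComponentMk y, H.connectedComponentMk z} := by
    rw [Finset.insert_val_of_notMem, Finset.insert_val_of_notMem]
    · rfl
    · simpa [ConnectedComponent.eq] using hyz
    · simp [ConnectedComponent.eq, hxy, hxz]
  convert congrArg (Multiset.map fun c : H.ConnectedComponent => c.supp.ncard)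
    ((congrArg Finset.val h1).trans h2) using 1
  simp only [Multiset.insert_eq_cons, Multiset.map_cons, Multiset.map_singleton]

theorem h_hF_supp {T : SimpleGraph V} {e : Sym2 V} {w u : V}
    (hu : (T.deleteEdges {e}).neighborSet w = {u}) {x : V} (hx : x ≠ w) :
    ((fromEdgeSet (hF T e w)).connectedComponentMk x).supp = hC T e x \ {w} := by
  ext z
  rw [Set.mem_sdiff, h_mem_hC, ConnectedComponent.mem_supp_iff, ConnectedComponent.eq,
    h_pend hu (fun _ _ => h_hF_adj), Set.mem_singleton_iff]
  constructor
  · rintro (rfl | h)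
    · exact ⟨Reachable.refl _, hx⟩
    · exact ⟨h.2.2, h.1⟩
  · exact fun h => Or.inr ⟨h.2, hx, h.1⟩

theorem h_hF_supp_w {T : SimpleGraph V} {e : Sym2 V} {w u : V}
    (hu : (T.deleteEdges {e}).neighborSet w = {u}) :
    ((fromEdgeSet (hF T e w)).connectedComponentMk w).supp = {w} := by
  ext z
  rw [ConnectedComponent.mem_supp_iff, ConnectedComponent.eq,
    h_pend hu (fun _ _ => h_hF_adj), Set.mem_singleton_iff]
  tauto

theorem h_keyK [Fintype V] {T : SimpleGraph V} (hT : T.IsTree) {e : Sym2 V} (he : e ∈ T.edgeSet)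
    {w u : V} (hu : (T.deleteEdges {e}).neighborSet w = {u}) :
    compSizes (fromEdgeSet (hF T e w)) =
      {Fintype.card V - (hC T e w).ncard, (hC T e w).ncard - 1, 1} := by
  obtain ⟨a, b, hab, hadj, ha, hCa, hb, hCb⟩ := h_ends hT he w
  have huw : (T.deleteEdges {e}).Adj w u := by rw [← mem_neighborSet, hu]; rfl
  have hune : u ≠ w := huw.ne'
  have hbw : b ≠ w := fun h => hb (h ▸ h_self_mem)
  have hub : u ∈ hC T e w := h_mem_hC.2 huw.symm.reachable
  have hP := h_pend hu (G := fromEdgeSet (hF T e w)) (fun _ _ => h_hF_adj)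
  have hnub : ¬ (T.deleteEdges {e}).Reachable b u := fun h =>
    hb (h_mem_hC.2 (h.trans huw.symm.reachable))
  rw [h_compSizes3 _ b u w]
  · rw [h_hF_supp hu hbw, h_hF_supp hu hune, h_hF_supp_w hu, h_hC_eq hub, hCb,
      Set.ncard_sdiff_singleton_of_mem h_self_mem, Set.ncard_singleton,
      Set.sdiff_singleton_eq_self (by simp [h_self_mem])]
    have := h_ncard_compl (hC T e w)
    congr 1
    omega
  · rw [hP]
    rintro (h | h)
    · exact hnub (h ▸ Reachable.refl _)
    · exact hnub h.2.2
  · rw [hP]; tauto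
  · rw [hP]; tauto
  · intro t
    simp only [hP]
    by_cases htw : t = w
    · tauto
    · by_cases ht : t ∈ hC T e w
      · right; left; right
        exact ⟨htw, hune, (h_mem_hC.1 ht).trans huw.reachable⟩
      · left; right
        refine ⟨htw, hbw, ?_⟩
        rw [← h_mem_hC, hCb]; exact ht

/-- a vertex of degree two -/
theorem h_deg2 [Fintype V] {T : SimpleGraph V} (hT : T.IsTree) {w a b : V}
    (hab : a ≠ b) (hN : T.neighborSet w = {a, b}) :
    (T.deleteEdges {s(w, a)}).neighborSet w = {b} ∧
    (T.deleteEdges {s(w, b)}).neighborSet w = {a} ∧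
    (hC T s(w, a) w).ncard + (hC T s(w, b) w).ncard = Fintype.card V + 1 := by
  have hadj : ∀ z, T.Adj w z ↔ z = a ∨ z = b := fun z => by
    rw [← mem_neighborSet, hN]; rfl
  have hwa : T.Adj w a := (hadj a).2 (Or.inl rfl)
  have hwb : T.Adj w b := (hadj b).2 (Or.inr rfl)
  have h1 : (T.deleteEdges {s(w, a)}).neighborSet w = {b} := by
    ext z
    simp only [mem_neighborSet, deleteEdges_adj, hadj, Set.mem_singleton_iff, Sym2.eq_iff]
    constructor
    · rintro ⟨rfl | rfl, h⟩
      · exact absurd (Or.inl (by simp)) h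
      · rfl
    · rintro rfl
      exact ⟨Or.inr rfl, by rintro (h | h); exacts [hab h.2.symm, hwa.ne h.1]⟩
  have h2 : (T.deleteEdges {s(w, b)}).neighborSet w = {a} := by
    ext z
    simp only [mem_neighborSet, deleteEdges_adj, hadj, Set.mem_singleton_iff, Sym2.eq_iff]
    constructor
    · rintro ⟨rfl | rfl, h⟩
      · rfl
      · exact absurd (Or.inl (by simp)) h
    · rintro rfl
      exact ⟨Or.inl rfl, by rintro (h | h); exacts [hab h.2, hwb.ne h.1]⟩
  refine ⟨h1, h2, ?_⟩
  have hFF : hF T s(w, a) w = hF T s(w, b) w := by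
    ext f
    simp only [hF, Set.mem_sdiff, Set.mem_union, Set.mem_singleton_iff, Set.mem_ofPred_eq]
    have k1 : f = s(w, a) → w ∈ f := by rintro rfl; simp
    have k2 : f = s(w, b) → w ∈ f := by rintro rfl; simp
    tauto
  have e1 := h_hF_supp h1 hwb.ne'
  have e2 := h_hF_supp h2 hwb.ne'
  rw [hFF, e2, h_sides hT hwb, Set.sdiff_singleton_eq_self (by simp [h_self_mem])] at e1
  have hbm : b ∈ hC T s(w, a) w := by
    refine h_mem_hC.2 (Adj.reachable ?_).symm
    rw [← mem_neighborSet, h1]; rfl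
  rw [h_hC_eq hbm] at e1
  have e3 := congrArg Set.ncard e1
  rw [Set.ncard_sdiff_singleton_of_mem h_self_mem] at e3
  have := h_ncard_compl (hC T s(w, b) w)
  have : 0 < (hC T s(w, a) w).ncard :=
    (Set.ncard_pos (Set.toFinite _)).2 ⟨w, h_self_mem⟩
  omega

end helpers

section helpers2

variable {V : Type} [Fintype V]

/-- The index set for the bijection. -/
def hS (T : SimpleGraph V) (d n : ℕ) : Set (Sym2 V × V) :=
  {p | p.1 ∈ T.edgeSet ∧ (((T.neighborSet p.2).ncard = 1 ∧ (hC T p.1 p.2).ncard = d - n) ∨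
    (((T.deleteEdges {p.1}).neighborSet p.2).ncard = 1 ∧ (hC T p.1 p.2).ncard = n + 1))}

theorem h_has_nbr {T : SimpleGraph V} {e : Sym2 V} {w : V} (h : 1 < (hC T e w).ncard) :
    ∃ u, (T.deleteEdges {e}).Adj w u := by
  obtain ⟨x, hx, hxw⟩ := Set.exists_ne_of_one_lt_ncard h w
  obtain ⟨p⟩ := (h_mem_hC.1 hx).symm
  cases p with
  | nil => exact absurd rfl hxw
  | cons h _ => exact ⟨_, h⟩

theorem h_leaf {T : SimpleGraph V} {e : Sym2 V} {w u : V} (h : 1 < (hC T e w).ncard)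
    (hu : T.neighborSet w = {u}) : (T.deleteEdges {e}).neighborSet w = {u} ∧ w ∉ e ∨
      (T.deleteEdges {e}).neighborSet w = {u} ∧ e ∉ T.edgeSet := by
  have hadj : ∀ z, T.Adj w z ↔ z = u := fun z => by rw [← mem_neighborSet, hu]; rfl
  obtain ⟨x, hx⟩ := h_has_nbr h
  rw [deleteEdges_adj] at hx
  obtain rfl := (hadj _).1 hx.1
  have h1 : (T.deleteEdges {e}).neighborSet w = {x} := by
    ext z
    rw [mem_neighborSet, deleteEdges_adj, hadj, Set.mem_singleton_iff]
    constructor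
    · exact fun h => h.1
    · rintro rfl; exact ⟨rfl, hx.2⟩
  by_cases hwe : w ∈ e
  · right
    refine ⟨h1, fun he => ?_⟩
    obtain ⟨y, rfl⟩ := Sym2.mem_iff_exists.1 hwe
    rw [mem_edgeSet, hadj] at he
    subst he
    exact hx.2 rfl
  · exact Or.inl ⟨h1, hwe⟩

theorem h_hS_nbr {T : SimpleGraph V} {d n : ℕ} (hn : 2 * n + 1 < d)
    {p : Sym2 V × V} (hp : p ∈ hS T d n) :
    ∃ u, (T.deleteEdges {p.1}).neighborSet p.2 = {u} := by
  obtain ⟨he, ⟨h1, h2⟩ | ⟨h1, h2⟩⟩ := hp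
  · obtain ⟨u, hu⟩ := Set.ncard_eq_one.1 h1
    refine ⟨u, ?_⟩
    rcases h_leaf (e := p.1) (by omega) hu with h | h
    exacts [h.1, h.1]
  · exact Set.ncard_eq_one.1 h1

theorem h_hS_card {T : SimpleGraph V} {d n : ℕ} 
    {p : Sym2 V × V} (hp : p ∈ hS T d n) :
    (hC T p.1 p.2).ncard = d - n ∨ (hC T p.1 p.2).ncard = n + 1 := by
  obtain ⟨he, ⟨h1, h2⟩ | ⟨h1, h2⟩⟩ := hp
  exacts [Or.inl h2, Or.inr h2]

theorem h_injOn {T : SimpleGraph V} (hT : T.IsTree)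
    (d : ℕ) (hd : Fintype.card V = d) (n : ℕ) (hn2 : 2 ≤ n) (hn : 2 * n + 1 < d) :
    Set.InjOn (fun p : Sym2 V × V => hF T p.1 p.2) (hS T d n) := by
  rintro ⟨e, w⟩ hp ⟨e', w'⟩ hp' hF'
  simp only at hF'
  obtain ⟨u, hu⟩ := h_hS_nbr hn hp
  obtain ⟨u', hu'⟩ := h_hS_nbr hn hp'
  have hc := h_hS_card hp
  simp only at hu hu' hc
  have hww : w' = w := by
    by_contra hne
    have e1 := h_hF_supp_w hu'
    rw [← hF', h_hF_supp hu hne] at e1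
    have e2 := congrArg Set.ncard e1
    rw [Set.ncard_singleton] at e2
    by_cases hm : w' ∈ hC T e w
    · rw [h_hC_eq hm, Set.ncard_sdiff_singleton_of_mem h_self_mem] at e2
      omega
    · obtain ⟨a, b, -, -, -, -, -, hb⟩ := h_ends hT hp.1 w
      have hm' : w' ∈ hC T e b := by
        simp only at hb
        rw [hb]; exact hm
      simp only at hb
      rw [h_hC_eq hm', hb, Set.sdiff_singleton_eq_self (by simp [h_self_mem])] at e2
      have := h_ncard_compl (hC T e w)
      omega
  subst hww
  by_contra hne
  have hee : e ≠ e' := fun h => hne (by rw [h])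
  have hmem : ∀ f, f ∈ T.edgeSet → ((f = e ∨ w' ∈ f) ↔ (f = e' ∨ w' ∈ f)) := by
    intro f hf
    have := Set.ext_iff.1 hF' f
    simp only [hF, Set.mem_sdiff, Set.mem_union, Set.mem_singleton_iff, Set.mem_ofPred_eq] at this
    tauto
  have he : w' ∈ e := by
    have := (hmem e hp.1).1 (Or.inl rfl)
    tauto
  have he' : w' ∈ e' := by
    have := (hmem e' hp'.1).2 (Or.inl rfl)
    have := hee.symm
    tauto
  obtain ⟨a, rfl⟩ := Sym2.mem_iff_exists.1 he
  obtain ⟨b, rfl⟩ := Sym2.mem_iff_exists.1 he'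
  have hab : a ≠ b := fun h => hee (by rw [h])
  have hwa : T.Adj w' a := hp.1
  have hwb : T.Adj w' b := hp'.1
  have hN : T.neighborSet w' = {a, b} := by
    have hub : b = u := by
      have : b ∈ (T.deleteEdges {s(w', a)}).neighborSet w' := by
        rw [mem_neighborSet, deleteEdges_adj]; exact ⟨hwb, hee.symm⟩
      rw [hu] at this; exact this
    ext z
    rw [mem_neighborSet, Set.mem_insert_iff, Set.mem_singleton_iff]
    constructor
    · intro hz
      by_cases hza : z = a
      · exact Or.inl hza
      · right
        have : z ∈ (T.deleteEdges {s(w', a)}).neighborSet w' := by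
          rw [mem_neighborSet, deleteEdges_adj]
          refine ⟨hz, ?_⟩
          rw [Set.mem_singleton_iff, Sym2.congr_right]
          exact hza
        rw [hu] at this; rw [hub]; exact this
    · rintro (rfl | rfl)
      exacts [hwa, hwb]
  have h2 := (h_deg2 hT hab hN).2.2
  have hN1 : (T.neighborSet w').ncard = 2 := by rw [hN, Set.ncard_pair hab]
  have c1 : (hC T s(w', a) w').ncard = n + 1 := by
    rcases hp.2 with h | h
    · have := h.1; simp only at this; omega
    · exact h.2
  have c2 : (hC T s(w', b) w').ncard = n + 1 := by
    rcases hp'.2 with h | h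
    · have := h.1; simp only at this; omega
    · exact h.2
  omega

theorem h_sizes {A n d : ℕ} (hn2 : 2 ≤ n) (hn : 2 * n + 1 < d) (hA : A ≤ d) (hA0 : 0 < A)
    (h : ({d - A, A - 1, 1} : Multiset ℕ) = {d - n - 1, n, 1}) : A = d - n ∨ A = n + 1 := by
  have h1 : n ∈ ({d - A, A - 1, 1} : Multiset ℕ) := by rw [h]; simp
  simp at h1
  omega

theorem h_mapsTo {T : SimpleGraph V} (hT : T.IsTree)
    (d : ℕ) (hd : Fintype.card V = d) (n : ℕ) (hn2 : 2 ≤ n) (hn : 2 * n + 1 < d)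
    {p : Sym2 V × V} (hp : p ∈ hS T d n) :
    compSizes (fromEdgeSet (hF T p.1 p.2)) = {d - n - 1, n, 1} := by
  obtain ⟨u, hu⟩ := h_hS_nbr hn hp
  rw [h_keyK hT hp.1 hu, hd]
  rcases h_hS_card hp with h | h <;> rw [h]
  · rw [show d - (d - n) = n by omega, show d - n - 1 = d - n - 1 from rfl]
    exact Multiset.cons_swap _ _ _
  · rw [show d - (n + 1) = d - n - 1 by omega]
    rfl

theorem h_comp3 (H : SimpleGraph V) {a b : ℕ} (h : compSizes H = {a, b, 1}) :
    ∃ w x y, (∀ t, H.Reachable t w → t = w) ∧ x ≠ w ∧ y ≠ w ∧ ¬ H.Reachable x y ∧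
      ∀ t, t = w ∨ H.Reachable t x ∨ H.Reachable t y := by
  classical
  have h0 : (Finset.univ.image H.connectedComponentMk).val.map
      (fun c => c.supp.ncard) = {a, b, 1} := by
    rw [← h]; unfold compSizes; congr!
  have h1 : 1 ∈ (Finset.univ.image H.connectedComponentMk).val.map
      (fun c => c.supp.ncard) := by rw [h0]; simp
  obtain ⟨cw, hcw, hcw1⟩ := Multiset.mem_map.1 h1
  have hcard : (Finset.univ.image H.connectedComponentMk).card = 3 := by
    have := congrArg Multiset.card h0
    rw [Multiset.card_map] at this
    exact this
  have hcard2 : ((Finset.univ.image H.connectedComponentMk).erase cw).card = 2 := by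
    rw [Finset.card_erase_of_mem hcw, hcard]
  obtain ⟨cx, cy, hxy, hE⟩ := Finset.card_eq_two.1 hcard2
  have hx : cx ≠ cw := by
    have : cx ∈ (Finset.univ.image H.connectedComponentMk).erase cw := by rw [hE]; simp
    exact (Finset.mem_erase.1 this).1
  have hy : cy ≠ cw := by
    have : cy ∈ (Finset.univ.image H.connectedComponentMk).erase cw := by rw [hE]; simp
    exact (Finset.mem_erase.1 this).1
  induction cw using ConnectedComponent.ind with | h w => ?_
  induction cx using ConnectedComponent.ind with | h x => ?_
  induction cy using ConnectedComponent.ind with | h y => ?_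
  have hw : ∀ t, H.Reachable t w → t = w := by
    obtain ⟨w', hw'⟩ := Set.ncard_eq_one.1 hcw1
    intro t ht
    have k1 : t ∈ (H.connectedComponentMk w).supp := by
      rw [ConnectedComponent.mem_supp_iff, ConnectedComponent.eq]; exact ht
    have k2 : w ∈ (H.connectedComponentMk w).supp := by
      rw [ConnectedComponent.mem_supp_iff]
    rw [hw'] at k1 k2
    exact k1.trans k2.symm
  refine ⟨w, x, y, hw, fun k => hx (by rw [k]), fun k => hy (by rw [k]),
    fun k => hxy (ConnectedComponent.eq.2 k), fun t => ?_⟩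
  by_cases ht : t = w
  · exact Or.inl ht
  · right
    have : H.connectedComponentMk t ∈ (Finset.univ.image H.connectedComponentMk).erase
        (H.connectedComponentMk w) := by
      rw [Finset.mem_erase]
      exact ⟨fun k => ht (hw t (ConnectedComponent.eq.1 k)),
        Finset.mem_image_of_mem _ (Finset.mem_univ _)⟩
    rw [hE, Finset.mem_insert, Finset.mem_singleton, ConnectedComponent.eq,
      ConnectedComponent.eq] at this
    exact this

theorem h_surj_aux {T : SimpleGraph V} (hT : T.IsTree) (F : Set (Sym2 V)) (hFE : F ⊆ T.edgeSet)
    {w x y a : V} (hw : ∀ t, (fromEdgeSet F).Reachable t w → t = w) (hy : y ≠ w)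
    (hxy : ¬ (fromEdgeSet F).Reachable x y)
    (hall : ∀ t, t = w ∨ (fromEdgeSet F).Reachable t x ∨ (fromEdgeSet F).Reachable t y)
    (hwa : T.Adj w a) (hax : (fromEdgeSet F).Reachable a x) :
    ∃ p q, T.Adj p q ∧ F = hF T s(p, q) w ∧ (T.deleteEdges {s(p, q)}).neighborSet w = {a} ∧
      (p = w ∨ (p ≠ w ∧ q ≠ w)) := by
  obtain ⟨p, q, hpq, hp, hq⟩ := h_exists_cross hT.connected
      {t | t = w ∨ (fromEdgeSet F).Reachable t x} (x := w) (y := y) (Or.inl rfl)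
      (by rintro (h | h); exacts [hy h, hxy h.symm])
  have hqw : q ≠ w := fun h => hq (Or.inl h)
  have hqx : ¬ (fromEdgeSet F).Reachable q x := fun h => hq (Or.inr h)
  have hqy : (fromEdgeSet F).Reachable q y := by
    rcases hall q with h | h | h
    exacts [absurd h hqw, absurd h hqx, h]
  have hFadj : ∀ s t, T.Adj s t → s(s, t) ∈ F → (fromEdgeSet F).Adj s t := fun s t h1 h2 =>
    (fromEdgeSet_adj F).2 ⟨h2, h1.ne⟩
  have hwF : ∀ f ∈ F, w ∉ f := by
    intro f hf hwf
    obtain ⟨z, rfl⟩ := Sym2.mem_iff_exists.1 hwf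
    have hz : T.Adj w z := hFE hf
    exact hz.ne' (hw z (hFadj _ _ hz hf).symm.reachable)
  have heF : s(p, q) ∉ F := by
    intro hf
    have k := (hFadj _ _ hpq hf).reachable
    rcases hp with h | h
    · subst h; exact hqw (hw q k.symm)
    · exact hqx (k.symm.trans h)
  -- the enlarged graph is all of T
  have hK : T ≤ fromEdgeSet (F ∪ {s(w, a), s(p, q)}) := by
    refine (isTree_iff_minimal_connected.1 hT).2 ?_ ?_
    · have hle : fromEdgeSet F ≤ fromEdgeSet (F ∪ {s(w, a), s(p, q)}) :=
        fromEdgeSet_mono Set.subset_union_left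
      have r1 : (fromEdgeSet (F ∪ {s(w, a), s(p, q)})).Reachable x w := by
        refine (hax.symm.mono hle).trans (Adj.reachable ?_).symm
        rw [fromEdgeSet_adj]
        exact ⟨by simp, hwa.ne⟩
      have r2 : (fromEdgeSet (F ∪ {s(w, a), s(p, q)})).Reachable y w := by
        have k : (fromEdgeSet (F ∪ {s(w, a), s(p, q)})).Reachable q p := by
          refine (Adj.reachable ?_).symm
          rw [fromEdgeSet_adj]
          exact ⟨by simp, hpq.ne⟩
        refine (hqy.symm.mono hle).trans (k.trans ?_)
        rcases hp with h | h
        · subst h; exact Reachable.refl _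
        · exact (h.mono hle).trans r1
      have r : ∀ t, (fromEdgeSet (F ∪ {s(w, a), s(p, q)})).Reachable t w := by
        intro t
        rcases hall t with h | h | h
        · subst h; exact Reachable.refl _
        · exact (h.mono hle).trans r1
        · exact (h.mono hle).trans r2
      have : Nonempty V := ⟨w⟩
      exact ⟨fun s t => (r s).trans (r t).symm⟩
    · intro s t hst
      rw [fromEdgeSet_adj] at hst
      rcases hst.1 with h | h | h
      · exact hFE h
      · rw [← mem_edgeSet, h]; exact hwa
      · rw [Set.mem_singleton_iff] at h
        rw [← mem_edgeSet, h]; exact hpq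
  have hE : ∀ f ∈ T.edgeSet, f ∈ F ∨ f = s(w, a) ∨ f = s(p, q) := by
    intro f hf
    induction f with
    | h s t =>
      have := (fromEdgeSet_adj _).1 (hK hf)
      exact this.1
  have hne : s(w, a) ≠ s(p, q) := by
    intro h
    have : q ∈ s(w, a) := by rw [h]; simp
    rcases Sym2.mem_iff.1 this with h | h
    · exact hqw h
    · subst h; exact hqx hax
  refine ⟨p, q, hpq, ?_, ?_, ?_⟩
  · ext f
    simp only [hF, Set.mem_sdiff, Set.mem_union, Set.mem_singleton_iff, Set.mem_ofPred_eq]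
    constructor
    · intro hf
      refine ⟨hFE hf, ?_⟩
      rintro (h | h)
      · subst h; exact heF hf
      · exact hwF f hf h
    · rintro ⟨h1, h2⟩
      push Not at h2
      rcases hE f h1 with h | h | h
      · exact h
      · subst h; exact absurd (by simp) h2.2
      · exact absurd h h2.1
  · ext z
    rw [mem_neighborSet, deleteEdges_adj, Set.mem_singleton_iff, Set.mem_singleton_iff]
    constructor
    · rintro ⟨h1, h2⟩
      rcases hE s(w, z) h1 with h | h | h
      · exact absurd (by simp) (hwF _ h)
      · exact Sym2.congr_right.1 h
      · exact absurd h h2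
    · rintro rfl
      exact ⟨hwa, hne⟩
  · by_cases h : p = w
    · exact Or.inl h
    · exact Or.inr ⟨h, hqw⟩

theorem h_surj {T : SimpleGraph V} (hT : T.IsTree)
    (d : ℕ) (hd : Fintype.card V = d) (n : ℕ) (hn2 : 2 ≤ n) (hn : 2 * n + 1 < d)
    (F : Set (Sym2 V)) (hFE : F ⊆ T.edgeSet)
    (hF' : compSizes (fromEdgeSet F) = {d - n - 1, n, 1}) :
    ∃ p ∈ hS T d n, hF T p.1 p.2 = F := by
  obtain ⟨w, x, y, hw, hx, hy, hxy, hall⟩ := h_comp3 _ hF'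
  obtain ⟨w', a, hwa, hw', ha⟩ := h_exists_cross hT.connected {w} (x := w) (y := x) rfl hx
  rw [Set.mem_singleton_iff] at hw' ha
  subst hw'
  have : ∃ p q, T.Adj p q ∧ F = hF T s(p, q) w' ∧
      (T.deleteEdges {s(p, q)}).neighborSet w' = {a} ∧ (p = w' ∨ (p ≠ w' ∧ q ≠ w')) := by
    rcases hall a with h | h | h
    · exact absurd h ha
    · exact h_surj_aux hT F hFE hw hy hxy hall hwa h
    · exact h_surj_aux hT F hFE hw hx (fun k => hxy k.symm)
        (fun t => by have := hall t; tauto) hwa h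
  obtain ⟨p, q, hpq, hFeq, hN, hcase⟩ := this
  have hsz := hF'
  rw [hFeq, h_keyK hT hpq hN, hd] at hsz
  have hle : (hC T s(p, q) w').ncard ≤ d := by
    have := h_ncard_compl (hC T s(p, q) w'); omega
  have hpos : 0 < (hC T s(p, q) w').ncard :=
    (Set.ncard_pos (Set.toFinite _)).2 ⟨w', h_self_mem⟩
  rcases h_sizes hn2 hn hle hpos hsz with h | h
  · rcases hcase with hpw | ⟨hpw, hqw⟩
    · subst hpw
      have hne : a ≠ q := by
        have : a ∈ (T.deleteEdges {s(p, q)}).neighborSet p := by rw [hN]; rfl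
        rw [mem_neighborSet, deleteEdges_adj] at this
        rintro rfl
        exact this.2 rfl
      have hNT : T.neighborSet p = {a, q} := by
        ext z
        rw [mem_neighborSet, Set.mem_insert_iff, Set.mem_singleton_iff]
        constructor
        · intro hz
          by_cases hzq : z = q
          · exact Or.inr hzq
          · left
            have : z ∈ (T.deleteEdges {s(p, q)}).neighborSet p := by
              rw [mem_neighborSet, deleteEdges_adj]
              refine ⟨hz, ?_⟩
              rw [Set.mem_singleton_iff, Sym2.congr_right]
              exact hzq
            rw [hN] at this; exact this
        · rintro (rfl | rfl)
          exacts [hwa, hpq]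
      obtain ⟨k1, k2, k3⟩ := h_deg2 hT hne hNT
      refine ⟨(s(p, a), p), ⟨hwa, Or.inr ⟨?_, ?_⟩⟩, ?_⟩
      · simp only; rw [k1, Set.ncard_singleton]
      · simp only; omega
      · rw [hFeq]
        ext f
        simp only [hF, Set.mem_sdiff, Set.mem_union, Set.mem_singleton_iff, Set.mem_ofPred_eq]
        have k1 : f = s(p, a) → p ∈ f := by rintro rfl; simp
        have k2 : f = s(p, q) → p ∈ f := by rintro rfl; simp
        tauto
    · refine ⟨(s(p, q), w'), ⟨hpq, Or.inl ⟨?_, h⟩⟩, hFeq.symm⟩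
      simp only
      rw [Set.ncard_eq_one]
      refine ⟨a, ?_⟩
      rw [← hN]
      ext z
      rw [mem_neighborSet, mem_neighborSet, deleteEdges_adj]
      refine ⟨fun hz => ⟨hz, ?_⟩, fun hz => hz.1⟩
      rw [Set.mem_singleton_iff, Sym2.eq_iff]
      rintro (k | k)
      exacts [hpw k.1.symm, hqw k.1.symm]
  · refine ⟨(s(p, q), w'), ⟨hpq, Or.inr ⟨?_, h⟩⟩, hFeq.symm⟩
    simp only
    rw [hN, Set.ncard_singleton]

theorem h_count {T : SimpleGraph V} (hT : T.IsTree)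
    (d : ℕ) (hd : Fintype.card V = d) (n : ℕ) (hn2 : 2 ≤ n) (hn : 2 * n + 1 < d) :
    cCoeff T {d - n - 1, n, 1} = (hS T d n).ncard := by
  rw [← (h_injOn hT d hd n hn2 hn).ncard_image]
  unfold cCoeff
  congr 1
  ext F
  constructor
  · rintro ⟨h1, h2⟩
    exact h_surj hT d hd n hn2 hn F h1 h2
  · rintro ⟨p, hp, rfl⟩
    exact ⟨Set.sdiff_subset, h_mapsTo hT d hd n hn2 hn hp⟩

end helpers2

section helpers3

variable {V : Type} [Fintype V]

theorem h_iso_nbr {W : Type} {T : SimpleGraph V} {e : Sym2 V} {v : V} {R : SimpleGraph W}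
    (φ : R ≃g (T.deleteEdges {e}).induce ((T.deleteEdges {e}).connectedComponentMk v).supp)
    (r : W) :
    (R.neighborSet r).ncard = ((T.deleteEdges {e}).neighborSet (φ r : V)).ncard := by
  have hinj : Function.Injective (fun z => (φ z : V)) :=
    Subtype.val_injective.comp φ.injective
  rw [← Set.ncard_image_of_injective _ hinj]
  congr 1
  ext x
  constructor
  · rintro ⟨z, hz, rfl⟩
    exact (φ.map_rel_iff.2 hz : _)
  · intro hx
    rw [mem_neighborSet] at hx
    have hm : x ∈ ((T.deleteEdges {e}).connectedComponentMk v).supp := by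
      have h1 := (φ r).2
      rw [ConnectedComponent.mem_supp_iff] at h1 ⊢
      rw [← h1, ConnectedComponent.eq]
      exact hx.symm.reachable
    refine ⟨φ.symm ⟨x, hm⟩, ?_, by simp⟩
    rw [mem_neighborSet, ← φ.map_rel_iff]
    simpa using hx

theorem h_iso_count {W : Type} {T : SimpleGraph V} {e : Sym2 V} {v : V} {R : SimpleGraph W}
    (φ : R ≃g (T.deleteEdges {e}).induce ((T.deleteEdges {e}).connectedComponentMk v).supp)
    (P : V → Prop) (Q : W → Prop) (hPQ : ∀ z, Q z ↔ P (φ z)) :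
    Set.ncard {z | Q z} = Set.ncard {x | x ∈ hC T e v ∧ P x} := by
  have hinj : Function.Injective (fun z => (φ z : V)) :=
    Subtype.val_injective.comp φ.injective
  rw [← Set.ncard_image_of_injective _ hinj]
  congr 1
  ext x
  constructor
  · rintro ⟨z, hz, rfl⟩
    exact ⟨(φ z).2, (hPQ z).1 hz⟩
  · rintro ⟨h1, h2⟩
    refine ⟨φ.symm ⟨x, h1⟩, (hPQ _).2 ?_, by simp⟩
    simpa using h2

theorem h_leafCount {m : ℕ} {T : SimpleGraph V} {p : Sym2 V × V} {q : RTree m}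
    (h : IsRootedSubtree T p.1 p.2 q.1.1 q.1.2) :
    leafCount q.1.1 =
      Set.ncard {x | x ∈ hC T p.1 p.2 ∧ ((T.deleteEdges {p.1}).neighborSet x).ncard = 1} := by
  obtain ⟨-, -, φ, -⟩ := h
  exact h_iso_count φ (fun x => ((T.deleteEdges {p.1}).neighborSet x).ncard = 1) _
    (fun z => by rw [h_iso_nbr φ])

theorem h_nonRoot {m : ℕ} (hm : 2 ≤ m) {T : SimpleGraph V} (hT : T.IsTree) {p : Sym2 V × V}
    {q : RTree m} (h : IsRootedSubtree T p.1 p.2 q.1.1 q.1.2)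
    (hc : (hC T p.1 p.2).ncard = m) :
    (leafCount T : ℤ) - (nonRootLeafCount q : ℤ) =
      (Set.ncard {x | x ∉ hC T p.1 p.2 ∧ (T.neighborSet x).ncard = 1} : ℤ) := by
  obtain ⟨e, v⟩ := p
  obtain ⟨he, hv, φ, hφ⟩ := h
  simp only at he hv φ hφ hc ⊢
  have h1 : nonRootLeafCount q = Set.ncard {x | x ∈ hC T e v ∧ (x ≠ v ∧
      ((T.deleteEdges {e}).neighborSet x).ncard = 1)} := by
    refine h_iso_count φ (fun x => x ≠ v ∧ ((T.deleteEdges {e}).neighborSet x).ncard = 1) _ ?_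
    intro z
    rw [h_iso_nbr φ]
    refine and_congr_left fun _ => not_congr ?_
    constructor
    · rintro rfl; exact hφ
    · intro k; exact φ.injective (Subtype.ext (k.trans hφ.symm))
  obtain ⟨b, rfl⟩ := Sym2.mem_iff_exists.1 hv
  have hvb : T.Adj v b := he
  have h2 : {x | x ∈ hC T s(v, b) v ∧ (x ≠ v ∧
      ((T.deleteEdges {s(v, b)}).neighborSet x).ncard = 1)} =
      {x | x ∈ hC T s(v, b) v ∧ (T.neighborSet x).ncard = 1} := by
    ext x
    simp only [Set.mem_ofPred_eq]
    refine and_congr_right fun hx => ?_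
    by_cases hxv : x = v
    · subst hxv
      refine iff_of_false (fun h => h.1 rfl) ?_
      intro hone
      obtain ⟨u, hu⟩ := Set.ncard_eq_one.1 hone
      rcases h_leaf (e := s(x, b)) (by omega) hu with h | h
      · exact h.2 (by simp)
      · exact h.2 he
    · have hxb : x ≠ b := by
        rintro rfl
        have hs := h_sides hT hvb
        have : x ∈ hC T s(v, x) x := h_self_mem
        rw [hs] at this
        exact this hx
      have : (T.deleteEdges {s(v, b)}).neighborSet x = T.neighborSet x := by
        ext z
        rw [mem_neighborSet, mem_neighborSet, deleteEdges_adj]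
        refine ⟨fun hz => hz.1, fun hz => ⟨hz, ?_⟩⟩
        rw [Set.mem_singleton_iff, Sym2.eq_iff]
        rintro (k | k)
        exacts [hxv k.1, hxb k.1]
      rw [this]
      exact ⟨fun h => h.2, fun h => ⟨hxv, h⟩⟩
  rw [h1, h2]
  unfold leafCount
  have h3 : {x | (T.neighborSet x).ncard = 1} =
      {x | x ∈ hC T s(v, b) v ∧ (T.neighborSet x).ncard = 1} ∪
      {x | x ∉ hC T s(v, b) v ∧ (T.neighborSet x).ncard = 1} := by
    ext x
    simp only [Set.mem_ofPred_eq, Set.mem_union]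
    tauto
  rw [h3, Set.ncard_union_eq]
  · push_cast; ring
  · rw [Set.disjoint_left]
    rintro x ⟨k1, -⟩ ⟨k2, -⟩
    exact k2 k1

theorem h_isoCard {m : ℕ} {T : SimpleGraph V} {p : Sym2 V × V} {q : RTree m}
    (h : IsRootedSubtree T p.1 p.2 q.1.1 q.1.2) : (hC T p.1 p.2).ncard = m := by
  obtain ⟨-, -, φ, -⟩ := h
  have := Nat.card_congr φ.toEquiv
  rw [Nat.card_eq_fintype_card, Fintype.card_fin] at this
  exact this.symm

theorem h_exClass {m : ℕ} {T : SimpleGraph V} (hT : T.IsTree) {p : Sym2 V × V}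
    (h1 : p.1 ∈ T.edgeSet) (h2 : p.2 ∈ p.1) (h3 : (hC T p.1 p.2).ncard = m) :
    ∃ q : RTreeClass m, IsRootedSubtree T p.1 p.2 q.out.1.1 q.out.1.2 := by
  obtain ⟨e, v⟩ := p
  simp only at h1 h2 h3 ⊢
  have hfin : Finite (hC T e v) := Set.toFinite _
  have hcard : Nat.card (hC T e v) = m := h3
  obtain ⟨σ⟩ : Nonempty (hC T e v ≃ Fin m) := ⟨Finite.equivFinOfCardEq hcard⟩
  let H := (T.deleteEdges {e}).induce (hC T e v)
  have hH : H.IsTree := by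
    have hac : (T.deleteEdges {e}).IsAcyclic := hT.isAcyclic.anti (deleteEdges_le _)
    exact hac.isTree_connectedComponent ((T.deleteEdges {e}).connectedComponentMk v)
  let R : SimpleGraph (Fin m) := H.map σ.toEmbedding
  let ψ : H ≃g R := Iso.map σ H
  have hR : R.IsTree := ψ.isTree_iff.1 hH
  let t : RTree m := ⟨(R, σ ⟨v, h_self_mem⟩), hR⟩
  let q : RTreeClass m := Quotient.mk (rootedSetoid m) t
  refine ⟨q, h1, h2, ?_⟩
  have hq : (rootedSetoid m).r q.out t := Quotient.exact (Quotient.out_eq q)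
  obtain ⟨χ, hχ⟩ := hq
  refine ⟨χ.trans ψ.symm, ?_⟩
  have : ψ.symm (χ q.out.1.2) = (⟨v, h_self_mem⟩ : hC T e v) := by
    rw [hχ]
    exact σ.symm_apply_apply _
  exact congrArg Subtype.val this

theorem h_uniqClass {m : ℕ} {T : SimpleGraph V} {p : Sym2 V × V} {q q' : RTreeClass m}
    (h : IsRootedSubtree T p.1 p.2 q.out.1.1 q.out.1.2)
    (h' : IsRootedSubtree T p.1 p.2 q'.out.1.1 q'.out.1.2) : q = q' := by
  obtain ⟨-, -, φ, hφ⟩ := h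
  obtain ⟨-, -, ψ, hψ⟩ := h'
  rw [← Quotient.out_eq q, ← Quotient.out_eq q']
  refine Quotient.sound ?_
  refine ⟨φ.trans ψ.symm, ?_⟩
  have : φ q.out.1.2 = ψ q'.out.1.2 := Subtype.ext (hφ.trans hψ.symm)
  rw [RelIso.trans_apply, this, RelIso.symm_apply_apply]

/-- `p` is a rooted subtree of order `m`. -/
def hA (T : SimpleGraph V) (m : ℕ) (p : Sym2 V × V) : Prop :=
  p.1 ∈ T.edgeSet ∧ p.2 ∈ p.1 ∧ (hC T p.1 p.2).ncard = m

open Classical in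
theorem h_sumClass {m : ℕ} {T : SimpleGraph V} (hT : T.IsTree) (f : RTreeClass m → ℤ)
    (g : Sym2 V × V → ℕ)
    (hfg : ∀ q p, IsRootedSubtree T p.1 p.2 q.out.1.1 q.out.1.2 → f q = g p) :
    ∑ q : RTreeClass m, f q * (rhoClass T q : ℤ) =
      ((∑ p : Sym2 V × V, if hA T m p
        then g p else 0 : ℕ) : ℤ) := by
  have h1 : ∀ q : RTreeClass m, f q * (rhoClass T q : ℤ) = ∑ p : Sym2 V × V,
      if IsRootedSubtree T p.1 p.2 q.out.1.1 q.out.1.2 then (g p : ℤ) else 0 := by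
    intro q
    have : rhoClass T q = (Finset.univ.filter fun p : Sym2 V × V =>
        IsRootedSubtree T p.1 p.2 q.out.1.1 q.out.1.2).card := by
      unfold rhoClass rho
      rw [← Set.ncard_coe_finset]
      congr 1
      ext p
      simp
    rw [this, ← Finset.sum_filter, Finset.sum_congr rfl
      (fun p hp => (hfg q p (Finset.mem_filter.1 hp).2).symm), Finset.sum_const, nsmul_eq_mul,
      mul_comm]
  rw [Finset.sum_congr rfl (fun q _ => h1 q), Finset.sum_comm]
  push_cast
  refine Finset.sum_congr rfl fun p _ => ?_
  split_ifs with hp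
  · obtain ⟨q, hq⟩ := h_exClass hT hp.1 hp.2.1 hp.2.2
    rw [Finset.sum_eq_single q]
    · rw [if_pos hq]
    · intro q' _ hne
      rw [if_neg]
      exact fun h => hne (h_uniqClass h hq)
    · simp
  · refine Finset.sum_eq_zero fun q _ => ?_
    rw [if_neg]
    intro h
    exact hp ⟨h.1, h.2.1, h_isoCard h⟩

open Classical in
theorem h_triple (A : Sym2 V × V → Prop) (B : Sym2 V × V → V → Prop) (S : Set (Sym2 V × V))
    (huniq : ∀ e v v' w, A (e, v) → A (e, v') → B (e, v) w → B (e, v') w → v = v')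
    (hS : ∀ e w, (e, w) ∈ S ↔ ∃ v, A (e, v) ∧ B (e, v) w) :
    (∑ p : Sym2 V × V, if A p then Set.ncard {w | B p w} else 0) = S.ncard := by
  have h1 : S = (fun x : (_ : Sym2 V × V) × V => (x.1.1, x.2)) ''
      (((Finset.univ.filter A).sigma fun p => Finset.univ.filter (B p) : Finset _) : Set _) := by
    ext ⟨e, w⟩
    rw [hS]
    constructor
    · rintro ⟨v, h1, h2⟩
      exact ⟨⟨(e, v), w⟩, by simp [h1, h2], rfl⟩
    · rintro ⟨⟨⟨e', v⟩, w'⟩, h, heq⟩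
      simp only [Prod.mk.injEq] at heq
      obtain ⟨rfl, rfl⟩ := heq
      simp at h
      exact ⟨v, h⟩
  rw [h1, Set.InjOn.ncard_image, Set.ncard_coe_finset, Finset.card_sigma, Finset.sum_filter]
  · refine Finset.sum_congr rfl fun p _ => ?_
    congr 1
    rw [← Set.ncard_coe_finset]
    congr 1
    ext; simp
  · rintro ⟨⟨e, v⟩, w⟩ h ⟨⟨e', v'⟩, w'⟩ h' heq
    simp only [Prod.mk.injEq] at heq
    obtain ⟨rfl, rfl⟩ := heq
    simp at h h'
    obtain rfl := huniq _ _ _ _ h.1 h'.1 h.2 h'.2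
    rfl

end helpers3

/-- Lemma 1, equation (2): for a tree `T` of order `d` and `2 ≤ n < (d-1)/2`,
`c_{n,1} = ∑_R (L(T) - L₀(R))·ρ_R(T) + ∑_{R'} L(T_{R'})·ρ_{R'}(T)`,
the first sum over isomorphism classes of rooted trees of order `n`, the second over
isomorphism classes of rooted trees of order `n + 1`. -/
theorem cn1_formula {V : Type} [Fintype V] (T : SimpleGraph V) (hT : T.IsTree)
    (d : ℕ) (hd : Fintype.card V = d) (n : ℕ) (hn2 : 2 ≤ n) (hn : 2 * n + 1 < d) :
    (cCoeff T {d - n - 1, n, 1} : ℤ) =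
      (∑ q : RTreeClass n,
        ((leafCount T : ℤ) - (nonRootLeafCount q.out : ℤ)) * (rhoClass T q : ℤ)) +
      ∑ q : RTreeClass (n + 1),
        (leafCount q.out.1.1 : ℤ) * (rhoClass T q : ℤ) := by
  classical
  rw [h_sumClass hT _
    (fun p => Set.ncard {x | x ∉ hC T p.1 p.2 ∧ (T.neighborSet x).ncard = 1})
    (fun q p h => h_nonRoot hn2 hT h (h_isoCard h)),
    h_sumClass hT _ (fun p => Set.ncard
      {x | x ∈ hC T p.1 p.2 ∧ ((T.deleteEdges {p.1}).neighborSet x).ncard = 1})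
    (fun q p h => by rw [h_leafCount h]), h_count hT d hd n hn2 hn]
  have hcap : ∀ e v, e ∈ T.edgeSet → v ∈ e → ∀ w, w ∉ hC T e v →
      hC T e v = (hC T e w)ᶜ := by
    intro e v he hv w hw
    obtain ⟨a, b, rfl, -, ha, hCa, hb, hCb⟩ := h_ends hT he w
    rcases Sym2.mem_iff.1 hv with rfl | rfl
    · exact absurd (hCa ▸ h_self_mem) hw
    · exact hCb
  have hsame : ∀ e v v', e ∈ T.edgeSet → v ∈ e → v' ∈ e → hC T e v = hC T e v' → v = v' := by
    intro e v v' he hv hv' hE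
    obtain ⟨a, b, rfl, -, ha, hCa, hb, hCb⟩ := h_ends hT he v
    have ha' : a ∈ hC T s(a, b) v' := hE ▸ ha
    have hb' : b ∉ hC T s(a, b) v' := hE ▸ hb
    rcases Sym2.mem_iff.1 hv with rfl | rfl
    · rcases Sym2.mem_iff.1 hv' with rfl | rfl
      · rfl
      · exact absurd h_self_mem hb'
    · exact absurd h_self_mem hb
  rw [h_triple (hA T n) (fun p x => x ∉ hC T p.1 p.2 ∧ (T.neighborSet x).ncard = 1)
    {p | p.1 ∈ T.edgeSet ∧ (T.neighborSet p.2).ncard = 1 ∧ (hC T p.1 p.2).ncard = d - n},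
    h_triple (hA T (n + 1)) (fun p x => x ∈ hC T p.1 p.2 ∧
      ((T.deleteEdges {p.1}).neighborSet x).ncard = 1)
    {p | p.1 ∈ T.edgeSet ∧ ((T.deleteEdges {p.1}).neighborSet p.2).ncard = 1 ∧
      (hC T p.1 p.2).ncard = n + 1}]
  · rw [← Nat.cast_add, ← Set.ncard_union_eq]
    · congr 2
      ext p
      simp only [hS, Set.mem_ofPred_eq, Set.mem_union]
      tauto
    · rw [Set.disjoint_left]
      rintro p ⟨-, -, h1⟩ ⟨-, -, h2⟩
      omega
  · intro e v v' w h1 h2 h3 h4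
    exact hsame e v v' h1.1 h1.2.1 h2.2.1 ((h_hC_eq h3.1).symm.trans (h_hC_eq h4.1))
  · intro e w
    constructor
    · rintro ⟨h1, h2, h3⟩
      obtain ⟨a, b, hab, -, ha, hCa, hb, hCb⟩ := h_ends hT h1 w
      simp only at h1 h2 h3
      refine ⟨a, ⟨h1, by rw [hab]; simp, by rw [← h3, ← hCa]⟩, ?_, h2⟩
      simp only at hCa ⊢
      rw [hCa]; exact h_self_mem
    · rintro ⟨v, ⟨h1, h2, h3⟩, h4, h5⟩
      refine ⟨h1, h5, ?_⟩
      rw [← h3]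
      exact congrArg Set.ncard (h_hC_eq h4)
  · intro e v v' w h1 h2 h3 h4
    exact hsame e v v' h1.1 h1.2.1 h2.2.1
      ((hcap e v h1.1 h1.2.1 w h3.1).trans (hcap e v' h1.1 h2.2.1 w h4.1).symm)
  · intro e w
    have hcc := h_ncard_compl (hC T e w)
    constructor
    · rintro ⟨h1, h2, h3⟩
      obtain ⟨a, b, hab, -, ha, hCa, hb, hCb⟩ := h_ends hT h1 w
      simp only at h1 h2 h3 hCb hb
      refine ⟨b, ⟨h1, by rw [hab]; simp, ?_⟩, ?_, h2⟩
      · simp only; rw [hCb]; omega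
      · simp only; rw [hCb]; exact fun h => h h_self_mem
    · rintro ⟨v, ⟨h1, h2, h3⟩, h4, h5⟩
      refine ⟨h1, h5, ?_⟩
      simp only at h3 ⊢
      rw [hcap e v h1 h2 w h4] at h3
      omega
end

section
/- If T₁ and T₂ are 2-spiders of the same order d such that c_λ(T₁) = c_λ(T₂) for every partition λ of d (equivalently, such that T₁ and T₂ have equal chromatic symmetric functions), then T₁ and T₂ are isomorphic as graphs. -/
open SimpleGraph

/-- The order of the "leg" of `T` at `u` hanging off the vertex `t`: the number of vertices
of the connected component of `u` after deleting the edge `{t, u}`. -/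
noncomputable def legOrder {V : Type} (T : SimpleGraph V) (t u : V) : ℕ :=
  ((T.deleteEdges {s(t, u)}).connectedComponentMk u).supp.ncard

/-- The leg of `T` at `u` (hanging off `t`) is a 1-leg: the component of `u` in `T − t`,
rooted at `u`, is isomorphic to some `R_{n,1}`, i.e. a path rooted at a leaf. -/
def IsOneLegAt {V : Type} (T : SimpleGraph V) (t u : V) : Prop :=
  ∃ n : ℕ, ∃ h : 0 < n, IsRootedSubtree T s(t, u) u (SimpleGraph.pathGraph n) ⟨0, h⟩

/-- The leg of `T` at `u` (hanging off `t`) is a 2-leg: the component of `u` in `T − t`,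
rooted at `u`, is isomorphic to some `R_{n,2}` with `n ≥ 3`. -/
def IsTwoLegAt {V : Type} (T : SimpleGraph V) (t u : V) : Prop :=
  ∃ n : ℕ, ∃ h : 3 ≤ n, IsRootedSubtree T s(t, u) u (Rtwo n) ⟨0, by omega⟩

/-- `T` is a 2-spider with torso `t`: `T` is a tree, `t` has degree at least 3, and every
connected component of `T − t`, rooted at its vertex adjacent to `t`, is isomorphic as a
rooted tree to some `R_{n,1}` (a 1-leg) or to some `R_{n,2}` with `n ≥ 3` (a 2-leg). -/
def IsTwoSpiderWithTorso {V : Type} (T : SimpleGraph V) (t : V) : Prop :=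
  T.IsTree ∧ 3 ≤ (T.neighborSet t).ncard ∧
    ∀ u : V, T.Adj t u → IsOneLegAt T t u ∨ IsTwoLegAt T t u

/-- `T` is a 2-spider. -/
def IsTwoSpider {V : Type} (T : SimpleGraph V) : Prop :=
  ∃ t : V, IsTwoSpiderWithTorso T t

/-- `T`, as a 2-spider with torso `t`, has exactly three legs, two of which have order one. -/
def ThreeLegsTwoSingletons {V : Type} (T : SimpleGraph V) (t : V) : Prop :=
  (T.neighborSet t).ncard = 3 ∧
  ∃ u₁ u₂ : V, u₁ ≠ u₂ ∧ T.Adj t u₁ ∧ T.Adj t u₂ ∧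
    legOrder T t u₁ = 1 ∧ legOrder T t u₂ = 1

section PartOne
open Classical

/-- A rooted tree on `Option X` (root `none`), given by a parent function. -/
structure RT (X : Type) where
  p : X → Option X
  h : X → ℕ
  le : X → X → Prop
  hlt : ∀ x y, p x = some y → h y < h x
  le_iff : ∀ x y, le x y ↔ x = y ∨ ∃ z, p x = some z ∧ le z y

namespace RT
variable {X : Type}

/-- nearest ancestor-or-self in the cut set -/
noncomputable def topX (R : RT X) (C : Finset X) (x : X) : Option X :=
  if x ∈ C then some x else
    match hp : R.p x with
    | none => none
    | some y => R.topX C y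
termination_by R.h x
decreasing_by exact R.hlt _ _ hp

/-- extension of `topX` to the root -/
noncomputable def top (R : RT X) (C : Finset X) (o : Option X) : Option X := o.bind (R.topX C)

theorem topX_mem (R : RT X) {C : Finset X} {x : X} (hx : x ∈ C) : R.topX C x = some x := by
  unfold topX; simp [hx]

theorem topX_notMem (R : RT X) {C : Finset X} {x : X} (hx : x ∉ C) :
    R.topX C x = R.top C (R.p x) := by
  rw [topX, if_neg hx, top]
  split <;> simp_all

@[simp] theorem top_none (R : RT X) (C : Finset X) : R.top C none = none := rfl
@[simp] theorem top_some (R : RT X) (C : Finset X) (x : X) : R.top C (some x) = R.topX C x := rfl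

theorem top_induct (R : RT X) (P : X → Prop)
    (H : ∀ x, (∀ y, R.p x = some y → P y) → P x) : ∀ x, P x := by
  intro x
  induction hn : R.h x using Nat.strong_induction_on generalizing x with
  | _ n ih =>
    exact H x fun y hy => ih _ (hn ▸ R.hlt _ _ hy) y rfl

theorem topX_mem_insertNone (R : RT X) (C : Finset X) (x : X) :
    R.topX C x ∈ Finset.insertNone C := by
  induction x using R.top_induct with
  | H x ih =>
    by_cases hx : x ∈ C
    · rw [R.topX_mem hx]; simpa using hx
    · rw [R.topX_notMem hx]
      cases hp : R.p x with
      | none => simp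
      | some y => exact ih y hp

theorem top_mem_insertNone (R : RT X) (C : Finset X) (o : Option X) :
    R.top C o ∈ Finset.insertNone C := by
  cases o with
  | none => simp
  | some x => exact R.topX_mem_insertNone C x

theorem top_of_mem (R : RT X) (C : Finset X) (o : Option X) (ho : o ∈ Finset.insertNone C) :
    R.top C o = o := by
  cases o with
  | none => simp
  | some x => exact R.topX_mem (by simpa using ho)

theorem le_refl (R : RT X) (x : X) : R.le x x := (R.le_iff x x).2 (Or.inl rfl)

theorem le_h (R : RT X) {x y : X} (hxy : R.le x y) : x = y ∨ R.h y < R.h x := by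
  induction x using R.top_induct with
  | H x ih =>
    rcases (R.le_iff x y).1 hxy with h | ⟨z, hz, hzy⟩
    · exact Or.inl h
    · have := R.hlt _ _ hz
      rcases ih z hz hzy with h | h
      · subst h; exact Or.inr this
      · exact Or.inr (h.trans this)

theorem le_antisymm (R : RT X) {x y : X} (hxy : R.le x y) (hyx : R.le y x) : x = y := by
  rcases R.le_h hxy with h | h
  · exact h
  · rcases R.le_h hyx with h' | h'
    · exact h'.symm
    · omega

theorem topX_eq_some (R : RT X) (C : Finset X) (x c : X) :
    R.topX C x = some c ↔ c ∈ C ∧ R.le x c ∧ ∀ c' ∈ C, R.le x c' → R.le c c' := by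
  induction x using R.top_induct with
  | H x ih =>
    by_cases hx : x ∈ C
    · rw [R.topX_mem hx]
      constructor
      · intro h
        cases h
        exact ⟨hx, R.le_refl _, fun c' _ h => h⟩
      · rintro ⟨h1, h2, h3⟩
        rw [R.le_antisymm h2 (h3 x hx (R.le_refl x))]
    · have key : ∀ c ∈ C, (R.le x c ↔ ∃ z, R.p x = some z ∧ R.le z c) := by
        intro c hc
        rw [R.le_iff]
        refine or_iff_right ?_
        rintro rfl; exact hx hc
      rw [R.topX_notMem hx]
      cases hp : R.p x with
      | none =>
        simp only [top_none, reduceCtorEq, false_iff]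
        rintro ⟨h1, h2, -⟩
        rw [key c h1, hp] at h2
        simp at h2
      | some y =>
        rw [top_some, ih y hp]
        have key' : ∀ c ∈ C, (R.le x c ↔ R.le y c) := by
          intro c hc
          rw [key c hc, hp]; simp
        constructor
        · rintro ⟨h1, h2, h3⟩
          exact ⟨h1, (key' c h1).2 h2, fun c' hc' h => h3 c' hc' ((key' c' hc').1 h)⟩
        · rintro ⟨h1, h2, h3⟩
          exact ⟨h1, (key' c h1).1 h2, fun c' hc' h => h3 c' hc' ((key' c' hc').2 h)⟩

variable [Fintype X]

/-- fiber size -/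
noncomputable def fib (R : RT X) (C : Finset X) (c : Option X) : ℕ :=
  (Finset.univ.filter fun o : Option X => R.top C o = c).card

/-- multiset of component sizes -/
noncomputable def sizes (R : RT X) (C : Finset X) : Multiset ℕ :=
  (Finset.insertNone C).val.map (R.fib C)

/-- The graph `T` is presented by the rooted tree `R` via `e`. -/
def Pres {V : Type} (R : RT X) (T : SimpleGraph V) (e : Option X ≃ V) : Prop :=
  ∀ a b, T.Adj (e a) (e b) ↔ (∃ x, a = some x ∧ R.p x = b) ∨ (∃ x, b = some x ∧ R.p x = a)

end RT

theorem compSizes_eq {V W : Type} [Fintype V] (H : SimpleGraph V) (f : V → W) (S : Finset W)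
    (g : W → V) (hg : ∀ c ∈ S, f (g c) = c) (hS : ∀ v, f v ∈ S)
    (hf : ∀ u v, H.Reachable u v ↔ f u = f v) :
    compSizes H = S.val.map (fun c => (Finset.univ.filter fun v => f v = c).card) := by
  unfold compSizes
  have h1 : (Finset.univ.image H.connectedComponentMk) =
      S.image (fun c => H.connectedComponentMk (g c)) := by
    ext c
    simp only [Finset.mem_image, Finset.mem_univ, true_and]
    constructor
    · rintro ⟨v, rfl⟩
      refine ⟨f v, hS v, ?_⟩
      rw [SimpleGraph.ConnectedComponent.eq, hf, hg _ (hS v)]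
    · rintro ⟨c, -, rfl⟩
      exact ⟨_, rfl⟩
  have h2 : Set.InjOn (fun c => H.connectedComponentMk (g c)) (S : Set W) := by
    intro a ha b hb hab
    simp only [SimpleGraph.ConnectedComponent.eq, hf] at hab
    rwa [hg a ha, hg b hb] at hab
  have h3 : (Finset.univ.image H.connectedComponentMk).val =
      S.val.map (fun c => H.connectedComponentMk (g c)) := by
    rw [h1]
    exact Finset.image_val_of_injOn h2
  have h4 : ∀ (inst : DecidableEq H.ConnectedComponent),
      (@Finset.image _ _ inst H.connectedComponentMk Finset.univ).val =
      S.val.map (fun c => H.connectedComponentMk (g c)) := by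
    intro inst
    rw [← h3]; congr!
  simp only [h4, Multiset.map_map]
  refine Multiset.map_congr rfl ?_
  intro c hc
  simp only [Function.comp]
  rw [← Set.ncard_coe_finset]
  congr 1
  ext v
  simp only [SimpleGraph.ConnectedComponent.mem_supp_iff, SimpleGraph.ConnectedComponent.eq, hf,
    hg c hc, Finset.coe_filter, Finset.mem_univ, true_and, Set.mem_setOf_eq]

namespace RT
variable {X : Type} [Fintype X]

theorem reach_iff {V : Type} (R : RT X) (e : Option X ≃ V)
    (C : Finset X) (u v : V) :
    (SimpleGraph.fromEdgeSet ((fun x => s(e (some x), e (R.p x))) '' {x | x ∉ C})).Reachable u v ↔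
      R.top C (e.symm u) = R.top C (e.symm v) := by
  set H := SimpleGraph.fromEdgeSet ((fun x => s(e (some x), e (R.p x))) '' {x | x ∉ C}) with hH
  have hstep : ∀ x, x ∉ C → H.Adj (e (some x)) (e (R.p x)) := by
    intro x hx
    rw [hH, SimpleGraph.fromEdgeSet_adj]
    refine ⟨⟨x, hx, rfl⟩, ?_⟩
    intro h
    have := R.hlt x x (e.injective h).symm
    omega
  have hadj : ∀ u v, H.Adj u v → R.top C (e.symm u) = R.top C (e.symm v) := by
    intro u v huv
    rw [hH, SimpleGraph.fromEdgeSet_adj] at huv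
    obtain ⟨⟨x, hx, hxe⟩, -⟩ := huv
    have hx' : x ∉ C := hx
    simp only [Sym2.eq_iff] at hxe
    rcases hxe with ⟨rfl, rfl⟩ | ⟨rfl, rfl⟩ <;> simp [R.topX_notMem hx']
  have hup : ∀ o, H.Reachable (e o) (e (R.top C o)) := by
    intro o
    cases o with
    | none => exact SimpleGraph.Reachable.refl _
    | some x =>
      induction x using R.top_induct with
      | H x ih =>
        by_cases hx : x ∈ C
        · rw [top_some, R.topX_mem hx]
        · have h1 := (hstep x hx).reachable
          rw [top_some, R.topX_notMem hx]
          cases hp : R.p x with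
          | none => rw [hp] at h1; exact h1
          | some y => rw [hp] at h1; exact h1.trans (ih y hp)
  constructor
  · rintro ⟨w⟩
    induction w with
    | nil => rfl
    | cons h _ ih => exact (hadj _ _ h).trans ih
  · intro h
    have h1 := hup (e.symm u)
    have h2 := hup (e.symm v)
    rw [h] at h1
    simpa using h1.trans h2.symm

theorem edge_inj {V : Type} (R : RT X) (e : Option X ≃ V) :
    Function.Injective (fun x => s(e (some x), e (R.p x))) := by
  intro x y hxy
  simp only [Sym2.eq_iff, e.injective.eq_iff, Option.some.injEq] at hxy
  rcases hxy with ⟨h, -⟩ | ⟨h1, h2⟩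
  · exact h
  · have := R.hlt _ _ h1.symm
    have := R.hlt _ _ h2
    omega

theorem cCoeff_eq {V : Type} [Fintype V] (R : RT X) (T : SimpleGraph V) (e : Option X ≃ V)
    (hp : R.Pres T e) (lam : Multiset ℕ) :
    cCoeff T lam = (Finset.univ.filter fun C : Finset X => R.sizes C = lam).card := by
  have hE : T.edgeSet = Set.range (fun x => s(e (some x), e (R.p x))) := by
    ext q
    induction q using Sym2.ind with
    | _ u v =>
      obtain ⟨a, rfl⟩ := e.surjective u
      obtain ⟨b, rfl⟩ := e.surjective v
      rw [SimpleGraph.mem_edgeSet, hp]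
      simp only [Set.mem_range, Sym2.eq_iff, e.injective.eq_iff]
      constructor
      · rintro (⟨x, rfl, rfl⟩ | ⟨x, rfl, rfl⟩)
        · exact ⟨x, Or.inl ⟨rfl, rfl⟩⟩
        · exact ⟨x, Or.inr ⟨rfl, rfl⟩⟩
      · rintro ⟨x, ⟨rfl, rfl⟩ | ⟨rfl, rfl⟩⟩
        · exact Or.inl ⟨x, rfl, rfl⟩
        · exact Or.inr ⟨x, rfl, rfl⟩
  have hsz : ∀ C : Finset X, compSizes (SimpleGraph.fromEdgeSet
      ((fun x => s(e (some x), e (R.p x))) '' {x | x ∉ C})) = R.sizes C := by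
    intro C
    rw [compSizes_eq _ (fun v => R.top C (e.symm v)) (Finset.insertNone C) e
      (fun c hc => by simpa using R.top_of_mem C c hc)
      (fun v => R.top_mem_insertNone C _) (R.reach_iff e C)]
    unfold sizes
    refine Multiset.map_congr rfl ?_
    intro c _
    unfold fib
    refine Finset.card_bij (fun v _ => e.symm v) ?_ ?_ ?_
    · intro v hv; simpa using hv
    · intro a _ b _ h; exact e.symm.injective h
    · intro o ho
      exact ⟨e o, by simpa using ho, by simp⟩
  unfold cCoeff
  rw [← Set.ncard_coe_finset]
  symm
  refine Set.ncard_congr (fun C _ => (fun x => s(e (some x), e (R.p x))) '' {x | x ∉ C}) ?_ ?_ ?_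
  · intro C hC
    refine ⟨?_, ?_⟩
    · rw [hE]; exact Set.image_subset_range _ _
    · rw [hsz]; simpa using hC
  · intro C D _ _ h
    have := (R.edge_inj e).image_injective h
    ext x
    have := Set.ext_iff.1 this x
    simp only [Set.mem_setOf_eq] at this
    tauto
  · rintro F ⟨hF, hl⟩
    rw [hE] at hF
    have hFe : (fun x => s(e (some x), e (R.p x))) ''
        {x | x ∉ (Finset.univ.filter fun x => s(e (some x), e (R.p x)) ∉ F)} = F := by
      ext q
      constructor
      · rintro ⟨x, hx, rfl⟩
        simpa using hx
      · intro hq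
        obtain ⟨x, rfl⟩ := hF hq
        exact ⟨x, by simpa using hq, rfl⟩
    refine ⟨_, ?_, hFe⟩
    simp only [Finset.coe_filter, Finset.mem_univ, true_and, Set.mem_setOf_eq]
    rw [← hsz, hFe, hl]

end RT
end PartOne

section PartTwo
open Classical

theorem ms_pair (a b q r : ℕ) : (({a, b} : Multiset ℕ) = {q, r}) ↔
    (a = q ∧ b = r) ∨ (a = r ∧ b = q) := by
  constructor
  · intro h
    simp only [Multiset.insert_eq_cons] at h
    rw [Multiset.cons_eq_cons] at h
    rcases h with ⟨h1, h2⟩ | ⟨h1, cs, h2, h3⟩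
    · exact Or.inl ⟨h1, by simpa using h2⟩
    · right
      have hc : cs = 0 := by
        have := congrArg Multiset.card h2
        simp at this
        exact this
      subst hc
      simp at h2 h3
      exact ⟨h3.symm, h2⟩
  · rintro (⟨rfl, rfl⟩ | ⟨rfl, rfl⟩)
    · rfl
    · exact Multiset.pair_comm _ _

theorem ms_triple (c a b p q r : ℕ) (ha : a < p) (hb : b < p) :
    ((c ::ₘ {a, b} : Multiset ℕ) = p ::ₘ {q, r}) ↔
    c = p ∧ ((a = q ∧ b = r) ∨ (a = r ∧ b = q)) := by
  rw [← ms_pair]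
  constructor
  · intro h
    have h1 : p ∈ (c ::ₘ {a, b} : Multiset ℕ) := by rw [h]; simp
    have h2 : c = p := by
      simp only [Multiset.insert_eq_cons, Multiset.mem_cons, Multiset.mem_singleton] at h1
      omega
    subst h2
    exact ⟨rfl, by simpa using h⟩
  · rintro ⟨rfl, h⟩
    rw [h]

theorem ms_ones (s : Multiset ℕ) (h1 : ∀ b ∈ s, 1 ≤ b) (h2 : s.sum = Multiset.card s) :
    s = Multiset.replicate (Multiset.card s) 1 := by
  rw [Multiset.eq_replicate]
  refine ⟨rfl, fun b hb => ?_⟩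
  obtain ⟨t, rfl⟩ := Multiset.exists_cons_of_mem hb
  have := Multiset.card_nsmul_le_sum (s := t) (a := 1) (fun x hx => h1 x (by simp [hx]))
  simp at this h2
  have := h1 b hb
  omega

theorem card_pairs {X : Type} [Fintype X] (Q : X → X → Prop) (hQ : ∀ x y, Q x y → ¬ Q y x)
    [DecidablePred fun q : X × X => Q q.1 q.2] :
    (Finset.univ.filter fun C : Finset X => ∃ x y, Q x y ∧ C = {x, y}).card =
    (Finset.univ.filter fun q : X × X => Q q.1 q.2).card := by
  symm
  refine Finset.card_bij (fun q _ => {q.1, q.2}) ?_ ?_ ?_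
  · rintro ⟨x, y⟩ h
    simp only [Finset.mem_filter, Finset.mem_univ, true_and] at h ⊢
    exact ⟨x, y, h, rfl⟩
  · rintro ⟨x, y⟩ h ⟨x', y'⟩ h' hE
    simp only [Finset.mem_filter, Finset.mem_univ, true_and] at h h'
    simp only at hE
    have e1 := Finset.ext_iff.1 hE x
    have e2 := Finset.ext_iff.1 hE y
    have e3 := Finset.ext_iff.1 hE x'
    have e4 := Finset.ext_iff.1 hE y'
    simp at e1 e2 e3 e4
    have := hQ _ _ h
    have := hQ _ _ h'
    have hne : x ≠ y := by rintro rfl; exact hQ _ _ h h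
    have hne : x' ≠ y' := by rintro rfl; exact hQ _ _ h' h'
    rcases e1 with rfl | rfl <;> rcases e2 with rfl | rfl <;> simp_all
  · intro C hC
    simp only [Finset.mem_filter, Finset.mem_univ, true_and] at hC
    obtain ⟨x, y, h, rfl⟩ := hC
    exact ⟨(x, y), by simpa using h, rfl⟩

namespace RT
variable {X : Type}

theorem le_trans (R : RT X) {x y z : X} (hxy : R.le x y) (hyz : R.le y z) : R.le x z := by
  induction x using R.top_induct with
  | H x ih =>
    rcases (R.le_iff x y).1 hxy with h | ⟨v, hv, hvy⟩
    · rwa [h]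
    · exact (R.le_iff x z).2 (Or.inr ⟨v, hv, ih v hv hvy⟩)

theorem le_up (R : RT X) {v x y : X} (hx : R.le v x) (hy : R.le v y) : R.le x y ∨ R.le y x := by
  induction v using R.top_induct with
  | H v ih =>
    rcases (R.le_iff v x).1 hx with h | ⟨z, hz, hzx⟩
    · subst h; exact Or.inl hy
    · rcases (R.le_iff v y).1 hy with h | ⟨z', hz', hzy⟩
      · subst h; exact Or.inr hx
      · rw [hz] at hz'
        cases hz'
        exact ih z hz hzx hzy

variable [Fintype X]

/-- number of descendants -/
noncomputable def w (R : RT X) (x : X) : ℕ := (Finset.univ.filter fun v => R.le v x).card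

theorem w_pos (R : RT X) (x : X) : 1 ≤ R.w x :=
  Finset.card_pos.2 ⟨x, by simp [R.le_refl]⟩

theorem w_le (R : RT X) (x : X) : R.w x ≤ Fintype.card X := Finset.card_le_univ _

theorem fib_some (R : RT X) (C : Finset X) (c : X) :
    R.fib C (some c) = (Finset.univ.filter fun x => R.topX C x = some c).card := by
  unfold fib
  symm
  refine Finset.card_bij (fun x _ => some x) ?_ ?_ ?_
  · intro x hx; simpa using hx
  · intro a _ b _ h; exact Option.some.inj h
  · intro o ho
    cases o with
    | none => simp at ho
    | some x => exact ⟨x, by simpa using ho, rfl⟩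

theorem sizes_cons (R : RT X) (C : Finset X) :
    R.sizes C = R.fib C none ::ₘ C.val.map (fun c => R.fib C (some c)) := by
  unfold sizes
  have : (Finset.insertNone C).val = none ::ₘ C.val.map some := rfl
  rw [this, Multiset.map_cons, Multiset.map_map]
  rfl

theorem sizes_card (R : RT X) (C : Finset X) : Multiset.card (R.sizes C) = C.card + 1 := by
  rw [sizes_cons]; simp

theorem sizes_sum (R : RT X) (C : Finset X) : (R.sizes C).sum = Fintype.card X + 1 := by
  have h : (Finset.univ : Finset (Option X)).card = ∑ c ∈ Finset.insertNone C, R.fib C c :=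
    Finset.card_eq_sum_card_fiberwise (fun o _ => R.top_mem_insertNone C o)
  rw [Finset.card_univ, Fintype.card_option] at h
  rw [h]; rfl

theorem sizes_pos (R : RT X) (C : Finset X) : ∀ i ∈ R.sizes C, 1 ≤ i := by
  intro i hi
  unfold sizes at hi
  rw [Multiset.mem_map] at hi
  obtain ⟨c, hc, rfl⟩ := hi
  exact Finset.card_pos.2 ⟨c, by simpa using R.top_of_mem C c hc⟩

theorem sizes_single (R : RT X) (x : X) :
    R.sizes {x} = {Fintype.card X + 1 - R.w x, R.w x} := by
  have h1 := R.sizes_sum {x}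
  have h2 : R.fib {x} (some x) = R.w x := by
    rw [fib_some]; unfold w
    congr 1; ext v; simp [topX_eq_some, R.le_refl]
  rw [sizes_cons] at h1 ⊢
  simp [h2] at h1 ⊢
  rw [← h1]; simp

theorem sizes_nested (R : RT X) {x y : X} (hne : x ≠ y) (hxy : R.le x y) :
    R.sizes {x, y} = (Fintype.card X + 1 - R.w y) ::ₘ {R.w x, R.w y - R.w x} ∧ R.w x < R.w y := by
  have hyx : ¬ R.le y x := fun h => hne (R.le_antisymm hxy h)
  have h1 := R.sizes_sum {x, y}
  have h2 : R.fib {x, y} (some x) = R.w x := by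
    rw [fib_some]; unfold w
    congr 1; ext v
    simp only [topX_eq_some, Finset.mem_filter, Finset.mem_univ, true_and, Finset.mem_insert,
      Finset.mem_singleton, forall_eq_or_imp, forall_eq]
    have := R.le_refl x
    tauto
  have hsub : (Finset.univ.filter fun v => R.le v x) ⊂ (Finset.univ.filter fun v => R.le v y) := by
    rw [Finset.ssubset_iff_of_subset]
    · exact ⟨y, by simp [R.le_refl], by simp [hyx]⟩
    · intro v hv
      simp only [Finset.mem_filter, Finset.mem_univ, true_and] at hv ⊢
      exact R.le_trans hv hxy
  have h3 : R.fib {x, y} (some y) = R.w y - R.w x := by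
    rw [fib_some]; unfold w
    rw [← Finset.card_sdiff_of_subset hsub.subset]
    congr 1; ext v
    simp only [topX_eq_some, Finset.mem_filter, Finset.mem_univ, true_and, Finset.mem_insert,
      Finset.mem_singleton, forall_eq_or_imp, forall_eq, Finset.mem_sdiff]
    have := R.le_refl y
    tauto
  have hlt : R.w x < R.w y := Finset.card_lt_card hsub
  refine ⟨?_, hlt⟩
  have hv : ({x, y} : Finset X).val = x ::ₘ {y} := by
    rw [Finset.insert_val_of_notMem (by simpa using hne)]; rfl
  rw [sizes_cons, hv] at h1 ⊢
  simp only [Multiset.map_cons, Multiset.map_singleton, h2, h3, Multiset.sum_cons,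
    Multiset.sum_singleton] at h1 ⊢
  congr 1
  omega

theorem sizes_disj (R : RT X) {x y : X} (hxy : ¬ R.le x y) (hyx : ¬ R.le y x) :
    R.sizes {x, y} = (Fintype.card X + 1 - R.w x - R.w y) ::ₘ {R.w x, R.w y} ∧
      R.w x + R.w y ≤ Fintype.card X := by
  have hne : x ≠ y := by rintro rfl; exact hxy (R.le_refl x)
  have h1 := R.sizes_sum {x, y}
  have hpos := R.sizes_pos {x, y} (R.fib {x, y} none) (by rw [sizes_cons]; simp)
  have h2 : R.fib {x, y} (some x) = R.w x := by
    rw [fib_some]; unfold w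
    congr 1; ext v
    simp only [topX_eq_some, Finset.mem_filter, Finset.mem_univ, true_and, Finset.mem_insert,
      Finset.mem_singleton, forall_eq_or_imp, forall_eq]
    have := R.le_refl x
    have := R.le_up (v := v) (x := x) (y := y)
    tauto
  have h3 : R.fib {x, y} (some y) = R.w y := by
    rw [fib_some]; unfold w
    congr 1; ext v
    simp only [topX_eq_some, Finset.mem_filter, Finset.mem_univ, true_and, Finset.mem_insert,
      Finset.mem_singleton, forall_eq_or_imp, forall_eq]
    have := R.le_refl y
    have := R.le_up (v := v) (x := x) (y := y)
    tauto
  have hv : ({x, y} : Finset X).val = x ::ₘ {y} := by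
    rw [Finset.insert_val_of_notMem (by simpa using hne)]; rfl
  rw [sizes_cons, hv] at h1 ⊢
  simp only [Multiset.map_cons, Multiset.map_singleton, h2, h3, Multiset.sum_cons,
    Multiset.sum_singleton] at h1 ⊢
  refine ⟨?_, by omega⟩
  congr 1
  omega

/-- number of edges with outer size `k` -/
noncomputable def a (R : RT X) (k : ℕ) : ℕ := (Finset.univ.filter fun x => R.w x = k).card

theorem count_two (R : RT X) (k : ℕ) (hk : k ≤ Fintype.card X) :
    (Finset.univ.filter fun C : Finset X => R.sizes C = {Fintype.card X + 1 - k, k}).card =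
    (Finset.univ.filter fun x => R.w x = k ∨ R.w x = Fintype.card X + 1 - k).card := by
  symm
  refine Finset.card_bij (fun x _ => {x}) ?_ ?_ ?_
  · intro x hx
    simp only [Finset.mem_filter, Finset.mem_univ, true_and] at hx ⊢
    rw [sizes_single, ms_pair]
    have := R.w_le x
    omega
  · intro x _ y _ h; simpa using h
  · intro C hC
    simp only [Finset.mem_filter, Finset.mem_univ, true_and] at hC
    have h1 := congrArg Multiset.card hC
    rw [sizes_card] at h1
    simp at h1
    obtain ⟨x, rfl⟩ := Finset.card_eq_one.1 h1
    refine ⟨x, ?_, rfl⟩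
    rw [sizes_single, ms_pair] at hC
    simp only [Finset.mem_filter, Finset.mem_univ, true_and]
    have := R.w_le x
    omega

theorem count_three (R : RT X) (k : ℕ) (hk : 4 ≤ k) (hkd : 2 * k < Fintype.card X + 1)
    (hw : ∀ x, R.w x < Fintype.card X + 1 - k) :
    (Finset.univ.filter fun C : Finset X =>
      R.sizes C = (Fintype.card X + 1 - k) ::ₘ {1, k - 1}).card =
    (Finset.univ.filter fun q : X × X =>
      (R.w q.1 = 1 ∧ R.w q.2 = k - 1 ∧ ¬ R.le q.1 q.2) ∨
      (R.le q.1 q.2 ∧ R.w q.2 = k ∧ (R.w q.1 = 1 ∨ R.w q.1 = k - 1))).card := by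
  rw [← card_pairs (fun x y => (R.w x = 1 ∧ R.w y = k - 1 ∧ ¬ R.le x y) ∨
      (R.le x y ∧ R.w y = k ∧ (R.w x = 1 ∨ R.w x = k - 1)))]
  swap
  · intro x y h h'
    omega
  congr 1
  ext C
  simp only [Finset.mem_filter, Finset.mem_univ, true_and]
  have nest : ∀ x y, x ≠ y → R.le x y →
      (R.sizes {x, y} = (Fintype.card X + 1 - k) ::ₘ {1, k - 1} ↔
        R.w y = k ∧ (R.w x = 1 ∨ R.w x = k - 1)) := by
    intro x y hne hxy
    obtain ⟨h1, h2⟩ := R.sizes_nested hne hxy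
    have := hw y
    have := R.w_le y
    have := R.w_pos x
    rw [h1, ms_triple _ _ _ _ _ _ (by omega) (by omega)]
    omega
  have disj : ∀ x y, ¬ R.le x y → ¬ R.le y x →
      (R.sizes {x, y} = (Fintype.card X + 1 - k) ::ₘ {1, k - 1} ↔
        (R.w x = 1 ∧ R.w y = k - 1) ∨ (R.w y = 1 ∧ R.w x = k - 1)) := by
    intro x y hxy hyx
    obtain ⟨h1, h2⟩ := R.sizes_disj hxy hyx
    have := hw y
    have := hw x
    rw [h1, ms_triple _ _ _ _ _ _ (by omega) (by omega)]
    omega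
  constructor
  · intro h
    have h1 := congrArg Multiset.card h
    rw [sizes_card] at h1
    simp at h1
    obtain ⟨x, y, hne, rfl⟩ := Finset.card_eq_two.1 h1
    by_cases hxy : R.le x y
    · have := (nest x y hne hxy).1 h
      exact ⟨x, y, Or.inr ⟨hxy, this⟩, rfl⟩
    · by_cases hyx : R.le y x
      · rw [Finset.pair_comm] at h
        have := (nest y x hne.symm hyx).1 h
        exact ⟨y, x, Or.inr ⟨hyx, this⟩, Finset.pair_comm _ _⟩
      · rcases (disj x y hxy hyx).1 h with h' | h'
        · exact ⟨x, y, Or.inl ⟨h'.1, h'.2, hxy⟩, rfl⟩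
        · exact ⟨y, x, Or.inl ⟨h'.1, h'.2, hyx⟩, Finset.pair_comm _ _⟩
  · rintro ⟨x, y, h | h, rfl⟩
    · have hyx : ¬ R.le y x := by
        intro hyx
        have hne : y ≠ x := by rintro rfl; omega
        have := (R.sizes_nested hne hyx).2
        omega
      exact (disj x y h.2.2 hyx).2 (Or.inl ⟨h.1, h.2.1⟩)
    · have hne : x ≠ y := by rintro rfl; omega
      exact (nest x y hne h.1).2 h.2

theorem top_pair (R : RT X) {u v : X} (hne : u ≠ v) :
    R.topX {u, v}ᶜ u = R.topX {u, v}ᶜ v ↔ R.p u = some v ∨ R.p v = some u ∨ R.p u = R.p v := by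
  have hu : u ∉ ({u, v}ᶜ : Finset X) := by simp
  have hv : v ∉ ({u, v}ᶜ : Finset X) := by simp
  by_cases h1 : R.p u = some v
  · rw [R.topX_notMem hu, h1]; simp
  by_cases h2 : R.p v = some u
  · rw [R.topX_notMem hv, h2]; simp
  have hmem : ∀ x o, R.p x = o → o ≠ some u → o ≠ some v →
      R.top {u, v}ᶜ o = o := by
    intro x o _ h3 h4
    apply R.top_of_mem
    cases o with
    | none => simp
    | some z => simp at h3 h4 ⊢; exact ⟨h3, h4⟩
  have hself : ∀ x, R.p x ≠ some x := by
    intro x h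
    have := R.hlt _ _ h
    omega
  rw [R.topX_notMem hu, R.topX_notMem hv, hmem u _ rfl (hself u) h1, hmem v _ rfl h2 (hself v)]
  simp [h1, h2]

theorem three_mem (R : RT X) {u v : X} (hne : u ≠ v) :
    3 ∈ R.sizes {u, v}ᶜ ↔ R.topX {u, v}ᶜ u = R.topX {u, v}ᶜ v := by
  set C : Finset X := {u, v}ᶜ with hC
  have hmem : ∀ o : Option X, o ∈ Finset.insertNone C ↔ o ≠ some u ∧ o ≠ some v := by
    intro o
    cases o with
    | none => simp
    | some z => simp [hC]
  have hsub : ∀ c, (Finset.univ.filter fun o : Option X => R.top C o = c) ⊆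
      {c, some u, some v} := by
    intro c o ho
    simp only [Finset.mem_filter, Finset.mem_univ, true_and] at ho
    by_cases h : o ∈ Finset.insertNone C
    · rw [R.top_of_mem C o h] at ho
      simp [ho]
    · rw [hmem] at h
      simp only [Finset.mem_insert, Finset.mem_singleton]
      tauto
  have hcard : ∀ c ∈ Finset.insertNone C, ({c, some u, some v} : Finset (Option X)).card = 3 := by
    intro c hc
    rw [hmem] at hc
    exact Finset.card_eq_three.2 ⟨c, some u, some v, hc.1, hc.2, by simpa using hne, rfl⟩
  unfold sizes
  rw [Multiset.mem_map]
  constructor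
  · rintro ⟨c, hc, h3⟩
    have := Finset.eq_of_subset_of_card_le (hsub c) (by rw [hcard c hc]; exact h3.ge)
    have hu : some u ∈ (Finset.univ.filter fun o : Option X => R.top C o = c) := by
      rw [this]; simp
    have hv : some v ∈ (Finset.univ.filter fun o : Option X => R.top C o = c) := by
      rw [this]; simp
    simp at hu hv
    rw [hu, hv]
  · intro h
    have hc := R.topX_mem_insertNone C u
    refine ⟨R.topX C u, hc, ?_⟩
    rw [← hcard _ hc]
    unfold fib
    congr 1
    apply Finset.Subset.antisymm (hsub _)
    intro o ho
    simp only [Finset.mem_insert, Finset.mem_singleton] at ho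
    simp only [Finset.mem_filter, Finset.mem_univ, true_and]
    rcases ho with rfl | rfl | rfl
    · exact R.top_of_mem C _ hc
    · rfl
    · exact h.symm

theorem count_adj (R : RT X) (hN : 2 ≤ Fintype.card X) (idx : X → ℕ)
    (hidx : Function.Injective idx) :
    (Finset.univ.filter fun C : Finset X =>
      R.sizes C = 3 ::ₘ Multiset.replicate (Fintype.card X - 2) 1).card =
    (Finset.univ.filter fun q : X × X =>
      R.p q.1 = some q.2 ∨ (R.p q.1 = R.p q.2 ∧ idx q.1 < idx q.2)).card := by
  rw [← card_pairs (fun x y => R.p x = some y ∨ (R.p x = R.p y ∧ idx x < idx y))]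
  swap
  · rintro x y (h | h) (h' | h')
    · have := R.hlt _ _ h
      have := R.hlt _ _ h'
      omega
    · rw [← h'.1] at h
      have := R.hlt _ _ h
      omega
    · rw [← h.1] at h'
      have := R.hlt _ _ h'
      omega
    · omega
  have main : ∀ u v, u ≠ v → (R.sizes {u, v}ᶜ = 3 ::ₘ Multiset.replicate (Fintype.card X - 2) 1 ↔
      R.p u = some v ∨ R.p v = some u ∨ R.p u = R.p v) := by
    intro u v hne
    rw [← R.top_pair hne, ← R.three_mem hne]
    constructor
    · intro h; rw [h]; simp
    · intro h
      obtain ⟨s, hs⟩ := Multiset.exists_cons_of_mem h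
      have h1 := R.sizes_card {u, v}ᶜ
      have h2 := R.sizes_sum {u, v}ᶜ
      have h3 := R.sizes_pos {u, v}ᶜ
      rw [Finset.card_compl, Finset.card_pair hne] at h1
      rw [hs] at h1 h2 h3 ⊢
      simp at h1 h2
      have h4 := ms_ones s (fun b hb => h3 b (by simp [hb])) (by omega)
      rw [h1] at h4
      rw [← h4]
  symm
  refine Finset.card_bij (fun D _ => Dᶜ) ?_ ?_ ?_
  · intro D hD
    simp only [Finset.mem_filter, Finset.mem_univ, true_and] at hD ⊢
    obtain ⟨x, y, h, rfl⟩ := hD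
    have hne : x ≠ y := by
      rintro rfl
      rcases h with h | h
      · have := R.hlt _ _ h
        omega
      · omega
    rw [main x y hne]
    tauto
  · intro a _ b _ h; exact compl_injective h
  · intro C hC
    simp only [Finset.mem_filter, Finset.mem_univ, true_and] at hC
    refine ⟨Cᶜ, ?_, compl_compl C⟩
    have h1 := congrArg Multiset.card hC
    rw [sizes_card] at h1
    simp at h1
    have h2 : Cᶜ.card = 2 := by rw [Finset.card_compl]; omega
    obtain ⟨u, v, hne, huv⟩ := Finset.card_eq_two.1 h2
    have h3 : C = {u, v}ᶜ := by rw [← huv, compl_compl]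
    rw [h3, main u v hne] at hC
    simp only [Finset.mem_filter, Finset.mem_univ, true_and]
    rcases hC with h | h | h
    · exact ⟨u, v, Or.inl h, huv⟩
    · exact ⟨v, u, Or.inl h, by rw [huv, Finset.pair_comm]⟩
    · rcases lt_or_gt_of_ne (fun h' => hne (hidx h')) with h' | h'
      · exact ⟨u, v, Or.inr ⟨h, h'⟩, huv⟩
      · exact ⟨v, u, Or.inr ⟨h.symm, h'⟩, by rw [huv, Finset.pair_comm]⟩

end RT
end PartTwo

section PartThree
open Classical

theorem card_prod_filter {X Y : Type} [Fintype X] [Fintype Y] (φ : X → Y → Prop)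
    [DecidablePred fun q : X × Y => φ q.1 q.2] [∀ y, DecidablePred fun x => φ x y] :
    (Finset.univ.filter fun q : X × Y => φ q.1 q.2).card =
      ∑ y, (Finset.univ.filter fun x => φ x y).card := by
  simp only [Finset.card_filter]
  rw [Fintype.sum_prod_type_right]

/-- Leg data of a 2-spider. -/
structure SD where
  I : Type
  fin : Fintype I
  n : I → ℕ
  ty : I → Prop
  h1 : ∀ i, 1 ≤ n i
  h3 : ∀ i, ty i → 3 ≤ n i
  hI : 3 ≤ Fintype.card I

namespace SD

instance (S : SD) : Fintype S.I := S.fin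

/-- non-torso vertices -/
@[ext] structure X (S : SD) where
  i : S.I
  j : ℕ
  h : j < S.n i

noncomputable instance (S : SD) : Fintype S.X :=
  Fintype.ofInjective (β := Σ i : S.I, Fin (S.n i)) (fun x => ⟨x.i, ⟨x.j, x.h⟩⟩) (by
    rintro ⟨i, j, h⟩ ⟨i', j', h'⟩ hE
    simp only [Sigma.mk.injEq] at hE
    obtain ⟨rfl, hE⟩ := hE
    simp at hE
    subst hE
    rfl)

variable (S : SD)

theorem X_ext {S : SD} {x y : S.X} (h : x.i = y.i) (h' : x.j = y.j) : x = y := X.ext h h'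

/-- position of the parent -/
noncomputable def pj (i : S.I) (j : ℕ) : ℕ := if S.ty i ∧ j + 1 = S.n i then S.n i - 3 else j - 1

theorem pj_lt (i : S.I) (j : ℕ) (hj : j < S.n i) : S.pj i j < S.n i := by
  have := S.h3 i
  unfold pj
  split_ifs <;> omega

/-- parent function -/
noncomputable def par (x : S.X) : Option S.X :=
  if x.j = 0 then none else some ⟨x.i, S.pj x.i x.j, S.pj_lt _ _ x.h⟩

theorem par_none (x : S.X) : S.par x = none ↔ x.j = 0 := by
  unfold par; split_ifs with h <;> simp [h]

theorem par_some (x y : S.X) :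
    S.par x = some y ↔ x.j ≠ 0 ∧ x.i = y.i ∧ S.pj x.i x.j = y.j := by
  unfold par
  split_ifs with h
  · simp [h]
  · simp only [Option.some.injEq]
    constructor
    · rintro rfl; exact ⟨h, rfl, rfl⟩
    · rintro ⟨-, h1, h2⟩; exact X_ext h1 h2

/-- The rooted tree of leg data. -/
noncomputable def rt : RT S.X where
  p := S.par
  h x := x.j
  le x y := x.i = y.i ∧ y.j ≤ x.j ∧
    ¬ (S.ty x.i ∧ y.j + 2 = S.n x.i ∧ x.j + 1 = S.n x.i)
  hlt := by
    intro x y h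
    rw [par_some] at h
    obtain ⟨h1, h2, h3⟩ := h
    rw [← h3]
    have := S.h3 x.i
    unfold pj
    split_ifs <;> omega
  le_iff := by
    intro x y
    have hx := x.h
    have hy := y.h
    have h3 := S.h3 x.i
    constructor
    · rintro ⟨e1, e2, e3⟩
      by_cases hj : x.j = y.j
      · exact Or.inl (X_ext e1 hj)
      · right
        refine ⟨⟨x.i, S.pj x.i x.j, S.pj_lt _ _ x.h⟩,
          (S.par_some _ _).2 ⟨by omega, rfl, rfl⟩, e1, ?_, ?_⟩
        · simp only
          unfold pj
          grind
        · simp only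
          unfold pj
          grind
    · rintro (rfl | ⟨z, hz, e1, e2, e3⟩)
      · exact ⟨rfl, le_rfl, by omega⟩
      · rw [par_some] at hz
        obtain ⟨f1, f2, f3⟩ := hz
        refine ⟨f2.trans e1, ?_, ?_⟩
        · rw [← f3] at e2
          unfold pj at e2
          grind
        · rintro ⟨g1, g2, g3⟩
          rw [← f3] at e2
          unfold pj at e2
          have := h3 g1
          rw [if_pos ⟨g1, g3⟩] at e2
          omega

theorem le_def (x y : S.X) : S.rt.le x y ↔ x.i = y.i ∧ y.j ≤ x.j ∧
    ¬ (S.ty x.i ∧ y.j + 2 = S.n x.i ∧ x.j + 1 = S.n x.i) := Iff.rfl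

theorem cnt_leg (i : S.I) (ψ : ℕ → Prop) [DecidablePred ψ]
    [DecidablePred fun v : S.X => v.i = i ∧ ψ v.j] :
    (Finset.univ.filter fun v : S.X => v.i = i ∧ ψ v.j).card =
      ((Finset.range (S.n i)).filter ψ).card := by
  refine Finset.card_bij (fun v _ => v.j) ?_ ?_ ?_
  · intro v hv
    simp only [Finset.mem_filter, Finset.mem_univ, true_and, Finset.mem_range] at hv ⊢
    obtain ⟨rfl, h⟩ := hv
    exact ⟨v.h, h⟩
  · intro v hv v' hv' h
    simp only [Finset.mem_filter, Finset.mem_univ, true_and] at hv hv'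
    exact X_ext (hv.1.trans hv'.1.symm) h
  · intro j hj
    simp only [Finset.mem_filter, Finset.mem_range] at hj
    exact ⟨⟨i, j, hj.1⟩, by simpa using hj.2, rfl⟩

theorem cnt_all (φ : S.I → ℕ → Prop)
    [DecidablePred fun v : S.X => φ v.i v.j] [∀ i, DecidablePred (φ i)] :
    (Finset.univ.filter fun v : S.X => φ v.i v.j).card =
      ∑ i, ((Finset.range (S.n i)).filter (φ i)).card := by
  rw [Finset.card_eq_sum_card_fiberwise (f := fun v : S.X => v.i) (t := Finset.univ)
    (fun _ _ => by simp)]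
  refine Finset.sum_congr rfl fun i _ => ?_
  rw [← cnt_leg]
  congr 1
  ext v
  simp only [Finset.mem_filter, Finset.mem_univ, true_and]
  constructor
  · rintro ⟨h, rfl⟩; exact ⟨rfl, h⟩
  · rintro ⟨rfl, h⟩; exact ⟨h, rfl⟩

/-- outer size at position `j` of leg `i` -/
noncomputable def wt (i : S.I) (j : ℕ) : ℕ := if S.ty i ∧ S.n i ≤ j + 2 then 1 else S.n i - j

theorem w_eq (x : S.X) : S.rt.w x = S.wt x.i x.j := by
  have hx := x.h
  have h3 := S.h3 x.i
  have : S.rt.w x = ((Finset.range (S.n x.i)).filter fun j => x.j ≤ j ∧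
      ¬ (S.ty x.i ∧ x.j + 2 = S.n x.i ∧ j + 1 = S.n x.i)).card := by
    rw [← S.cnt_leg x.i (fun j => x.j ≤ j ∧
      ¬ (S.ty x.i ∧ x.j + 2 = S.n x.i ∧ j + 1 = S.n x.i))]
    unfold RT.w
    congr 1
    ext v
    simp only [le_def, Finset.mem_filter, Finset.mem_univ, true_and]
    constructor
    · rintro ⟨e1, e2⟩; rw [e1] at e2; exact ⟨e1, e2⟩
    · rintro ⟨e1, e2⟩; rw [← e1] at e2; exact ⟨e1, e2⟩
  rw [this]
  unfold wt
  split_ifs with h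
  · rw [Finset.card_eq_one]
    refine ⟨x.j, ?_⟩
    ext j
    simp only [Finset.mem_filter, Finset.mem_range, Finset.mem_singleton]
    have := h3 h.1
    simp only [h.1, true_and]
    omega
  · rw [← Nat.card_Ico]
    congr 1
    ext j
    simp only [Finset.mem_filter, Finset.mem_range, Finset.mem_Ico]
    by_cases ht : S.ty x.i
    · simp only [ht, true_and] at h ⊢
      omega
    · simp only [ht, false_and, not_false_iff, and_true]
      omega

/-- number of legs of order at least `k` -/
noncomputable def A (k : ℕ) : ℕ := (Finset.univ.filter fun i => k ≤ S.n i).card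
/-- number of 2-legs of order at least `k` -/
noncomputable def s (k : ℕ) : ℕ := (Finset.univ.filter fun i => S.ty i ∧ k ≤ S.n i).card

theorem card_X : Fintype.card S.X = ∑ i, S.n i := by
  have := S.cnt_all (fun _ _ => True)
  simpa using this

theorem s_three : S.s 3 = (Finset.univ.filter fun i => S.ty i).card := by
  unfold s
  congr 1; ext i
  have := S.h3 i
  simp only [Finset.mem_filter, Finset.mem_univ, true_and]
  tauto

theorem A_one : S.A 1 = Fintype.card S.I := by
  unfold A
  rw [Finset.filter_true_of_mem (fun i _ => S.h1 i)]; rfl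

theorem a_one : S.rt.a 1 = S.A 1 + S.s 3 := by
  unfold RT.a
  simp only [w_eq]
  rw [S.cnt_all (fun i j => S.wt i j = 1), A, s, Finset.card_filter, Finset.card_filter,
    ← Finset.sum_add_distrib]
  refine Finset.sum_congr rfl fun i _ => ?_
  have h1 := S.h1 i
  have h3 := S.h3 i
  by_cases ht : S.ty i
  · have h3 := h3 ht
    have : (Finset.range (S.n i)).filter (fun j => S.wt i j = 1) = {S.n i - 1, S.n i - 2} := by
      ext j
      simp only [Finset.mem_filter, Finset.mem_range, Finset.mem_insert, Finset.mem_singleton, wt,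
        ht, true_and]
      split_ifs <;> omega
    rw [this, Finset.card_pair (by omega)]
    simp [h1, ht, h3]
  · have : (Finset.range (S.n i)).filter (fun j => S.wt i j = 1) = {S.n i - 1} := by
      ext j
      simp only [Finset.mem_filter, Finset.mem_range, Finset.mem_singleton, wt,
        ht, false_and, if_false]
      omega
    rw [this]
    simp [h1, ht]

theorem a_two : S.rt.a 2 + S.s 3 = S.A 2 := by
  unfold RT.a
  simp only [w_eq]
  rw [S.cnt_all (fun i j => S.wt i j = 2), A, s, Finset.card_filter, Finset.card_filter,
    ← Finset.sum_add_distrib]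
  refine Finset.sum_congr rfl fun i _ => ?_
  have h1 := S.h1 i
  have h3 := S.h3 i
  by_cases ht : S.ty i
  · have h3 := h3 ht
    have : (Finset.range (S.n i)).filter (fun j => S.wt i j = 2) = ∅ := by
      ext j
      simp only [Finset.mem_filter, Finset.mem_range, Finset.notMem_empty, wt,
        ht, true_and, iff_false]
      split_ifs <;> omega
    have h2 : 2 ≤ S.n i := by omega
    rw [this]
    simp [h2, ht, h3]
  · by_cases h2 : 2 ≤ S.n i
    · have : (Finset.range (S.n i)).filter (fun j => S.wt i j = 2) = {S.n i - 2} := by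
        ext j
        simp only [Finset.mem_filter, Finset.mem_range, Finset.mem_singleton, wt,
          ht, false_and, if_false]
        omega
      rw [this]
      simp [h2, ht]
    · have : (Finset.range (S.n i)).filter (fun j => S.wt i j = 2) = ∅ := by
        ext j
        simp only [Finset.mem_filter, Finset.mem_range, Finset.notMem_empty, wt,
          ht, false_and, if_false, iff_false]
        omega
      rw [this]
      simp [h2, ht]

theorem leg_k (i : S.I) (k : ℕ) (hk : 3 ≤ k) :
    ((Finset.range (S.n i)).filter (fun j => S.wt i j = k)).card = if k ≤ S.n i then 1 else 0 := by
  split_ifs with h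
  · rw [Finset.card_eq_one]
    refine ⟨S.n i - k, ?_⟩
    ext j
    simp only [Finset.mem_filter, Finset.mem_range, Finset.mem_singleton]
    unfold wt
    split_ifs <;> omega
  · rw [Finset.card_eq_zero]
    ext j
    simp only [Finset.mem_filter, Finset.mem_range, Finset.notMem_empty, iff_false]
    unfold wt
    split_ifs <;> omega

theorem a_k (k : ℕ) (hk : 3 ≤ k) : S.rt.a k = S.A k := by
  unfold RT.a
  simp only [w_eq]
  rw [S.cnt_all (fun i j => S.wt i j = k), A, Finset.card_filter]
  exact Finset.sum_congr rfl fun i _ => S.leg_k i k hk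

theorem s_k (k : ℕ) (hk : 3 ≤ k) :
    (Finset.univ.filter fun x : S.X => S.rt.w x = k ∧ S.ty x.i).card = S.s k := by
  simp only [w_eq]
  rw [S.cnt_all (fun i j => S.wt i j = k ∧ S.ty i), s, Finset.card_filter]
  refine Finset.sum_congr rfl fun i _ => ?_
  by_cases ht : S.ty i
  · simp only [ht, and_true, true_and]; exact S.leg_k i k hk
  · simp [ht]

theorem inner_one (y : S.X) (hy : 3 ≤ S.rt.w y) :
    (Finset.univ.filter fun x => S.rt.le x y ∧ S.rt.w x = 1).card =
      1 + if S.ty y.i then 1 else 0 := by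
  have hyl := y.h
  have h3 := S.h3 y.i
  have : (Finset.univ.filter fun x => S.rt.le x y ∧ S.rt.w x = 1).card =
    ((Finset.range (S.n y.i)).filter fun j => (y.j ≤ j ∧
      ¬ (S.ty y.i ∧ y.j + 2 = S.n y.i ∧ j + 1 = S.n y.i)) ∧ S.wt y.i j = 1).card := by
    rw [← S.cnt_leg y.i (fun j => (y.j ≤ j ∧
      ¬ (S.ty y.i ∧ y.j + 2 = S.n y.i ∧ j + 1 = S.n y.i)) ∧ S.wt y.i j = 1)]
    congr 1
    ext v
    simp only [le_def, w_eq, Finset.mem_filter, Finset.mem_univ, true_and]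
    constructor
    · rintro ⟨⟨e1, e2⟩, e3⟩; rw [e1] at e2 e3; exact ⟨e1, e2, e3⟩
    · rintro ⟨e1, e2, e3⟩; rw [← e1] at e2 e3; exact ⟨⟨e1, e2⟩, e3⟩
  rw [this]
  rw [w_eq] at hy
  unfold wt at hy ⊢
  by_cases ht : S.ty y.i
  · simp only [ht, true_and, if_true] at hy ⊢
    have h3 := h3 ht
    rw [Finset.card_eq_two]
    refine ⟨S.n y.i - 1, S.n y.i - 2, by omega, ?_⟩
    ext j
    simp only [Finset.mem_filter, Finset.mem_range, Finset.mem_insert, Finset.mem_singleton]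
    split_ifs at hy ⊢ <;> omega
  · simp only [ht, false_and, if_false, not_false_iff, and_true] at hy ⊢
    rw [Finset.card_eq_one]
    refine ⟨S.n y.i - 1, ?_⟩
    ext j
    simp only [Finset.mem_filter, Finset.mem_range, Finset.mem_singleton]
    omega

theorem inner_pred (y : S.X) (k : ℕ) (hk : 4 ≤ k) (hy : S.rt.w y = k) :
    (Finset.univ.filter fun x => S.rt.le x y ∧ S.rt.w x = k - 1).card = 1 := by
  have hyl := y.h
  have h3 := S.h3 y.i
  have : (Finset.univ.filter fun x => S.rt.le x y ∧ S.rt.w x = k - 1).card =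
    ((Finset.range (S.n y.i)).filter fun j => (y.j ≤ j ∧
      ¬ (S.ty y.i ∧ y.j + 2 = S.n y.i ∧ j + 1 = S.n y.i)) ∧
        S.wt y.i j = k - 1).card := by
    rw [← S.cnt_leg y.i (fun j => (y.j ≤ j ∧
      ¬ (S.ty y.i ∧ y.j + 2 = S.n y.i ∧ j + 1 = S.n y.i)) ∧ S.wt y.i j = k - 1)]
    congr 1
    ext v
    simp only [le_def, w_eq, Finset.mem_filter, Finset.mem_univ, true_and]
    constructor
    · rintro ⟨⟨e1, e2⟩, e3⟩; rw [e1] at e2 e3; exact ⟨e1, e2, e3⟩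
    · rintro ⟨e1, e2, e3⟩; rw [← e1] at e2 e3; exact ⟨⟨e1, e2⟩, e3⟩
  rw [this]
  rw [w_eq] at hy
  unfold wt at hy ⊢
  rw [Finset.card_eq_one]
  refine ⟨y.j + 1, ?_⟩
  ext j
  simp only [Finset.mem_filter, Finset.mem_range, Finset.mem_singleton]
  split_ifs at hy ⊢ <;> omega

theorem nest_one (k : ℕ) (hk : 3 ≤ k) :
    (Finset.univ.filter fun q : S.X × S.X =>
      S.rt.le q.1 q.2 ∧ S.rt.w q.2 = k ∧ S.rt.w q.1 = 1).card = S.A k + S.s k := by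
  rw [card_prod_filter (fun x y => S.rt.le x y ∧ S.rt.w y = k ∧ S.rt.w x = 1), ← S.a_k k hk,
    ← S.s_k k hk, RT.a, Finset.card_filter, Finset.card_filter, ← Finset.sum_add_distrib]
  refine Finset.sum_congr rfl fun y _ => ?_
  by_cases hy : S.rt.w y = k
  · have := S.inner_one y (by omega)
    simp only [hy, true_and, if_true]
    exact this
  · simp [hy]

theorem nest_pred (k : ℕ) (hk : 4 ≤ k) :
    (Finset.univ.filter fun q : S.X × S.X =>
      S.rt.le q.1 q.2 ∧ S.rt.w q.2 = k ∧ S.rt.w q.1 = k - 1).card = S.A k := by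
  rw [card_prod_filter (fun x y => S.rt.le x y ∧ S.rt.w y = k ∧ S.rt.w x = k - 1),
    ← S.a_k k (by omega), RT.a, Finset.card_filter]
  refine Finset.sum_congr rfl fun y _ => ?_
  by_cases hy : S.rt.w y = k
  · have := S.inner_pred y k hk hy
    simp only [hy, true_and, if_true]
    exact this
  · simp [hy]

theorem nk (k : ℕ) (hk : 4 ≤ k) :
    (Finset.univ.filter fun q : S.X × S.X =>
      (S.rt.w q.1 = 1 ∧ S.rt.w q.2 = k - 1 ∧ ¬ S.rt.le q.1 q.2) ∨
      (S.rt.le q.1 q.2 ∧ S.rt.w q.2 = k ∧ (S.rt.w q.1 = 1 ∨ S.rt.w q.1 = k - 1))).card +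
      (S.A (k - 1) + S.s (k - 1)) = 2 * S.A k + S.s k + (S.A 1 + S.s 3) * S.A (k - 1) := by
  have e1 := S.nest_one k (by omega)
  have e2 := S.nest_pred k hk
  have e3 := S.nest_one (k - 1) (by omega)
  have e4 : (Finset.univ.filter fun q : S.X × S.X =>
      S.rt.w q.1 = 1 ∧ S.rt.w q.2 = k - 1).card = (S.A 1 + S.s 3) * S.A (k - 1) := by
    rw [← a_one, ← S.a_k (k - 1) (by omega), RT.a, RT.a, ← Finset.card_product]
    congr 1
    ext q
    simp
  rw [← e3, ← e4]
  have e5 : 2 * S.A k + S.s k = (S.A k + S.s k) + S.A k := by ring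
  rw [e5, ← e1]
  rw [← e2]
  simp only [Finset.card_filter]
  rw [← Finset.sum_add_distrib, ← Finset.sum_add_distrib, ← Finset.sum_add_distrib]
  refine Finset.sum_congr rfl fun q _ => ?_
  by_cases hle : S.rt.le q.1 q.2 <;> simp only [hle, not_true, not_false_iff, and_true, and_false,
    true_and, false_and, false_or, or_false, if_false] <;> split_ifs <;> omega

theorem nonroot_card : (Finset.univ.filter fun q : S.X × S.X =>
    S.rt.p q.1 = some q.2).card + S.A 1 = Fintype.card S.X := by
  have h1 : (Finset.univ.filter fun q : S.X × S.X => S.rt.p q.1 = some q.2).card =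
      (Finset.univ.filter fun x : S.X => ¬ x.j = 0).card := by
    refine Finset.card_bij (fun q _ => q.1) ?_ ?_ ?_
    · intro q hq
      simp only [Finset.mem_filter, Finset.mem_univ, true_and] at hq ⊢
      exact ((S.par_some _ _).1 hq).1
    · rintro ⟨x, y⟩ hq ⟨x', y'⟩ hq' h
      simp only [Finset.mem_filter, Finset.mem_univ, true_and] at hq hq' h
      subst h
      rw [hq] at hq'
      cases hq'
      rfl
    · intro x hx
      simp only [Finset.mem_filter, Finset.mem_univ, true_and] at hx
      rw [← par_none, ← ne_eq, Option.ne_none_iff_exists'] at hx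
      obtain ⟨y, hy⟩ := hx
      exact ⟨(x, y), by simpa [rt] using hy, rfl⟩
  have h2 : (Finset.univ.filter fun x : S.X => x.j = 0).card = S.A 1 := by
    rw [S.cnt_all (fun _ j => j = 0), A, Finset.card_filter]
    refine Finset.sum_congr rfl fun i _ => ?_
    have := S.h1 i
    rw [if_pos this, Finset.card_eq_one]
    refine ⟨0, ?_⟩
    ext j
    simp only [Finset.mem_filter, Finset.mem_range, Finset.mem_singleton]
    omega
  rw [h1, ← h2, add_comm]
  exact Finset.card_filter_add_card_filter_not _

theorem sib_card : (Finset.univ.filter fun q : S.X × S.X =>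
    q.1 ≠ q.2 ∧ S.rt.p q.1 = S.rt.p q.2).card = S.A 1 * (S.A 1 - 1) + 2 * S.s 3 := by
  have hr : (Finset.univ.filter fun x : S.X => x.j = 0).card = S.A 1 := by
    rw [S.cnt_all (fun _ j => j = 0), A, Finset.card_filter]
    refine Finset.sum_congr rfl fun i _ => ?_
    have := S.h1 i
    rw [if_pos this, Finset.card_eq_one]
    refine ⟨0, ?_⟩
    ext j
    simp only [Finset.mem_filter, Finset.mem_range, Finset.mem_singleton]
    omega
  have hs : (Finset.univ.filter fun x : S.X => S.ty x.i ∧ S.n x.i ≤ x.j + 2).card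
      = 2 * S.s 3 := by
    rw [S.cnt_all (fun i j => S.ty i ∧ S.n i ≤ j + 2), s, Finset.card_filter, Finset.mul_sum]
    refine Finset.sum_congr rfl fun i _ => ?_
    by_cases ht : S.ty i
    · have h3 := S.h3 i ht
      simp only [ht, h3, true_and, if_true]
      rw [mul_one, Finset.card_eq_two]
      refine ⟨S.n i - 1, S.n i - 2, by omega, ?_⟩
      ext j
      simp only [Finset.mem_filter, Finset.mem_range, Finset.mem_insert, Finset.mem_singleton]
      omega
    · simp [ht]
  rw [card_prod_filter (fun x y => x ≠ y ∧ S.rt.p x = S.rt.p y), ← hs, ← hr,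
    Finset.card_filter, Finset.sum_mul, Finset.card_filter, ← Finset.sum_add_distrib]
  refine Finset.sum_congr rfl fun y _ => ?_
  rw [← Finset.card_filter]
  have hy := y.h
  have h3 := S.h3 y.i
  by_cases h0 : y.j = 0
  · have hn : ¬ (S.ty y.i ∧ S.n y.i ≤ y.j + 2) := by
      rintro ⟨h, h'⟩
      have := h3 h
      omega
    rw [if_pos h0, if_neg hn, one_mul, add_zero]
    rw [← Finset.card_erase_of_mem (s := Finset.univ.filter fun x : S.X => x.j = 0)
      (by simpa using h0)]
    congr 1
    ext x
    simp only [Finset.mem_filter, Finset.mem_univ, true_and, Finset.mem_erase]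
    have : S.rt.p y = none := (S.par_none y).2 h0
    rw [this]
    exact and_congr_right fun _ => S.par_none x
  · rw [if_neg h0, zero_mul, zero_add]
    have hpy : S.rt.p y = some ⟨y.i, S.pj y.i y.j, S.pj_lt _ _ y.h⟩ :=
      (S.par_some _ _).2 ⟨h0, rfl, rfl⟩
    have key : ∀ x : S.X, S.rt.p x = S.rt.p y ↔
        x.j ≠ 0 ∧ x.i = y.i ∧ S.pj x.i x.j = S.pj y.i y.j := by
      intro x
      rw [hpy]
      exact S.par_some _ _
    simp only [key]
    split_ifs with h
    · obtain ⟨ht, hj⟩ := h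
      have h3 := h3 ht
      rw [Finset.card_eq_one]
      refine ⟨⟨y.i, 2 * S.n y.i - 3 - y.j, by omega⟩, ?_⟩
      ext x
      have hx := x.h
      simp only [Finset.mem_filter, Finset.mem_univ, true_and, Finset.mem_singleton]
      constructor
      · rintro ⟨e1, e2, e3, e4⟩
        refine X_ext e3 ?_
        have hne : x.j ≠ y.j := fun h => e1 (X_ext e3 h)
        rw [e3] at e4 hx
        simp only [pj, ht, true_and] at e4
        simp only
        split_ifs at e4 <;> omega
      · rintro rfl
        simp only
        refine ⟨?_, by omega, trivial, ?_⟩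
        · intro h
          have h := congrArg (fun z : S.X => z.j) h
          simp only at h
          omega
        · simp only [pj, ht, true_and]
          split_ifs <;> omega
    · rw [Finset.card_eq_zero, Finset.filter_eq_empty_iff]
      rintro x - ⟨e1, e2, e3, e4⟩
      have hx := x.h
      have hne : x.j ≠ y.j := fun h => e1 (X_ext e3 h)
      rw [e3] at e4 hx
      unfold pj at e4
      grind

theorem adj_card (idx : S.X → ℕ) (hidx : Function.Injective idx) :
    2 * (Finset.univ.filter fun q : S.X × S.X =>
      S.rt.p q.1 = some q.2 ∨ (S.rt.p q.1 = S.rt.p q.2 ∧ idx q.1 < idx q.2)).card + 2 * S.A 1 =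
    2 * Fintype.card S.X + (S.A 1 * (S.A 1 - 1) + 2 * S.s 3) := by
  rw [← nonroot_card, ← sib_card]
  have h1 : (Finset.univ.filter fun q : S.X × S.X =>
      S.rt.p q.1 = some q.2 ∨ (S.rt.p q.1 = S.rt.p q.2 ∧ idx q.1 < idx q.2)).card =
      (Finset.univ.filter fun q : S.X × S.X => S.rt.p q.1 = some q.2).card +
      (Finset.univ.filter fun q : S.X × S.X =>
        S.rt.p q.1 = S.rt.p q.2 ∧ idx q.1 < idx q.2).card := by
    rw [Finset.filter_or, Finset.card_union_of_disjoint]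
    rw [Finset.disjoint_filter]
    rintro ⟨x, y⟩ - h ⟨h', -⟩
    simp only at h h'
    rw [h'] at h
    have := S.rt.hlt _ _ h
    omega
  have h2 : (Finset.univ.filter fun q : S.X × S.X =>
      q.1 ≠ q.2 ∧ S.rt.p q.1 = S.rt.p q.2).card =
      (Finset.univ.filter fun q : S.X × S.X =>
        S.rt.p q.1 = S.rt.p q.2 ∧ idx q.1 < idx q.2).card +
      (Finset.univ.filter fun q : S.X × S.X =>
        S.rt.p q.1 = S.rt.p q.2 ∧ idx q.2 < idx q.1).card := by
    rw [← Finset.card_union_of_disjoint, ← Finset.filter_or]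
    · congr 1
      ext ⟨x, y⟩
      simp only [Finset.mem_filter, Finset.mem_univ, true_and]
      have : x ≠ y ↔ idx x < idx y ∨ idx y < idx x := by
        rw [← hidx.ne_iff]; omega
      rw [this]
      tauto
    · rw [Finset.disjoint_filter]
      rintro ⟨x, y⟩ - h h'
      omega
  have h3 : (Finset.univ.filter fun q : S.X × S.X =>
        S.rt.p q.1 = S.rt.p q.2 ∧ idx q.2 < idx q.1).card =
      (Finset.univ.filter fun q : S.X × S.X =>
        S.rt.p q.1 = S.rt.p q.2 ∧ idx q.1 < idx q.2).card := by
    refine Finset.card_bij (fun q _ => q.swap) ?_ ?_ ?_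
    · intro q hq
      simp only [Finset.mem_filter, Finset.mem_univ, true_and, Prod.fst_swap, Prod.snd_swap]
        at hq ⊢
      exact ⟨hq.1.symm, hq.2⟩
    · intro q _ q' _ h; exact Prod.swap_injective h
    · intro q hq
      refine ⟨q.swap, ?_, Prod.swap_swap q⟩
      simp only [Finset.mem_filter, Finset.mem_univ, true_and, Prod.fst_swap, Prod.snd_swap]
        at hq ⊢
      exact ⟨hq.1.symm, hq.2⟩
  rw [h1, h2, h3]
  ring

end SD
end PartThree

section PartFour
open Classical

theorem reach_closed {V : Type} (G : SimpleGraph V) (P : V → Prop)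
    (h : ∀ a b, P a → G.Adj a b → P b) {a b : V} (hr : G.Reachable a b) (ha : P a) : P b := by
  obtain ⟨w⟩ := hr
  induction w with
  | nil => exact ha
  | cons hadj _ ih => exact ih (h _ _ ha hadj)

/-- membership in the leg at `u` -/
def InLeg {V : Type} (T : SimpleGraph V) (t u v : V) : Prop :=
  (T.deleteEdges {s(t, u)}).Reachable v u

theorem inLeg_torso {V : Type} (T : SimpleGraph V) (hT : T.IsTree) {t u : V} (h : T.Adj t u) :
    ¬ InLeg T t u t := by
  have := SimpleGraph.isAcyclic_iff_forall_adj_isBridge.1 hT.isAcyclic h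
  rw [SimpleGraph.isBridge_iff] at this
  exact this

theorem inLeg_self {V : Type} (T : SimpleGraph V) (t u : V) : InLeg T t u u :=
  SimpleGraph.Reachable.refl _

theorem inLeg_closed {V : Type} (T : SimpleGraph V) (hT : T.IsTree) {t u x y : V} (h : T.Adj t u)
    (hx : InLeg T t u x) (hxy : T.Adj x y) : InLeg T t u y ∨ (x = u ∧ y = t) := by
  by_cases he : s(x, y) = s(t, u)
  · rw [Sym2.eq_iff] at he
    rcases he with ⟨rfl, rfl⟩ | ⟨rfl, rfl⟩
    · exact absurd hx (inLeg_torso T hT h)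
    · exact Or.inr ⟨rfl, rfl⟩
  · left
    have : (T.deleteEdges {s(t, u)}).Adj y x := by
      rw [SimpleGraph.deleteEdges_adj]
      exact ⟨hxy.symm, fun hh => he (Sym2.eq_swap.trans hh)⟩
    exact this.reachable.trans hx

theorem inLeg_disj {V : Type} (T : SimpleGraph V) (hT : T.IsTree) {t u u' v : V} (h : T.Adj t u)
    (h' : T.Adj t u') (hv : InLeg T t u v) (hv' : InLeg T t u' v) : u = u' := by
  have := reach_closed _ (fun z => InLeg T t u z ∧ InLeg T t u' z) (a := v) (b := u') (by
    rintro a b ⟨h1, h2⟩ hab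
    have hb : InLeg T t u' b := (hab.symm.reachable).trans h2
    refine ⟨?_, hb⟩
    rcases inLeg_closed T hT h h1 (SimpleGraph.deleteEdges_le _ hab) with h3 | ⟨-, rfl⟩
    · exact h3
    · exact absurd hb (inLeg_torso T hT h')) hv' ⟨hv, hv'⟩
  rcases inLeg_closed T hT h this.1 h'.symm with h3 | ⟨rfl, -⟩
  · exact absurd h3 (inLeg_torso T hT h)
  · rfl

theorem inLeg_cover {V : Type} (T : SimpleGraph V) (hT : T.IsTree) (t v : V) :
    v = t ∨ ∃ u, T.Adj t u ∧ InLeg T t u v := by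
  refine reach_closed T (fun v => v = t ∨ ∃ u, T.Adj t u ∧ InLeg T t u v) ?_
    (hT.connected.preconnected t v) (Or.inl rfl)
  rintro a b (rfl | ⟨u, hu, ha⟩) hab
  · exact Or.inr ⟨b, hab, inLeg_self _ _ _⟩
  · rcases inLeg_closed T hT hu ha hab with h | ⟨-, rfl⟩
    · exact Or.inr ⟨u, hu, h⟩
    · exact Or.inl rfl

/-- parent position in a leg -/
noncomputable def pjj (n : ℕ) (ty : Prop) (j : ℕ) : ℕ := if ty ∧ j + 1 = n then n - 3 else j - 1

theorem leg_aux {V : Type} (T : SimpleGraph V) (hT : T.IsTree) {t u : V} (h : T.Adj t u)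
    {n : ℕ} (hn : 0 < n) (R : SimpleGraph (Fin n))
    (hR : IsRootedSubtree T s(t, u) u R ⟨0, hn⟩) :
    ∃ φ : Fin n → V, Function.Injective φ ∧ φ ⟨0, hn⟩ = u ∧ (∀ j, InLeg T t u (φ j)) ∧
      (∀ v, InLeg T t u v → ∃ j, φ j = v) ∧ ∀ j k, T.Adj (φ j) (φ k) ↔ R.Adj j k := by
  obtain ⟨-, -, φ, h0⟩ := hR
  have hs : ∀ j, InLeg T t u (φ j) := fun j =>
    SimpleGraph.ConnectedComponent.exact ((SimpleGraph.ConnectedComponent.mem_supp_iff _ _).1 (φ j).2)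
  refine ⟨fun j => φ j, fun a b hab => φ.injective (Subtype.ext hab), h0, hs, ?_, ?_⟩
  · intro v hv
    obtain ⟨j, hj⟩ := φ.surjective ⟨v, (SimpleGraph.ConnectedComponent.mem_supp_iff _ _).2
      (SimpleGraph.ConnectedComponent.sound hv)⟩
    exact ⟨j, by simp [hj]⟩
  · intro j k
    rw [← φ.map_adj_iff, SimpleGraph.comap_adj, SimpleGraph.deleteEdges_adj]
    refine ⟨fun hh => ⟨hh, ?_⟩, fun hh => hh.1⟩
    intro he
    have he : s((φ j : V), (φ k : V)) = s(t, u) := he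
    rw [Sym2.eq_iff] at he
    rcases he with ⟨e1, e2⟩ | ⟨e1, e2⟩
    · have := hs j; rw [e1] at this; exact inLeg_torso T hT h this
    · have := hs k; rw [e2] at this; exact inLeg_torso T hT h this

theorem leg_exists {V : Type} (T : SimpleGraph V) (hT : T.IsTree) {t u : V} (h : T.Adj t u)
    (hl : IsOneLegAt T t u ∨ IsTwoLegAt T t u) :
    ∃ (n : ℕ) (ty : Prop) (hn : 1 ≤ n) (_ : ty → 3 ≤ n) (φ : Fin n → V),
      Function.Injective φ ∧ φ ⟨0, hn⟩ = u ∧ (∀ j, InLeg T t u (φ j)) ∧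
      (∀ v, InLeg T t u v → ∃ j, φ j = v) ∧
      ∀ j k, T.Adj (φ j) (φ k) ↔ (j.1 ≠ 0 ∧ pjj n ty j.1 = k.1) ∨ (k.1 ≠ 0 ∧ pjj n ty k.1 = j.1) := by
  rcases hl with ⟨n, hn, hR⟩ | ⟨n, hn, hR⟩
  · obtain ⟨φ, f1, f2, f3, f4, f5⟩ := leg_aux T hT h hn _ hR
    refine ⟨n, False, hn, False.elim, φ, f1, f2, f3, f4, ?_⟩
    intro j k
    rw [f5, SimpleGraph.pathGraph_adj]
    simp only [pjj, false_and, if_false]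
    omega
  · obtain ⟨φ, f1, f2, f3, f4, f5⟩ := leg_aux T hT h (by omega) _ hR
    refine ⟨n, True, by omega, fun _ => hn, φ, f1, f2, f3, f4, ?_⟩
    intro j k
    rw [f5, Rtwo, SimpleGraph.fromRel_adj, ne_eq, Fin.ext_iff]
    simp only [pjj, true_and]
    have hj := j.2
    have hk := k.2
    split_ifs <;> omega

theorem model_exists {V : Type} [Fintype V] (T : SimpleGraph V) (hT : IsTwoSpider T) :
    ∃ (S : SD) (e : Option S.X ≃ V), S.rt.Pres T e := by
  obtain ⟨t, hT, hd, hl⟩ := hT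
  choose n ty hn h3 φ f1 f2 f3 f4 f5 using
    fun u : {u // T.Adj t u} => leg_exists T hT u.2 (hl u.1 u.2)
  let S : SD := ⟨{u // T.Adj t u}, inferInstance, n, ty, hn, h3, by
    have : (T.neighborSet t).ncard = Fintype.card {u // T.Adj t u} := by
      rw [← Nat.card_coe_set_eq, Nat.card_eq_fintype_card]
      rfl
    omega⟩
  let f : Option S.X → V := fun o => o.elim t (fun x => φ x.i ⟨x.j, x.h⟩)
  have ft : ∀ x : S.X, φ x.i ⟨x.j, x.h⟩ ≠ t := by
    intro x hx
    have := f3 x.i ⟨x.j, x.h⟩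
    rw [hx] at this
    exact inLeg_torso T hT x.i.2 this
  have fi : ∀ x y : S.X, InLeg T t x.i.1 (φ y.i ⟨y.j, y.h⟩) → x.i = y.i := fun x y h =>
    Subtype.ext (inLeg_disj T hT x.i.2 y.i.2 h (f3 _ _))
  have hinj : Function.Injective f := by
    rintro (_ | x) (_ | y) hxy
    · rfl
    · exact absurd hxy.symm (ft y)
    · exact absurd hxy (ft x)
    · have hxy : φ x.i ⟨x.j, x.h⟩ = φ y.i ⟨y.j, y.h⟩ := hxy
      have hi : x.i = y.i := fi x y (by rw [← hxy]; exact f3 _ _)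
      obtain ⟨xi, xj, xh⟩ := x
      obtain ⟨yi, yj, yh⟩ := y
      simp only at hi hxy
      subst hi
      have := f1 _ hxy
      simp only [Fin.mk.injEq] at this
      subst this
      rfl
  have hsurj : Function.Surjective f := by
    intro v
    rcases inLeg_cover T hT t v with rfl | ⟨u, hu, hv⟩
    · exact ⟨none, rfl⟩
    · obtain ⟨j, hj⟩ := f4 ⟨u, hu⟩ v hv
      exact ⟨some ⟨⟨u, hu⟩, j.1, j.2⟩, hj⟩
  have hroot : ∀ x : S.X, T.Adj t (φ x.i ⟨x.j, x.h⟩) ↔ x.j = 0 := by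
    intro x
    constructor
    · intro h
      rcases inLeg_closed T hT x.i.2 (f3 x.i ⟨x.j, x.h⟩) h.symm with h | ⟨h, -⟩
      · exact absurd h (inLeg_torso T hT x.i.2)
      · have := f1 x.i (h.trans (f2 x.i).symm)
        simpa using this
    · intro h
      have : φ x.i ⟨x.j, x.h⟩ = x.i.1 := by
        rw [← f2 x.i]
        congr 1
        exact Fin.ext h
      rw [this]; exact x.i.2
  refine ⟨S, Equiv.ofBijective f ⟨hinj, hsurj⟩, ?_⟩
  rintro (_ | x) (_ | y)
  · simp [f]
  · have : T.Adj t (φ y.i ⟨y.j, y.h⟩) ↔ S.par y = none := (hroot y).trans (S.par_none y).symm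
    refine this.trans ?_
    simp [SD.rt]
  · have : T.Adj (φ x.i ⟨x.j, x.h⟩) t ↔ S.par x = none :=
      (T.adj_comm _ _).trans ((hroot x).trans (S.par_none x).symm)
    refine this.trans ?_
    simp [SD.rt]
  · have : T.Adj (φ x.i ⟨x.j, x.h⟩) (φ y.i ⟨y.j, y.h⟩) ↔ S.par x = some y ∨ S.par y = some x := by
      by_cases hi : x.i = y.i
      · obtain ⟨xi, xj, xh⟩ := x
        obtain ⟨yi, yj, yh⟩ := y
        simp only at hi
        subst hi
        rw [f5, S.par_some, S.par_some]
        simp only [true_and]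
        exact Iff.rfl
      · rw [S.par_some, S.par_some]
        refine iff_of_false ?_ (by
          rintro (h | h)
          · exact hi h.2.1
          · exact hi h.2.1.symm)
        intro h
        rcases inLeg_closed T hT x.i.2 (f3 x.i ⟨x.j, x.h⟩) h with h | ⟨-, h⟩
        · exact hi (fi x y h)
        · exact ft y h
    refine this.trans ?_
    simp [SD.rt]

end PartFour

section PartFive
open Classical

namespace SD
variable (S : SD)

theorem three_sum {i j : S.I} (hij : i ≠ j) : S.n i + S.n j + 1 ≤ Fintype.card S.X := by
  have : ∃ k, k ∉ ({i, j} : Finset S.I) := by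
    by_contra hcon
    push Not at hcon
    have h1 : (Finset.univ : Finset S.I) ⊆ {i, j} := fun k _ => hcon k
    have h2 := Finset.card_le_card h1
    rw [Finset.card_pair hij] at h2
    have h3 := S.hI
    have h4 : (Finset.univ : Finset S.I).card = Fintype.card S.I := rfl
    have h5 : @Fintype.card S.I S.fin = Fintype.card S.I := rfl
    omega
  obtain ⟨k, hk⟩ := this
  have hs : ∑ x ∈ insert k {i, j}, S.n x ≤ ∑ x, S.n x :=
    Finset.sum_le_sum_of_subset (Finset.subset_univ _)
  rw [Finset.sum_insert hk, Finset.sum_pair hij] at hs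
  have := S.h1 k
  rw [card_X]
  omega

theorem exists_ne (i : S.I) : ∃ j : S.I, i ≠ j := by
  by_contra hcon
  push Not at hcon
  have h1 : (Finset.univ : Finset S.I) ⊆ {i} := fun k _ => by simp [hcon k]
  have h2 := Finset.card_le_card h1
  rw [Finset.card_singleton] at h2
  have h3 := S.hI
  have h4 : (Finset.univ : Finset S.I).card = Fintype.card S.I := rfl
  have h5 : @Fintype.card S.I S.fin = Fintype.card S.I := rfl
  omega

theorem n_le (i : S.I) : S.n i + 2 ≤ Fintype.card S.X := by
  obtain ⟨j, hj⟩ := S.exists_ne i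
  have := S.three_sum hj
  have := S.h1 j
  omega

theorem A_one_ge : 3 ≤ S.A 1 := by
  rw [A_one]; exact S.hI

theorem card_ge : 3 ≤ Fintype.card S.X := by
  have h := S.A_one_ge
  unfold A at h
  obtain ⟨i, -⟩ := Finset.card_pos.1 (by omega : 0 < (Finset.univ.filter fun i => 1 ≤ S.n i).card)
  have := S.n_le i
  have := S.h1 i
  omega

theorem A_anti {k l : ℕ} (h : k ≤ l) : S.A l ≤ S.A k := by
  unfold A
  refine Finset.card_le_card fun i hi => ?_
  simp only [Finset.mem_filter, Finset.mem_univ, true_and] at hi ⊢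
  omega

theorem A_zero_of {k : ℕ} (h : Fintype.card S.X ≤ k + 1) : S.A k = 0 := by
  unfold A
  rw [Finset.card_eq_zero, Finset.filter_eq_empty_iff]
  intro i _
  have := S.n_le i
  omega

theorem A_pos {k : ℕ} (h : S.A k ≠ 0) : ∃ i, k ≤ S.n i := by
  unfold A at h
  obtain ⟨i, hi⟩ := Finset.card_pos.1 (Nat.pos_of_ne_zero h)
  exact ⟨i, by simpa using hi⟩

theorem A_zero {k : ℕ} (h : S.A k = 0) (i : S.I) : S.n i < k := by
  unfold A at h
  rw [Finset.card_eq_zero, Finset.filter_eq_empty_iff] at h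
  have := h (Finset.mem_univ i)
  omega

theorem A_le_one {k : ℕ} (h : Fintype.card S.X + 1 ≤ 2 * k) : S.A k ≤ 1 := by
  unfold A
  rw [Finset.card_le_one]
  intro i hi j hj
  simp only [Finset.mem_filter, Finset.mem_univ, true_and] at hi hj
  by_contra hne
  have := S.three_sum hne
  omega

theorem A_long {k : ℕ} (h : Fintype.card S.X + 1 ≤ 2 * k) (h1 : S.A k = 1)
    (h2 : S.A (k + 1) = 0) : S.A (Fintype.card S.X - k) = 1 ∧ k + 2 ≤ Fintype.card S.X := by
  obtain ⟨i, hi⟩ := S.A_pos (k := k) (by omega)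
  have hi' := S.A_zero h2 i
  have hle := S.n_le i
  refine ⟨?_, by omega⟩
  unfold A
  rw [Finset.card_eq_one]
  refine ⟨i, ?_⟩
  ext j
  simp only [Finset.mem_filter, Finset.mem_univ, true_and, Finset.mem_singleton]
  constructor
  · intro hj
    by_contra hne
    have := S.three_sum hne
    omega
  · rintro rfl; omega

theorem s_le_A (k : ℕ) : S.s k ≤ S.A k := by
  unfold A s
  refine Finset.card_le_card fun i hi => ?_
  simp only [Finset.mem_filter, Finset.mem_univ, true_and] at hi ⊢
  exact hi.2

theorem s_small {k : ℕ} (hk : k ≤ 3) : S.s k = S.s 3 := by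
  unfold s
  congr 1
  ext i
  have := S.h3 i
  simp only [Finset.mem_filter, Finset.mem_univ, true_and]
  constructor
  · rintro ⟨h, -⟩; exact ⟨h, this h⟩
  · rintro ⟨h, h'⟩; exact ⟨h, by omega⟩

theorem s_const {k : ℕ} (i : S.I) (hi : k + 1 ≤ S.n i) (hN : Fintype.card S.X ≤ S.n i + k) :
    S.s (k + 1) = S.s k := by
  unfold s
  congr 1
  ext j
  simp only [Finset.mem_filter, Finset.mem_univ, true_and]
  refine and_congr_right fun _ => ⟨fun h => by omega, fun h => ?_⟩
  by_cases hij : i = j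
  · subst hij; exact hi
  · have := S.three_sum hij
    omega

theorem w_lt {k : ℕ} (hk : S.A k = 0) (x : S.X) : S.rt.w x < k := by
  have h := S.A_zero hk x.i
  have h1 := S.h1 x.i
  rw [w_eq]
  unfold wt
  split_ifs <;> omega

/-- Same counts for all partitions. -/
def Same (S S' : SD) : Prop :=
  Fintype.card S.X = Fintype.card S'.X ∧
  ∀ lam : Multiset ℕ, (∀ i ∈ lam, 0 < i) → lam.sum = Fintype.card S.X + 1 →
    (Finset.univ.filter fun C : Finset S.X => S.rt.sizes C = lam).card =
    (Finset.univ.filter fun C : Finset S'.X => S'.rt.sizes C = lam).card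

theorem Same.symm {S S' : SD} (h : Same S S') : Same S' S :=
  ⟨h.1.symm, fun lam h1 h2 => (h.2 lam h1 (by rw [h.1]; exact h2)).symm⟩

theorem two_ne (k : ℕ) (h2 : 2 * k ≠ Fintype.card S.X + 1) (hk : k ≤ Fintype.card S.X) :
    (Finset.univ.filter fun C : Finset S.X =>
      S.rt.sizes C = {Fintype.card S.X + 1 - k, k}).card =
    S.rt.a k + S.rt.a (Fintype.card S.X + 1 - k) := by
  rw [S.rt.count_two k hk, RT.a, RT.a, Finset.filter_or, Finset.card_union_of_disjoint]
  rw [Finset.disjoint_filter]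
  intro x _ h h'
  omega

theorem two_eq (k : ℕ) (h2 : 2 * k = Fintype.card S.X + 1) (hk : k ≤ Fintype.card S.X) :
    (Finset.univ.filter fun C : Finset S.X =>
      S.rt.sizes C = {Fintype.card S.X + 1 - k, k}).card = S.rt.a k := by
  rw [S.rt.count_two k hk, RT.a]
  congr 1
  ext x
  simp only [Finset.mem_filter, Finset.mem_univ, true_and]
  omega

variable {S} {S' : SD}

theorem Same.a_ne (h : Same S S') (k : ℕ) (hk1 : 1 ≤ k) (hk : k ≤ Fintype.card S.X)
    (h2 : 2 * k ≠ Fintype.card S.X + 1) :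
    S.rt.a k + S.rt.a (Fintype.card S.X + 1 - k) =
    S'.rt.a k + S'.rt.a (Fintype.card S.X + 1 - k) := by
  have e := h.2 {Fintype.card S.X + 1 - k, k}
    (by intro i hi; simp only [Multiset.insert_eq_cons, Multiset.mem_cons,
          Multiset.mem_singleton] at hi; omega)
    (by simp only [Multiset.insert_eq_cons, Multiset.sum_cons, Multiset.sum_singleton]; omega)
  rw [S.two_ne k h2 hk] at e
  have hc := h.1
  have e' := S'.two_ne k (by omega) (by omega)
  rw [← hc] at e'
  rw [e, e']

theorem Same.a_eq (h : Same S S') (k : ℕ) (h2 : 2 * k = Fintype.card S.X + 1) :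
    S.rt.a k = S'.rt.a k := by
  have e := h.2 {Fintype.card S.X + 1 - k, k}
    (by intro i hi; simp only [Multiset.insert_eq_cons, Multiset.mem_cons,
          Multiset.mem_singleton] at hi; omega)
    (by simp only [Multiset.insert_eq_cons, Multiset.sum_cons, Multiset.sum_singleton]; omega)
  rw [S.two_eq k h2 (by omega)] at e
  have hc := h.1
  have e' := S'.two_eq k (by omega) (by omega)
  rw [← hc] at e'
  rw [e, e']

theorem Same.base (h : Same S S') : S.A 1 = S'.A 1 ∧ S.s 3 = S'.s 3 := by
  have hc := h.1
  have hN := S.card_ge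
  have e1 := h.a_ne 1 le_rfl (by omega) (by omega)
  rw [S.a_k (_ - 1) (by omega), S'.a_k (_ - 1) (by omega), S.A_zero_of (k := _ - 1) (by omega),
    S'.A_zero_of (k := _ - 1) (by omega), a_one, a_one] at e1
  have e2 := h.2 (3 ::ₘ Multiset.replicate (Fintype.card S.X - 2) 1)
    (by
      intro i hi
      simp only [Multiset.mem_cons, Multiset.mem_replicate] at hi
      omega)
    (by simp only [Multiset.sum_cons, Multiset.sum_replicate, smul_eq_mul]; omega)
  let ix : S.X → ℕ := fun x => (Fintype.equivFin S.X x).1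
  have hix : Function.Injective ix := fun x y hxy => (Fintype.equivFin S.X).injective (Fin.ext hxy)
  let ix' : S'.X → ℕ := fun x => (Fintype.equivFin S'.X x).1
  have hix' : Function.Injective ix' :=
    fun x y hxy => (Fintype.equivFin S'.X).injective (Fin.ext hxy)
  rw [S.rt.count_adj (by omega) ix hix, hc, S'.rt.count_adj (by omega) ix' hix'] at e2
  have e3 := S.adj_card ix hix
  have e4 := S'.adj_card ix' hix'
  rw [e2] at e3
  have g := S.A_one_ge
  have g' := S'.A_one_ge
  rw [hc] at e3
  generalize Finset.card _ = P at e3 e4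
  generalize Fintype.card S'.X = N at e3 e4
  generalize S.A 1 = a at *
  generalize S'.A 1 = b at *
  generalize S.s 3 = p at *
  generalize S'.s 3 = q at *
  obtain ⟨a, rfl⟩ : ∃ c, a = c + 1 := ⟨a - 1, by omega⟩
  obtain ⟨b, rfl⟩ : ∃ c, b = c + 1 := ⟨b - 1, by omega⟩
  simp only [Nat.add_sub_cancel] at e3 e4
  have hab : a = b := by
    rcases lt_trichotomy a b with hlt | hlt | hlt
    · nlinarith
    · exact hlt
    · nlinarith
  subst hab
  omega

theorem Same.A_ne (h : Same S S') (k : ℕ) (hk1 : 1 ≤ k) (h2 : 2 * k < Fintype.card S.X + 1) :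
    S.A k + S.A (Fintype.card S.X + 1 - k) = S'.A k + S'.A (Fintype.card S.X + 1 - k) := by
  have hc := h.1
  obtain ⟨b1, b2⟩ := h.base
  have hN := S.card_ge
  rcases (by omega : k = 1 ∨ k = 2 ∨ 3 ≤ k) with rfl | rfl | hk
  · rw [b1, S.A_zero_of (k := _ - 1) (by omega), S'.A_zero_of (k := _ - 1) (by omega)]
  · have e := h.a_ne 2 (by omega) (by omega) (by omega)
    rw [S.a_k (_ - 2) (by omega), S'.a_k (_ - 2) (by omega)] at e
    have := S.a_two
    have := S'.a_two
    omega
  · have e := h.a_ne k hk1 (by omega) (by omega)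
    rwa [S.a_k _ hk, S'.a_k _ hk, S.a_k _ (by omega), S'.a_k _ (by omega)] at e

theorem Same.A_half (h : Same S S') (k : ℕ) (h2 : 2 * k = Fintype.card S.X + 1) :
    S.A k = S'.A k := by
  obtain ⟨b1, b2⟩ := h.base
  have hN := S.card_ge
  have e := h.a_eq k h2
  rcases (by omega : k = 2 ∨ 3 ≤ k) with rfl | hk
  · have := S.a_two
    have := S'.a_two
    omega
  · rwa [S.a_k _ hk, S'.a_k _ hk] at e

theorem Same.no_first (h : Same S S') (k : ℕ) (hk : Fintype.card S.X + 1 ≤ 2 * k)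
    (ih : S.A (k + 1) = S'.A (k + 1)) : ¬ (S.A k = 0 ∧ S'.A k = 1) := by
  rintro ⟨h0, h1⟩
  have hc := h.1
  have hz : S.A (k + 1) = 0 := by have := S.A_anti (show k ≤ k + 1 by omega); omega
  have hl := S'.A_long (by omega) h1 (by omega)
  rw [← hc] at hl
  by_cases he : 2 * k = Fintype.card S.X + 1
  · have := h.A_half k he
    omega
  · have e1 := h.A_ne (Fintype.card S.X - k) (by omega) (by omega)
    rw [show Fintype.card S.X + 1 - (Fintype.card S.X - k) = k + 1 by omega] at e1
    have e2 := h.A_ne (Fintype.card S.X - k + 1) (by omega) (by omega)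
    rw [show Fintype.card S.X + 1 - (Fintype.card S.X - k + 1) = k by omega] at e2
    have e3 := S.A_anti (Nat.le_succ (Fintype.card S.X - k))
    have e4 := S'.A_anti (show Fintype.card S.X - k + 1 ≤ k by omega)
    simp only [Nat.succ_eq_add_one] at e3
    omega

theorem Same.A_high (h : Same S S') (m : ℕ) : ∀ k, Fintype.card S.X ≤ k + m →
    Fintype.card S.X + 1 ≤ 2 * k → S.A k = S'.A k := by
  have hc := h.1
  induction m with
  | zero =>
    intro k hk _
    rw [S.A_zero_of (by omega), S'.A_zero_of (by omega)]
  | succ m ih =>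
    intro k hk h2
    have ih := ih (k + 1) (by omega) (by omega)
    have g1 := h.no_first k h2 ih
    have g2 := h.symm.no_first k (by omega) ih.symm
    have := S.A_le_one h2
    have := S'.A_le_one (k := k) (by omega)
    omega

theorem Same.A_eq (h : Same S S') (k : ℕ) (hk : 1 ≤ k) : S.A k = S'.A k := by
  by_cases h2 : Fintype.card S.X + 1 ≤ 2 * k
  · exact h.A_high (Fintype.card S.X) k (by omega) h2
  · have e := h.A_ne k hk (by omega)
    have := h.A_high (Fintype.card S.X) (Fintype.card S.X + 1 - k) (by omega) (by omega)
    omega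

theorem Same.s_ge (h : Same S S') (k : ℕ) (hk : 3 ≤ k) : S.s k = S'.s k := by
  have hc := h.1
  induction k, hk using Nat.le_induction with
  | base => exact h.base.2
  | succ k hk ih =>
    by_cases hA : S.A (k + 1) = 0
    · have h1 := S.s_le_A (k + 1)
      have h2 := S'.s_le_A (k + 1)
      rw [← h.A_eq (k + 1) (by omega)] at h2
      omega
    have hA' : S'.A (k + 1) ≠ 0 := by rwa [← h.A_eq (k + 1) (by omega)]
    by_cases h2 : 2 * (k + 1) < Fintype.card S.X + 1
    · by_cases hB : S.A (Fintype.card S.X + 1 - (k + 1)) = 0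
      · have hB' : S'.A (Fintype.card S.X + 1 - (k + 1)) = 0 := by
          rwa [← h.A_eq _ (by omega)]
        have e := h.2 ((Fintype.card S.X + 1 - (k + 1)) ::ₘ {1, (k + 1) - 1})
          (by
            intro i hi
            simp only [Multiset.insert_eq_cons, Multiset.mem_cons, Multiset.mem_singleton] at hi
            omega)
          (by
            simp only [Multiset.insert_eq_cons, Multiset.sum_cons, Multiset.sum_singleton]
            omega)
        rw [S.rt.count_three (k + 1) (by omega) h2 (S.w_lt hB)] at e
        have e' := S'.rt.count_three (k + 1) (by omega) (by omega)
          (S'.w_lt (by rw [← hc]; exact hB'))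
        rw [← hc] at e'
        rw [e'] at e
        have n1 := S.nk (k + 1) (by omega)
        have n2 := S'.nk (k + 1) (by omega)
        rw [e] at n1
        rw [Nat.add_sub_cancel] at n1 n2
        rw [h.A_eq (k + 1) (by omega), h.A_eq k (by omega), h.base.1, h.base.2, ih] at n1
        omega
      · have hB' : S'.A (Fintype.card S.X + 1 - (k + 1)) ≠ 0 := by
          rwa [← h.A_eq _ (by omega)]
        obtain ⟨i, hi⟩ := S.A_pos hB
        obtain ⟨i', hi'⟩ := S'.A_pos hB'
        rw [S.s_const i (by omega) (by omega), S'.s_const i' (by omega) (by omega), ih]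
    · obtain ⟨i, hi⟩ := S.A_pos hA
      obtain ⟨i', hi'⟩ := S'.A_pos hA'
      rw [S.s_const i (by omega) (by omega), S'.s_const i' (by omega) (by omega), ih]

theorem Same.s_eq (h : Same S S') (k : ℕ) : S.s k = S'.s k := by
  by_cases hk : 3 ≤ k
  · exact h.s_ge k hk
  · rw [S.s_small (by omega), S'.s_small (by omega), h.base.2]

theorem cnt_ty (S : SD) (k : ℕ) :
    (Finset.univ.filter fun i => S.ty i ∧ S.n i = k).card + S.s (k + 1) = S.s k := by
  unfold s
  rw [← Finset.card_union_of_disjoint, ← Finset.filter_or]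
  · congr 1
    ext i
    simp only [Finset.mem_filter, Finset.mem_univ, true_and]
    rw [← and_or_left]
    exact and_congr_right fun _ => by omega
  · rw [Finset.disjoint_filter]
    intro i _ h h'
    omega

theorem cnt_nty (S : SD) (k : ℕ) :
    (Finset.univ.filter fun i => ¬ S.ty i ∧ S.n i = k).card +
    (Finset.univ.filter fun i => S.ty i ∧ S.n i = k).card + S.A (k + 1) = S.A k := by
  unfold A
  rw [← Finset.card_union_of_disjoint, ← Finset.filter_or, ← Finset.card_union_of_disjoint,
    ← Finset.filter_or]
  · congr 1
    ext i
    simp only [Finset.mem_filter, Finset.mem_univ, true_and]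
    by_cases ht : S.ty i <;> simp only [ht, true_and, false_and, not_true, not_false_iff, or_false,
      false_or] <;> omega
  · rw [Finset.disjoint_filter]
    intro i _ h h'
    omega
  · rw [Finset.disjoint_filter]
    intro i _ h h'
    exact h.1 h'.1

theorem Same.equiv (h : Same S S') :
    ∃ σ : S.I ≃ S'.I, ∀ i, S'.n (σ i) = S.n i ∧ (S'.ty (σ i) ↔ S.ty i) := by
  have key : ∀ c : Prop × ℕ, Nonempty ({i // (S.ty i, S.n i) = c} ≃ {i // (S'.ty i, S'.n i) = c}) := by
    rintro ⟨c, k⟩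
    refine ⟨Fintype.equivOfCardEq ?_⟩
    rw [Fintype.card_subtype, Fintype.card_subtype]
    by_cases hk : 1 ≤ k
    · have e1 := S.cnt_ty k
      have e2 := S'.cnt_ty k
      have e3 := S.cnt_nty k
      have e4 := S'.cnt_nty k
      have a1 := h.A_eq k hk
      have a2 := h.A_eq (k + 1) (by omega)
      have s1 := h.s_eq k
      have s2 := h.s_eq (k + 1)
      by_cases hc : c
      · simp only [Prod.mk.injEq, hc, eq_iff_iff, iff_true]
        omega
      · simp only [Prod.mk.injEq, hc, eq_iff_iff, iff_false]
        omega
    · rw [Finset.filter_false_of_mem, Finset.filter_false_of_mem]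
      · rfl
      · intro i _ hi
        have := S'.h1 i
        simp only [Prod.mk.injEq] at hi
        omega
      · intro i _ hi
        have := S.h1 i
        simp only [Prod.mk.injEq] at hi
        omega
  have E := fun c => Classical.choice (key c)
  refine ⟨Equiv.ofFiberEquiv (f := fun i => (S.ty i, S.n i)) (g := fun i => (S'.ty i, S'.n i))
    (fun c => E c), fun i => ?_⟩
  have := Equiv.ofFiberEquiv_map (f := fun i => (S.ty i, S.n i))
    (g := fun i => (S'.ty i, S'.n i)) (fun c => E c) i
  simp only [Prod.mk.injEq] at this
  exact ⟨this.2, by rw [this.1]⟩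

theorem iso_of_equiv {V V' : Type} (T : SimpleGraph V) (T' : SimpleGraph V')
    (e : Option S.X ≃ V) (e' : Option S'.X ≃ V') (hp : S.rt.Pres T e) (hp' : S'.rt.Pres T' e')
    (σ : S.I ≃ S'.I) (hσ : ∀ i, S'.n (σ i) = S.n i ∧ (S'.ty (σ i) ↔ S.ty i)) :
    Nonempty (T ≃g T') := by
  let f : S.X → S'.X := fun x => ⟨σ x.i, x.j, by rw [(hσ _).1]; exact x.h⟩
  have hf : Function.Bijective f := by
    constructor
    · intro x y hxy
      have h1 := congrArg X.i hxy
      have h2 := congrArg X.j hxy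
      exact X_ext (σ.injective h1) h2
    · intro y
      refine ⟨⟨σ.symm y.i, y.j, ?_⟩, ?_⟩
      · rw [← (hσ _).1, Equiv.apply_symm_apply]; exact y.h
      · exact X_ext (σ.apply_symm_apply _) rfl
  let E := Equiv.ofBijective f hf
  have hE : ∀ x, E x = f x := fun _ => rfl
  have hpar : ∀ x, S'.rt.p (E x) = (S.rt.p x).map E := by
    intro x
    change S'.par (f x) = (S.par x).map E
    unfold par
    by_cases hx : x.j = 0
    · rw [if_pos hx, if_pos (show (f x).j = 0 from hx)]
      rfl
    · rw [if_neg hx, if_neg (show ¬ (f x).j = 0 from hx), Option.map_some, hE]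
      congr 1
      refine X_ext rfl ?_
      change S'.pj (σ x.i) x.j = S.pj x.i x.j
      unfold pj
      rw [(hσ x.i).1]
      simp only [(hσ x.i).2]
  refine ⟨⟨(e.symm.trans (Equiv.optionCongr E)).trans e', ?_⟩⟩
  intro u v
  obtain ⟨a, rfl⟩ := e.surjective u
  obtain ⟨b, rfl⟩ := e.surjective v
  simp only [Equiv.trans_apply, Equiv.symm_apply_apply]
  rw [hp' _ _, hp]
  have aux : ∀ a b : Option S.X, (∃ x, (Equiv.optionCongr E) a = some x ∧
      S'.rt.p x = (Equiv.optionCongr E) b) ↔ ∃ x, a = some x ∧ S.rt.p x = b := by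
    intro a b
    constructor
    · rintro ⟨x, h1, h2⟩
      obtain ⟨y, rfl⟩ := E.surjective x
      have ha : a = some y := (Equiv.optionCongr E).injective (by rw [h1]; rfl)
      refine ⟨y, ha, (Equiv.optionCongr E).injective ?_⟩
      rw [← h2, hpar]; rfl
    · rintro ⟨x, rfl, rfl⟩
      exact ⟨E x, rfl, hpar x⟩
  rw [aux, aux]

end SD
end PartFive

/-- Theorem 2: two 2-spiders of the same order with the same coefficients `c_λ` for every
partition `λ` of their order (equivalently, with equal chromatic symmetric functions) are
isomorphic as graphs. -/
theorem twoSpiders_distinguished {V₁ V₂ : Type} [Fintype V₁] [Fintype V₂]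
    (T₁ : SimpleGraph V₁) (T₂ : SimpleGraph V₂) (d : ℕ)
    (hd₁ : Fintype.card V₁ = d) (hd₂ : Fintype.card V₂ = d)
    (h₁ : IsTwoSpider T₁) (h₂ : IsTwoSpider T₂)
    (hc : ∀ lam : Multiset ℕ, (∀ i ∈ lam, 0 < i) → lam.sum = d →
      cCoeff T₁ lam = cCoeff T₂ lam) :
    Nonempty (T₁ ≃g T₂) := by
  obtain ⟨S, e, hp⟩ := model_exists T₁ h₁
  obtain ⟨S', e', hp'⟩ := model_exists T₂ h₂
  have c1 : Fintype.card S.X + 1 = d := by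
    rw [← hd₁, ← Fintype.card_congr e, Fintype.card_option]
  have c2 : Fintype.card S'.X + 1 = d := by
    rw [← hd₂, ← Fintype.card_congr e', Fintype.card_option]
  have hs : SD.Same S S' := by
    refine ⟨by omega, fun lam hpos hsum => ?_⟩
    have := hc lam hpos (hsum.trans c1)
    rwa [S.rt.cCoeff_eq T₁ e hp, S'.rt.cCoeff_eq T₂ e' hp'] at this
  obtain ⟨σ, hσ⟩ := hs.equiv
  exact SD.iso_of_equiv T₁ T₂ e e' hp hp' σ hσ
end

section
/- Let T be a 2-spider of order d ≥ 6 having exactly three legs, two of which have order one. Then either ρ_{3,2}(T) = 1 and T has 3 leaves, or ρ_{3,2}(T) = 2 and T has 4 leaves; moreover, in both cases the number of 2-legs of T equals ρ_{3,2}(T) − 1. -/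
open SimpleGraph

/-- Labelling of a rooted subtree. -/
structure Lab {V W : Type} (T : SimpleGraph V) (t u : V) (R : SimpleGraph W) (r : W)
    (g : W → V) : Prop where
  inj : Function.Injective g
  root : g r = u
  adj : ∀ i j, T.Adj (g i) (g j) ↔ R.Adj i j
  ne : ∀ i, g i ≠ t
  closed : ∀ i y, T.Adj (g i) y → (y = t ∧ g i = u) ∨ ∃ j, y = g j

theorem lab_of {V W : Type} {T : SimpleGraph V} (hT : T.IsAcyclic) {t u : V}
    {R : SimpleGraph W} {r : W} (h : IsRootedSubtree T s(t, u) u R r) :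
    T.Adj t u ∧ ∃ g : W → V, Lab T t u R r g ∧
      ((T.deleteEdges {s(t, u)}).connectedComponentMk u).supp = Set.range g := by
  obtain ⟨he, -, φ, hφ⟩ := h
  have htu : T.Adj t u := he
  refine ⟨htu, fun i => (φ i : V), ?_, ?_⟩
  · have hb : ¬ (T.deleteEdges {s(t, u)}).Reachable t u :=
      isBridge_iff.1 (isAcyclic_iff_forall_adj_isBridge.1 hT htu)
    have hne : ∀ i, (φ i : V) ≠ t := by
      intro i hi
      have := (φ i).2
      rw [ConnectedComponent.mem_supp_iff, ConnectedComponent.eq, hi] at this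
      exact hb this
    refine ⟨fun i j hij => φ.injective (Subtype.ext hij), hφ, ?_, hne, ?_⟩
    · intro i j
      rw [← φ.map_adj_iff, induce_adj, deleteEdges_adj]
      have h1 := hne i
      have h2 := hne j
      simp only [Set.mem_singleton_iff, Sym2.eq_iff]
      tauto
    · intro i y hy
      by_cases hyt : s((φ i : V), y) = s(t, u)
      · rw [Sym2.eq_iff] at hyt
        have := hne i
        tauto
      · right
        have hadj : (T.deleteEdges {s(t, u)}).Adj (φ i : V) y := by
          rw [deleteEdges_adj]; exact ⟨hy, hyt⟩
        have hm : y ∈ ((T.deleteEdges {s(t, u)}).connectedComponentMk u).supp := by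
          have := (φ i).2
          rw [ConnectedComponent.mem_supp_iff, ConnectedComponent.eq] at this ⊢
          exact hadj.symm.reachable.trans this
        obtain ⟨j, hj⟩ := φ.surjective ⟨y, hm⟩
        exact ⟨j, by rw [hj]⟩
  · ext y
    constructor
    · intro hm
      obtain ⟨j, hj⟩ := φ.surjective ⟨y, hm⟩
      exact ⟨j, by simp only [hj]⟩
    · rintro ⟨j, rfl⟩
      exact (φ j).2

theorem of_lab {V W : Type} {T : SimpleGraph V} {t u : V}
    {R : SimpleGraph W} {r : W} (htu : T.Adj t u) {g : W → V} (h : Lab T t u R r g)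
    (hc : ∀ i, i = r ∨ R.Adj i r) : IsRootedSubtree T s(t, u) u R r := by
  have hadj : ∀ i j, (T.deleteEdges {s(t, u)}).Adj (g i) (g j) ↔ R.Adj i j := by
    intro i j
    rw [deleteEdges_adj, h.adj]
    have h1 := h.ne i
    have h2 := h.ne j
    simp only [Set.mem_singleton_iff, Sym2.eq_iff]
    tauto
  have hs : ((T.deleteEdges {s(t, u)}).connectedComponentMk u).supp = Set.range g := by
    ext y
    rw [ConnectedComponent.mem_supp_iff, ConnectedComponent.eq]
    constructor
    · intro hy
      have := hy.symm
      rw [reachable_iff_reflTransGen] at this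
      induction this with
      | refl => exact ⟨r, h.root⟩
      | tail hab hbc ih =>
        rename_i b c
        obtain ⟨i, rfl⟩ := ih ((reachable_iff_reflTransGen _ _).2 hab).symm
        rw [deleteEdges_adj] at hbc
        rcases h.closed i c hbc.1 with ⟨h1, h2⟩ | ⟨j, hj⟩
        · exact absurd (by rw [h1, h2]; exact Sym2.eq_swap) hbc.2
        · exact ⟨j, hj.symm⟩
    · rintro ⟨i, rfl⟩
      rcases hc i with rfl | hi
      · rw [h.root]
      · have := (hadj i r).2 hi
        rw [h.root] at this
        exact this.reachable
  refine ⟨htu, by simp, ?_⟩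
  rw [hs]
  refine ⟨⟨Equiv.ofInjective g h.inj, ?_⟩, ?_⟩
  · intro a b
    rw [induce_adj]
    exact hadj a b
  · exact h.root

theorem rtwo_adj {n : ℕ} (hn : 3 ≤ n) (i j : Fin n) : (Rtwo n).Adj i j ↔
    (j.val = i.val + 1 ∧ j.val + 2 ≤ n) ∨ (i.val + 3 = n ∧ j.val + 1 = n) ∨
    (i.val = j.val + 1 ∧ i.val + 2 ≤ n) ∨ (j.val + 3 = n ∧ i.val + 1 = n) := by
  unfold Rtwo
  rw [fromRel_adj, ne_eq, Fin.ext_iff]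
  omega

/-- Cherry at `v` with parent `w`. -/
def Cherry {V : Type} (T : SimpleGraph V) (v w : V) : Prop :=
  ∃ a b, a ≠ b ∧ w ≠ a ∧ w ≠ b ∧ (∀ y, T.Adj v y ↔ y = w ∨ y = a ∨ y = b) ∧
    (∀ y, T.Adj a y ↔ y = v) ∧ (∀ y, T.Adj b y ↔ y = v)

theorem cherry_of {V : Type} {T : SimpleGraph V} (hT : T.IsAcyclic) {v w : V}
    (h : IsRootedSubtree T s(w, v) v (Rtwo 3) 0) : Cherry T v w := by
  obtain ⟨hwv, g, hg, -⟩ := lab_of hT h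
  have hr := hg.root
  have hinj : ∀ i j, g i = g j → i = j := fun i j h => hg.inj h
  have hA := hg.adj
  have hne := hg.ne
  have hcl := hg.closed
  simp only [rtwo_adj (le_refl 3)] at hA
  simp only [Fin.forall_fin_succ, Fin.exists_fin_succ] at *
  simp at *
  have hirr : ∀ y, ¬ T.Adj y y := fun y => T.irrefl
  refine ⟨g 1, g 2, ?_, ?_, ?_, ?_, ?_, ?_⟩ <;> grind [SimpleGraph.adj_comm]

theorem of_cherry {V : Type} {T : SimpleGraph V} {v w : V}
    (h : Cherry T v w) : IsRootedSubtree T s(w, v) v (Rtwo 3) 0 := by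
  obtain ⟨a, b, hab, hwa, hwb, hv, ha, hb⟩ := h
  have hva : T.Adj v a := by rw [hv]; tauto
  have hvb : T.Adj v b := by rw [hv]; tauto
  have hvw : T.Adj v w := by rw [hv]; tauto
  have := hva.ne
  have := hvb.ne
  have := hvw.ne
  apply of_lab (g := ![v, a, b]) hvw.symm
  · constructor
    · intro i j
      fin_cases i <;> fin_cases j <;> simp <;> grind
    · rfl
    · intro i j
      rw [rtwo_adj (le_refl 3)]
      fin_cases i <;> fin_cases j <;> simp <;> grind
    · intro i
      fin_cases i <;> simp <;> grind
    · intro i y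
      simp only [Fin.exists_fin_succ]
      fin_cases i <;> simp <;> grind
  · intro i
    rw [rtwo_adj (le_refl 3)]
    fin_cases i <;> simp

theorem rho_eq {V : Type} [Fintype V] {T : SimpleGraph V} (hT : T.IsAcyclic) :
    rho T (Rtwo 3) 0 = Set.ncard {p : V × V | Cherry T p.1 p.2} := by
  unfold rho
  symm
  apply Set.ncard_congr (fun p _ => (s(p.2, p.1), p.1))
  · rintro ⟨v, w⟩ h
    exact of_cherry h
  · rintro ⟨v, w⟩ ⟨v', w'⟩ _ _ h
    simp only [Prod.mk.injEq, Sym2.eq_iff] at h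
    grind
  · rintro ⟨e, v⟩ h
    obtain ⟨w, hw⟩ := Sym2.mem_iff_exists.1 h.2.1
    change e = s(v, w) at hw
    subst hw
    have h' : IsRootedSubtree T s(w, v) v (Rtwo 3) 0 := by
      rw [Sym2.eq_swap]; exact h
    exact ⟨(v, w), cherry_of hT h', by simp [Sym2.eq_swap]⟩

theorem leaf_of_order_one {V : Type} {T : SimpleGraph V} {t u : V} (htu : T.Adj t u)
    (h : legOrder T t u = 1) : ∀ y, T.Adj u y ↔ y = t := by
  intro y
  constructor
  · intro hy
    by_contra hyt
    unfold legOrder at h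
    obtain ⟨a, ha⟩ := Set.ncard_eq_one.1 h
    have h1 : u ∈ ((T.deleteEdges {s(t, u)}).connectedComponentMk u).supp := by
      rw [ConnectedComponent.mem_supp_iff]
    have h2 : y ∈ ((T.deleteEdges {s(t, u)}).connectedComponentMk u).supp := by
      rw [ConnectedComponent.mem_supp_iff, ConnectedComponent.eq]
      have : (T.deleteEdges {s(t, u)}).Adj y u := by
        rw [deleteEdges_adj]
        refine ⟨hy.symm, ?_⟩
        have := hy.ne
        simp only [Set.mem_singleton_iff, Sym2.eq_iff]
        tauto
      exact this.reachable
    rw [ha, Set.mem_singleton_iff] at h1 h2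
    exact hy.ne (h1.trans h2.symm)
  · rintro rfl
    exact htu.symm

theorem leafCount_eq {V : Type} [Fintype V] (T : SimpleGraph V) :
    leafCount T = Set.ncard {v : V | ∃ w, ∀ y, T.Adj v y ↔ y = w} := by
  unfold leafCount
  congr 1
  ext v
  simp only [Set.mem_ofPred_eq, Set.ncard_eq_one, Set.ext_iff, mem_neighborSet,
    Set.mem_singleton_iff]

/-- Labelling of the whole tree. -/
structure Full {V : Type} (T : SimpleGraph V) (t u₁ u₂ : V) (m : ℕ) (A : ℕ → ℕ → Prop)
    (G : ℕ → V) : Prop where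
  hm : 3 ≤ m
  h12 : u₁ ≠ u₂
  n1 : ∀ y, T.Adj u₁ y ↔ y = t
  n2 : ∀ y, T.Adj u₂ y ↔ y = t
  nt : ∀ y, T.Adj t y ↔ y = u₁ ∨ y = u₂ ∨ y = G 0
  n0 : ∀ i < m, (T.Adj (G i) t ↔ i = 0)
  d1 : u₁ ≠ t
  d2 : u₂ ≠ t
  g1 : ∀ i < m, G i ≠ u₁
  g2 : ∀ i < m, G i ≠ u₂
  gt : ∀ i < m, G i ≠ t
  inj : ∀ i < m, ∀ j < m, G i = G j → i = j
  adj : ∀ i < m, ∀ j < m, (T.Adj (G i) (G j) ↔ A i j)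
  cov : ∀ x, x = t ∨ x = u₁ ∨ x = u₂ ∨ ∃ i < m, x = G i

theorem full_of {V : Type} [Fintype V] {T : SimpleGraph V} {t u₁ u₂ u₃ : V}
    (hd6 : 6 ≤ Fintype.card V) (hT : T.IsTree) (h12 : u₁ ≠ u₂) (h13 : u₁ ≠ u₃) (h23 : u₂ ≠ u₃)
    (hN : ∀ y, T.Adj t y ↔ y = u₁ ∨ y = u₂ ∨ y = u₃)
    (hl1 : ∀ y, T.Adj u₁ y ↔ y = t) (hl2 : ∀ y, T.Adj u₂ y ↔ y = t)
    {n : ℕ} (hn : 0 < n) (R : SimpleGraph (Fin n)) (A : ℕ → ℕ → Prop)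
    (hR : ∀ i j : Fin n, R.Adj i j ↔ A i j)
    (h : IsRootedSubtree T s(t, u₃) u₃ R ⟨0, hn⟩) :
    ∃ G, Full T t u₁ u₂ n A G := by
  obtain ⟨htu, g, hg, -⟩ := lab_of hT.isAcyclic h
  have h1 : T.Adj t u₁ := by rw [hN]; tauto
  have h2 : T.Adj t u₂ := by rw [hN]; tauto
  have hg1 : ∀ u, (∀ y, T.Adj u y ↔ y = t) → u ≠ u₃ → ∀ i, g i ≠ u := by
    intro u hu hne i hi
    have h3 := hg.closed i t (by rw [hi, hu])
    rcases h3 with ⟨-, h3⟩ | ⟨j, h3⟩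
    · exact hne (hi.symm.trans h3)
    · exact hg.ne j h3.symm
  have hcov : ∀ x, x = t ∨ x = u₁ ∨ x = u₂ ∨ ∃ i, x = g i := by
    intro x
    have := hT.1.preconnected t x
    rw [reachable_iff_reflTransGen] at this
    induction this with
    | refl => tauto
    | tail hab hbc ih =>
      rename_i b c
      rcases ih with rfl | rfl | rfl | ⟨i, rfl⟩
      · rw [hN] at hbc
        have := hg.root
        grind
      · grind
      · grind
      · have := hg.closed i c hbc
        grind
  have hm : 3 ≤ n := by
    classical
    have : (Finset.univ : Finset V) ⊆ {t, u₁, u₂} ∪ Finset.univ.image g := by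
      intro x _
      have := hcov x
      simp only [Finset.mem_union, Finset.mem_insert, Finset.mem_singleton, Finset.mem_image,
        Finset.mem_univ, true_and]
      grind
    have h3 := Finset.card_le_card this
    have h4 := Finset.card_union_le {t, u₁, u₂} (Finset.univ.image g)
    have h5 := Finset.card_le_three (a := t) (b := u₁) (c := u₂)
    have h6 := Finset.card_image_le (s := Finset.univ) (f := g)
    simp only [Finset.card_univ, Fintype.card_fin] at *
    omega
  have hr := hg.root
  refine ⟨fun k => if hk : k < n then g ⟨k, hk⟩ else t, hm, h12, hl1, hl2, ?_, ?_, h1.ne', h2.ne',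
    ?_, ?_, ?_, ?_, ?_, ?_⟩
  · intro y
    simp only [hn, dif_pos, hr]
    exact hN y
  · intro i hi
    simp only [hi, dif_pos]
    rw [adj_comm, hN]
    have a1 := hg1 _ hl1 h13 ⟨i, hi⟩
    have a2 := hg1 _ hl2 h23 ⟨i, hi⟩
    constructor
    · intro h
      have : g ⟨i, hi⟩ = g ⟨0, hn⟩ := by grind
      simpa using hg.inj this
    · rintro rfl
      exact Or.inr (Or.inr hr)
  · intro i hi
    simp only [hi, dif_pos]
    exact hg1 _ hl1 h13 _
  · intro i hi
    simp only [hi, dif_pos]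
    exact hg1 _ hl2 h23 _
  · intro i hi
    simp only [hi, dif_pos]
    exact hg.ne _
  · intro i hi j hj
    simp only [hi, hj, dif_pos]
    intro h
    simpa using hg.inj h
  · intro i hi j hj
    simp only [hi, hj, dif_pos]
    rw [hg.adj, hR]
  · intro x
    rcases hcov x with h | h | h | ⟨i, h⟩
    · tauto
    · tauto
    · tauto
    · refine Or.inr (Or.inr (Or.inr ⟨i, i.2, ?_⟩))
      simp [h]


theorem Full.nbr {V : Type} {T : SimpleGraph V} {t u₁ u₂ : V} {m : ℕ} {A : ℕ → ℕ → Prop}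
    {G : ℕ → V} (h : Full T t u₁ u₂ m A G) (i : ℕ) (hi : i < m) (y : V) :
    T.Adj (G i) y ↔ (y = t ∧ i = 0) ∨ ∃ j < m, y = G j ∧ A i j := by
  constructor
  · intro hy
    rcases h.cov y with rfl | rfl | rfl | ⟨j, hj, rfl⟩
    · exact Or.inl ⟨rfl, (h.n0 i hi).1 hy⟩
    · exact absurd ((h.n1 _).1 hy.symm) (h.gt i hi)
    · exact absurd ((h.n2 _).1 hy.symm) (h.gt i hi)
    · exact Or.inr ⟨j, hj, rfl, (h.adj i hi j hj).1 hy⟩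
  · rintro (⟨rfl, hy⟩ | ⟨j, hj, rfl, ha⟩)
    · exact (h.n0 i hi).2 hy
    · exact (h.adj i hi j hj).2 ha

/-- A leaf with two distinct neighbours is impossible. -/
theorem two_nbr {V : Type} {T : SimpleGraph V} {v a b w : V} (hab : a ≠ b) (ha : T.Adj v a)
    (hb : T.Adj v b) (h : ∀ y, T.Adj v y ↔ y = w) : False :=
  hab (((h a).1 ha).trans ((h b).1 hb).symm)

theorem path_case {V : Type} [Fintype V] {T : SimpleGraph V} {t u₁ u₂ : V} {m : ℕ} {G : ℕ → V}
    (hT : T.IsAcyclic) (h : Full T t u₁ u₂ m (fun i j => i + 1 = j ∨ j + 1 = i) G) :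
    rho T (Rtwo 3) 0 = 1 ∧ leafCount T = 3 := by
  have hm := h.hm
  have nt1 : T.Adj t u₁ := (h.nt _).2 (by tauto)
  have nt2 : T.Adj t u₂ := (h.nt _).2 (by tauto)
  have nt0 : T.Adj t (G 0) := (h.nt _).2 (by tauto)
  have up : ∀ i, i + 1 < m → T.Adj (G i) (G (i + 1)) := fun i hi =>
    (h.adj i (by omega) (i + 1) hi).2 (Or.inl rfl)
  -- every vertex other than the three leaves has two neighbours
  have inner : ∀ i, i + 1 < m → ∀ w, ¬ ∀ y, T.Adj (G i) y ↔ y = w := by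
    intro i hi w hw
    rcases Nat.eq_zero_or_pos i with rfl | hpos
    · exact two_nbr (h.gt 1 (by omega)) (up 0 hi) nt0.symm hw
    · obtain ⟨k, rfl⟩ : ∃ k, i = k + 1 := ⟨i - 1, by omega⟩
      refine two_nbr ?_ (up (k + 1) hi) (up k (by omega)).symm hw
      intro hh
      have := h.inj _ hi _ (by omega) hh
      omega
  constructor
  · rw [rho_eq hT, Set.ncard_eq_one]
    refine ⟨(t, G 0), ?_⟩
    ext ⟨v, w⟩
    simp only [Set.mem_ofPred_eq, Set.mem_singleton_iff, Prod.mk.injEq]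
    constructor
    · rintro ⟨a, b, hab, hwa, hwb, hv, ha, hb⟩
      have hva : T.Adj v a := (hv _).2 (by tauto)
      have hvb : T.Adj v b := (hv _).2 (by tauto)
      have hvw : T.Adj v w := (hv _).2 (by tauto)
      rcases h.cov v with rfl | rfl | rfl | ⟨i, hi, rfl⟩
      · refine ⟨rfl, ?_⟩
        have e1 : a ≠ G 0 := by
          rintro rfl
          exact inner 0 (by omega) _ ha
        have e2 : b ≠ G 0 := by
          rintro rfl
          exact inner 0 (by omega) _ hb
        have := hv (G 0)
        tauto
      · exact (two_nbr hab hva hvb h.n1).elim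
      · exact (two_nbr hab hva hvb h.n2).elim
      · exfalso
        rw [h.nbr i hi] at hva hvb hvw
        grind
    · rintro ⟨rfl, rfl⟩
      refine ⟨u₁, u₂, h.h12, h.g1 0 (by omega), h.g2 0 (by omega), ?_, h.n1, h.n2⟩
      intro y
      rw [h.nt]
      tauto
  · rw [leafCount_eq, Set.ncard_eq_three]
    refine ⟨u₁, u₂, G (m - 1), h.h12, (h.g1 _ (by omega)).symm, (h.g2 _ (by omega)).symm, ?_⟩
    ext v
    simp only [Set.mem_ofPred_eq, Set.mem_insert_iff, Set.mem_singleton_iff]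
    constructor
    · rintro ⟨w, hw⟩
      rcases h.cov v with rfl | rfl | rfl | ⟨i, hi, rfl⟩
      · exact (two_nbr h.h12 nt1 nt2 hw).elim
      · tauto
      · tauto
      · by_cases hi' : i + 1 < m
        · exact (inner i hi' w hw).elim
        · rw [show i = m - 1 by omega]; tauto
    · rintro (rfl | rfl | rfl)
      · exact ⟨t, h.n1⟩
      · exact ⟨t, h.n2⟩
      · refine ⟨G (m - 2), fun y => ?_⟩
        rw [h.nbr _ (by omega)]
        constructor
        · rintro (⟨_, h0⟩ | ⟨j, hj, rfl, hA⟩)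
          · omega
          · rw [show j = m - 2 by omega]
        · rintro rfl
          exact Or.inr ⟨m - 2, by omega, rfl, by omega⟩

theorem two_case {V : Type} [Fintype V] {T : SimpleGraph V} {t u₁ u₂ : V} {m : ℕ} {G : ℕ → V}
    (hT : T.IsAcyclic) (h : Full T t u₁ u₂ m (fun i j => (j = i + 1 ∧ j + 2 ≤ m) ∨
      (i + 3 = m ∧ j + 1 = m) ∨ (i = j + 1 ∧ i + 2 ≤ m) ∨ (j + 3 = m ∧ i + 1 = m)) G) :
    rho T (Rtwo 3) 0 = 2 ∧ leafCount T = 4 := by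
  have hm := h.hm
  have nt1 : T.Adj t u₁ := (h.nt _).2 (by tauto)
  have nt2 : T.Adj t u₂ := (h.nt _).2 (by tauto)
  have nt0 : T.Adj t (G 0) := (h.nt _).2 (by tauto)
  have up : ∀ i, i + 2 < m → T.Adj (G i) (G (i + 1)) := fun i hi =>
    (h.adj i (by omega) (i + 1) (by omega)).2 (by omega)
  have inner : ∀ i, i + 2 < m → ∀ w, ¬ ∀ y, T.Adj (G i) y ↔ y = w := by
    intro i hi w hw
    rcases Nat.eq_zero_or_pos i with rfl | hpos
    · exact two_nbr (h.gt 1 (by omega)) (up 0 hi) nt0.symm hw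
    · obtain ⟨k, rfl⟩ : ∃ k, i = k + 1 := ⟨i - 1, by omega⟩
      refine two_nbr ?_ (up (k + 1) hi) (up k (by omega)).symm hw
      intro hh
      have := h.inj _ (by omega) _ (by omega) hh
      omega
  have hl : ∀ i, m ≤ i + 2 → i < m → ∀ y, T.Adj (G i) y ↔ y = G (m - 3) := by
    intro i hi him y
    rw [h.nbr _ him]
    constructor
    · rintro (⟨_, h0⟩ | ⟨j, hj, rfl, hA⟩)
      · omega
      · rw [show j = m - 3 by omega]
    · rintro rfl
      exact Or.inr ⟨m - 3, by omega, rfl, by omega⟩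
  have hne : G (m - 2) ≠ G (m - 1) := by
    intro hh
    have := h.inj _ (by omega) _ (by omega) hh
    omega
  -- the parent of the branching vertex of the long leg
  obtain ⟨p, hp⟩ : ∃ p, p ≠ G (m - 2) ∧ p ≠ G (m - 1) ∧ (∀ y, T.Adj (G (m - 3)) y ↔
      y = p ∨ y = G (m - 2) ∨ y = G (m - 1)) ∧ ∀ w, ¬ ∀ y, T.Adj p y ↔ y = w := by
    rcases Nat.lt_or_ge 3 m with h3 | h3
    · refine ⟨G (m - 4), ?_, ?_, ?_, inner _ (by omega)⟩
      · intro hh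
        have := h.inj _ (by omega) _ (by omega) hh
        omega
      · intro hh
        have := h.inj _ (by omega) _ (by omega) hh
        omega
      · intro y
        rw [h.nbr _ (by omega)]
        constructor
        · rintro (⟨_, h0⟩ | ⟨j, hj, rfl, hA⟩)
          · omega
          · have : j = m - 4 ∨ j = m - 2 ∨ j = m - 1 := by omega
            rcases this with rfl | rfl | rfl <;> tauto
        · rintro (rfl | rfl | rfl)
          · exact Or.inr ⟨m - 4, by omega, rfl, by omega⟩
          · exact Or.inr ⟨m - 2, by omega, rfl, by omega⟩
          · exact Or.inr ⟨m - 1, by omega, rfl, by omega⟩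
    · refine ⟨t, (h.gt _ (by omega)).symm, (h.gt _ (by omega)).symm, ?_,
        fun w hw => two_nbr h.h12 nt1 nt2 hw⟩
      intro y
      rw [h.nbr _ (by omega)]
      constructor
      · rintro (⟨rfl, h0⟩ | ⟨j, hj, rfl, hA⟩)
        · tauto
        · have : j = m - 2 ∨ j = m - 1 := by omega
          rcases this with rfl | rfl <;> tauto
      · rintro (rfl | rfl | rfl)
        · exact Or.inl ⟨rfl, by omega⟩
        · exact Or.inr ⟨m - 2, by omega, rfl, by omega⟩
        · exact Or.inr ⟨m - 1, by omega, rfl, by omega⟩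
  obtain ⟨hp2, hp1, hpn, hpl⟩ := hp
  constructor
  · rw [rho_eq hT, Set.ncard_eq_two]
    refine ⟨(t, G 0), (G (m - 3), p), ?_, ?_⟩
    · intro hh
      rw [Prod.mk.injEq] at hh
      exact h.gt (m - 3) (by omega) hh.1.symm
    ext ⟨v, w⟩
    simp only [Set.mem_ofPred_eq, Set.mem_insert_iff, Set.mem_singleton_iff, Prod.mk.injEq]
    constructor
    · rintro ⟨a, b, hab, hwa, hwb, hv, ha, hb⟩
      have hva : T.Adj v a := (hv _).2 (by tauto)
      have hvb : T.Adj v b := (hv _).2 (by tauto)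
      have hvw : T.Adj v w := (hv _).2 (by tauto)
      rcases h.cov v with rfl | rfl | rfl | ⟨i, hi, rfl⟩
      · refine Or.inl ⟨rfl, ?_⟩
        have e1 : a ≠ G 0 := by
          rintro rfl
          exact inner 0 (by omega) _ ha
        have e2 : b ≠ G 0 := by
          rintro rfl
          exact inner 0 (by omega) _ hb
        have := hv (G 0)
        tauto
      · exact (two_nbr hab hva hvb h.n1).elim
      · exact (two_nbr hab hva hvb h.n2).elim
      · right
        rcases Nat.lt_or_ge (i + 2) m with h2 | h2
        · by_cases h3 : i = m - 3
          · refine ⟨by rw [h3], ?_⟩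
            subst h3
            have e1 : a ≠ p := by
              rintro rfl
              exact hpl _ ha
            have e2 : b ≠ p := by
              rintro rfl
              exact hpl _ hb
            have := hv p
            have := hpn p
            tauto
          · exfalso
            rw [h.nbr i hi] at hva hvb hvw
            grind
        · exact (two_nbr hab hva hvb (hl i h2 hi)).elim
    · rintro (⟨rfl, rfl⟩ | ⟨rfl, rfl⟩)
      · refine ⟨u₁, u₂, h.h12, h.g1 0 (by omega), h.g2 0 (by omega), ?_, h.n1, h.n2⟩
        intro y
        rw [h.nt]
        tauto
      · exact ⟨G (m - 2), G (m - 1), hne, hp2, hp1, hpn, hl _ (by omega) (by omega),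
          hl _ (by omega) (by omega)⟩
  · classical
    have hset : {v : V | ∃ w, ∀ y, T.Adj v y ↔ y = w} =
        (({u₁, u₂, G (m - 2), G (m - 1)} : Finset V) : Set V) := by
      ext v
      simp only [Set.mem_ofPred_eq, Finset.coe_insert, Finset.coe_singleton, Set.mem_insert_iff,
        Set.mem_singleton_iff]
      constructor
      · rintro ⟨w, hw⟩
        rcases h.cov v with rfl | rfl | rfl | ⟨i, hi, rfl⟩
        · exact (two_nbr h.h12 nt1 nt2 hw).elim
        · tauto
        · tauto
        · by_cases hi' : i + 2 < m
          · exact (inner i hi' w hw).elim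
          · have : i = m - 2 ∨ i = m - 1 := by omega
            rcases this with rfl | rfl <;> tauto
      · rintro (rfl | rfl | rfl | rfl)
        · exact ⟨t, h.n1⟩
        · exact ⟨t, h.n2⟩
        · exact ⟨_, hl _ (by omega) (by omega)⟩
        · exact ⟨_, hl _ (by omega) (by omega)⟩
    rw [leafCount_eq, hset, Set.ncard_coe_finset]
    have a1 := h.g1 (m - 2) (by omega)
    have a2 := h.g2 (m - 2) (by omega)
    have a3 := h.g1 (m - 1) (by omega)
    have a4 := h.g2 (m - 1) (by omega)
    have a5 := h.h12
    rw [Finset.card_insert_of_notMem, Finset.card_insert_of_notMem, Finset.card_pair hne] <;>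
      simp <;> grind

theorem not_two_of_order_one {V : Type} {T : SimpleGraph V} (hT : T.IsAcyclic) {t u : V}
    (h : legOrder T t u = 1) : ¬ IsTwoLegAt T t u := by
  rintro ⟨n, hn, h2⟩
  obtain ⟨-, g, hg, hs⟩ := lab_of hT h2
  unfold legOrder at h
  rw [hs, ← Set.image_univ, Set.ncard_image_of_injective _ hg.inj, Set.ncard_univ,
    Nat.card_eq_fintype_card, Fintype.card_fin] at h
  omega

/-- If `T` is a 2-spider of order `d ≥ 6` with exactly three legs, two of them of order one,
then either `ρ_{3,2}(T) = 1` and `T` has 3 leaves, or `ρ_{3,2}(T) = 2` and `T` has 4 leaves;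
moreover the number of 2-legs of `T` equals `ρ_{3,2}(T) - 1`. -/
theorem twoSpider_caseI {V : Type} [Fintype V] (T : SimpleGraph V) (t : V)
    (d : ℕ) (hd : Fintype.card V = d) (hd6 : 6 ≤ d)
    (hsp : IsTwoSpiderWithTorso T t) (hcase : ThreeLegsTwoSingletons T t) :
    ((rho T (Rtwo 3) 0 = 1 ∧ leafCount T = 3) ∨
     (rho T (Rtwo 3) 0 = 2 ∧ leafCount T = 4)) ∧
    Set.ncard {u : V | T.Adj t u ∧ IsTwoLegAt T t u} = rho T (Rtwo 3) 0 - 1 := by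
  obtain ⟨hT, -, hlegs⟩ := hsp
  obtain ⟨h3, u₁, u₂, h12, hu1, hu2, ho1, ho2⟩ := hcase
  have hl1 := leaf_of_order_one hu1 ho1
  have hl2 := leaf_of_order_one hu2 ho2
  obtain ⟨u₃, h13, h23, hN⟩ : ∃ u₃, u₁ ≠ u₃ ∧ u₂ ≠ u₃ ∧
      ∀ y, T.Adj t y ↔ y = u₁ ∨ y = u₂ ∨ y = u₃ := by
    obtain ⟨x, y, z, hxy, hxz, hyz, hs⟩ := Set.ncard_eq_three.1 h3
    have hs' : ∀ w, T.Adj t w ↔ w = x ∨ w = y ∨ w = z := by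
      intro w
      rw [← mem_neighborSet, hs]
      simp
    have b1 := (hs' u₁).1 hu1
    have b2 := (hs' u₂).1 hu2
    rcases b1 with rfl | rfl | rfl <;> rcases b2 with rfl | rfl | rfl
    · exact absurd rfl h12
    · exact ⟨z, hxz, hyz, by intro w; rw [hs']⟩
    · exact ⟨y, hxy, hyz.symm, by intro w; rw [hs']; tauto⟩
    · exact ⟨z, hyz, hxz, by intro w; rw [hs']; tauto⟩
    · exact absurd rfl h12
    · exact ⟨x, hxy.symm, hxz.symm, by intro w; rw [hs']; tauto⟩
    · exact ⟨y, hyz.symm, hxy, by intro w; rw [hs']; tauto⟩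
    · exact ⟨x, hxz.symm, hxy.symm, by intro w; rw [hs']; tauto⟩
    · exact absurd rfl h12
  have hu3 : T.Adj t u₃ := (hN u₃).2 (by tauto)
  have hd6' : 6 ≤ Fintype.card V := by omega
  have hP : IsOneLegAt T t u₃ → rho T (Rtwo 3) 0 = 1 ∧ leafCount T = 3 := by
    rintro ⟨n, hn, h⟩
    obtain ⟨G, hG⟩ := full_of hd6' hT h12 h13 h23 hN hl1 hl2 hn _
      (fun i j => i + 1 = j ∨ j + 1 = i) (fun i j => pathGraph_adj) h
    exact path_case hT.isAcyclic hG
  have hQ : IsTwoLegAt T t u₃ → rho T (Rtwo 3) 0 = 2 ∧ leafCount T = 4 := by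
    rintro ⟨n, hn, h⟩
    obtain ⟨G, hG⟩ := full_of hd6' hT h12 h13 h23 hN hl1 hl2 (by omega) _
      (fun i j => (j = i + 1 ∧ j + 2 ≤ n) ∨
        (i + 3 = n ∧ j + 1 = n) ∨ (i = j + 1 ∧ i + 2 ≤ n) ∨ (j + 3 = n ∧ i + 1 = n))
      (fun i j => rtwo_adj hn i j) h
    exact two_case hT.isAcyclic hG
  have hset : ∀ u, (T.Adj t u ∧ IsTwoLegAt T t u) ↔ u = u₃ ∧ IsTwoLegAt T t u₃ := by
    intro u
    constructor
    · rintro ⟨ha, h2⟩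
      rcases (hN u).1 ha with rfl | rfl | rfl
      · exact absurd h2 (not_two_of_order_one hT.isAcyclic ho1)
      · exact absurd h2 (not_two_of_order_one hT.isAcyclic ho2)
      · exact ⟨rfl, h2⟩
    · rintro ⟨rfl, h2⟩
      exact ⟨hu3, h2⟩
  simp only [hset]
  by_cases h2 : IsTwoLegAt T t u₃
  · obtain ⟨q1, q2⟩ := hQ h2
    refine ⟨Or.inr ⟨q1, q2⟩, ?_⟩
    rw [q1]
    have : {u : V | u = u₃ ∧ IsTwoLegAt T t u₃} = {u₃} := by
      ext u; simp [h2]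
    rw [this, Set.ncard_singleton]
  · have h1 : IsOneLegAt T t u₃ := (hlegs u₃ hu3).resolve_right h2
    obtain ⟨q1, q2⟩ := hP h1
    refine ⟨Or.inl ⟨q1, q2⟩, ?_⟩
    rw [q1]
    have : {u : V | u = u₃ ∧ IsTwoLegAt T t u₃} = ∅ := by
      ext u; simp [h2]
    rw [this, Set.ncard_empty]
end
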